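/- Let F : ℙ²(ℂ) ⇢ ℙ¹(ℂ) be a primitive pencil, defined on the complement U of finitely many points, and let B = {P₀, …, P_r} ⊂ ℙ¹(ℂ) be r+1 distinct points (r ≥ 0) containing the set B_F of atypical values of F, so that F restricts to a locally trivial fibration ℙ²(ℂ) ∖ closure(F⁻¹(B)) → ℙ¹(ℂ) ∖ B. Let P be a base point in ℙ¹ ∖ B with meridians γ₁, …, γ_r around P₁, …, P_r generating π₁(ℙ¹ ∖ B, P) freely, let the fiber F⁻¹(P) be a smooth genus-g curve with s points removed, deformation retracting onto a wedge A_P of 2g+s−1 circles with π₁ generated by loops x₁, …, x_{2g+s−1}, and for each k let g_k : A_P → A_P be a cellular map homotopic to the composition of the inclusion A_P → F⁻¹(P), a geometric monodromy homeomorphism M_k of F⁻¹(P) along γ_k, and the retraction F⁻¹(P) → A_P. Then ℙ²(ℂ) ∖ closure(F⁻¹(B)) is homotopy equivalent to the 2-dimensional CW complex with one 0-cell associated to the group presentation ⟨ γ_k, x_i | γ_k⁻¹ x_i γ_k = (g_k)_*(x_i), for k = 1,…,r and i = 1,…,2g+s−1 ⟩, and this CW complex is aspherical. -/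

import Mathlib

/-! The pencil restricts to a locally trivial map `p` from the complement `X` of the curve to
`ℙ¹ ∖ B`. At a base point the value of the pencil is the junk value `[1 : 0]`; this causes no harm,
since zeros of the second of two coprime polynomials at which the first one does not vanish
accumulate at every base point, so that all base points lie on the curve as soon as `[1 : 0] ∈ B`
(`pencilRes_notMem`).

The base `Y = ℙ¹ ∖ B` is a plane without `r` points, and is dominated by a graph (`Slit.dominated`).
As loops `γ k` freely generate its fundamental group, they form a homotopy equivalence from a wedge
of `r` circles to `Y` (`WedgeGraph.exists_homotopyEquiv`). A locally trivial map over a metrizable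
base with a countable topology has a connection (`LocTriv.nonempty_connection`), that is, transport
along paths which is continuous in all of its arguments. With it one shows that `X` is homotopy
equivalent to the pullback of `p` to the wedge of circles (`Connection.pullback`). The pullback is
the union of the mapping tori of the monodromies `M k` along a common fibre `F`
(`LocTriv.mappingTorus`), in other words the homotopy coequalizer `HoEq` of the two maps
`(x, k) ↦ x` and `(x, k) ↦ M k x` from `F × Fin r` to `F`. Homotopy coequalizers are homotopy
invariant (`HoEq.nonempty_homotopyEquiv`): the homotopy classes of maps out of a homotopy
coequalizer are described by fundamental groupoids of mapping spaces, and a Yoneda argument applies.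
Hence the fibre may be replaced by a wedge of circles, and the monodromies by the maps which take
the `i`-th circle to a loop spelling the word of `(g_k)_*(x_i)` (`WedgeGraph.homotopic_desc`).

The resulting space has one vertex, 1-cells `γ_k` and `x_i`, and one square for each `k`, `i`, with
boundary `x γ w⁻¹ γ⁻¹` (`nonempty_torus_homeomorph`). This boundary is conjugate to the relator
`γ⁻¹ x γ w⁻¹` (`torusLoop_conj`), and freely homotopic attaching maps give homotopy equivalent
complexes (`Att.nonempty_homotopyEquiv`), again by the invariance of homotopy coequalizers. Finally,
a cone on a circle is a disc, so this is the presentation complex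
(`PresentationComplex.nonempty_homeomorph`).

For asphericity, a wedge of circles is covered by the Cayley tree of a free group, which is
contractible, so that every map from a sphere of dimension at least `2` to it is null-homotopic
(`WedgeGraph.sphNull`). The same is then true of the base and the fibres of `p`, hence of `X` by means
of the connection (`SphNull.of_connection`), and of the complex equivalent to it
(`SphNull.of_homotopyEquiv`). Free null-homotopies of spheres give the vanishing of the homotopy
groups (`SphNull.aspherical`). -/

open unitInterval

noncomputable section

/-- The relation generating the wedge of circles indexed by `α`, with an extra point serving
as the wedge point: both endpoints of each interval are glued to the wedge point. -/
inductive WedgeGraphRel (α : Type) : (Σ _ : α, I) ⊕ Unit → (Σ _ : α, I) ⊕ Unit → Prop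
  | zero (a : α) : WedgeGraphRel α (Sum.inl ⟨a, 0⟩) (Sum.inr ())
  | one (a : α) : WedgeGraphRel α (Sum.inl ⟨a, 1⟩) (Sum.inr ())

/-- The wedge of circles indexed by `α` (a point if `α` is empty). -/
def WedgeGraph (α : Type) : Type := Quot (WedgeGraphRel α)

instance (α : Type) : TopologicalSpace (WedgeGraph α) :=
  inferInstanceAs (TopologicalSpace (Quot _))

/-- The wedge point. -/
def WedgeGraph.pt (α : Type) : WedgeGraph α := Quot.mk _ (Sum.inr ())

/-- The loop traversing the circle indexed by `a`. -/
def WedgeGraph.loop {α : Type} (a : α) : Path (WedgeGraph.pt α) (WedgeGraph.pt α) where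
  toFun t := Quot.mk _ (Sum.inl ⟨a, t⟩)
  continuous_toFun := continuous_quot_mk.comp (continuous_inl.comp continuous_sigmaMk)
  source' := Quot.sound (WedgeGraphRel.zero a)
  target' := Quot.sound (WedgeGraphRel.one a)

/-- The loop in the wedge of circles spelling a word `u` of the free group on `α`:  the
concatenation of the letters of (the reduced word of) `u`, each letter being the loop of the
corresponding generator or its reverse. -/
def wordPath {α : Type} [DecidableEq α] (u : FreeGroup α) :
    Path (WedgeGraph.pt α) (WedgeGraph.pt α) :=
  (FreeGroup.toWord u).foldl
    (fun p x => p.trans (if x.2 then WedgeGraph.loop x.1 else (WedgeGraph.loop x.1).symm))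
    (Path.refl (WedgeGraph.pt α))

/-- The normalized angle of a point of the unit circle in `ℂ`, as a point of `[0,1]`. -/
def discAngle (z : ℂ) : I :=
  ⟨Int.fract (Complex.arg z / (2 * Real.pi)), Int.fract_nonneg _, (Int.fract_lt_one _).le⟩

/-- The relation generating the 2-dimensional CW complex of the presentation with
generators `α` and relators `rel j`, `j : ρ`: for each `j`, the boundary of the disk `D²_j`
is glued to the wedge of circles along the loop spelling the word `rel j`. -/
def PresentationRel {α ρ : Type} [DecidableEq α] (rel : ρ → FreeGroup α) :
    WedgeGraph α ⊕ ((Σ _ : ρ, Metric.closedBall (0 : ℂ) 1)) →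
      WedgeGraph α ⊕ ((Σ _ : ρ, Metric.closedBall (0 : ℂ) 1)) → Prop := fun a b =>
  ∃ (j : ρ) (z : Metric.closedBall (0 : ℂ) 1), ‖(z : ℂ)‖ = 1 ∧
    a = Sum.inr ⟨j, z⟩ ∧ b = Sum.inl (wordPath (rel j) (discAngle z))

/-- The 2-dimensional CW complex with one 0-cell associated to the presentation with
generators `α` and relators `rel j`, `j : ρ`: one 1-cell for each generator and one 2-cell
for each relator, attached along the loop spelling the relator. -/
def PresentationComplex {α ρ : Type} [DecidableEq α] (rel : ρ → FreeGroup α) : Type :=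
  Quot (PresentationRel rel)

instance {α ρ : Type} [DecidableEq α] (rel : ρ → FreeGroup α) :
    TopologicalSpace (PresentationComplex rel) :=
  inferInstanceAs (TopologicalSpace (Quot _))


/-- The complex projective plane `ℙ²(ℂ)`. -/
abbrev ProjPlane : Type := Projectivization ℂ (Fin 3 → ℂ)

instance : TopologicalSpace ProjPlane :=
  inferInstanceAs (TopologicalSpace (Quotient _))

/-- The complex projective line `ℙ¹(ℂ)`. -/
abbrev ProjLine : Type := Projectivization ℂ (Fin 2 → ℂ)

instance : TopologicalSpace ProjLine :=
  inferInstanceAs (TopologicalSpace (Quotient _))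

/-- The pair of values of the two polynomials defining the pencil at (a representative of)
a point of `ℙ²(ℂ)`. -/
def evalVec (f₀ f₁ : MvPolynomial (Fin 3) ℂ) (x : ProjPlane) : Fin 2 → ℂ :=
  ![MvPolynomial.eval x.rep f₀, MvPolynomial.eval x.rep f₁]

/-- The maximal domain of definition `U` of the pencil `[f₀ : f₁]`: the complement of the
(finitely many, by coprimality) base points. -/
def pencilDomain (f₀ f₁ : MvPolynomial (Fin 3) ℂ) : Set ProjPlane :=
  {x | evalVec f₀ f₁ x ≠ 0}

/-- The pencil map `F = [f₀ : f₁] : ℙ²(ℂ) ⇢ ℙ¹(ℂ)` (defined by a junk value outside of its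
maximal domain of definition).  For `f₀, f₁` homogeneous of the same degree this is
well defined on `pencilDomain f₀ f₁`. -/
def pencilMap (f₀ f₁ : MvPolynomial (Fin 3) ℂ) (x : ProjPlane) : ProjLine :=
  if h : evalVec f₀ f₁ x ≠ 0 then Projectivization.mk ℂ _ h
  else Projectivization.mk ℂ ![1, 0] (fun hc => by simpa using congrFun hc 0)

/-- The fiber-type curve `closure(F⁻¹(B))`: the closure in `ℙ²(ℂ)` of the union of the
fibers of the pencil over the finite set `B`. -/
def pencilCurve (f₀ f₁ : MvPolynomial (Fin 3) ℂ) (B : Finset ProjLine) : Set ProjPlane :=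
  closure (pencilDomain f₀ f₁ ∩ pencilMap f₀ f₁ ⁻¹' ↑B)

/-- The restriction of the pencil map to the complement `ℙ²(ℂ) ∖ closure(F⁻¹(B))`. -/
def pencilRes (f₀ f₁ : MvPolynomial (Fin 3) ℂ) (B : Finset ProjLine) :
    ↥(pencilCurve f₀ f₁ B)ᶜ → ProjLine := fun x => pencilMap f₀ f₁ ↑x

/-- The fiber over `P` of the restriction of the pencil map to the complement of
`closure(F⁻¹(B))`. -/
abbrev pencilFiber (f₀ f₁ : MvPolynomial (Fin 3) ℂ) (B : Finset ProjLine) (P : ProjLine) :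
    Type := ↥(pencilRes f₀ f₁ B ⁻¹' {P})

/-- The relators `R_{k,i} = γ_k⁻¹ x_i γ_k ((g_k)_*(x_i))⁻¹` of the presentation of the
fundamental group of the complement of a fiber-type curve, where `(g_k)_*(x_i) = w k i` is
the word in the `x`-generators given by the action of the `k`-th monodromy. -/
def pencilRelator {r m : ℕ} (w : Fin r → Fin m → FreeGroup (Fin m)) :
    Fin r × Fin m → FreeGroup (Fin r ⊕ Fin m) := fun p =>
  (FreeGroup.of (Sum.inl p.1))⁻¹ * FreeGroup.of (Sum.inr p.2) * FreeGroup.of (Sum.inl p.1) *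
    (FreeGroup.map Sum.inr (w p.1 p.2))⁻¹

/-- A space `Z` is aspherical if all its homotopy groups `π_i(Z, z)` for `i ≥ 2` are
trivial (for every basepoint `z`). -/
def Aspherical (Z : Type*) [TopologicalSpace Z] : Prop :=
  ∀ (z : Z) (i : ℕ), 2 ≤ i → Subsingleton (HomotopyGroup (Fin i) Z z)

/-! ### Homotopy coequalizers -/

section

/-- The relation gluing the two ends of the cylinder `C × I` to `A` along `f` and `g`. -/
inductive HoEqRel {A C : Type} (f g : C → A) : A ⊕ C × I → A ⊕ C × I → Prop
  | zero (c : C) : HoEqRel f g (Sum.inr (c, 0)) (Sum.inl (f c))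
  | one (c : C) : HoEqRel f g (Sum.inr (c, 1)) (Sum.inl (g c))

/-- The homotopy coequalizer of `f, g : C → A`: the cylinder `C × I` with its two ends glued
to `A` along `f` and `g`. -/
def HoEq {A C : Type} (f g : C → A) : Type := Quot (HoEqRel f g)

variable {A C Z : Type} [TopologicalSpace A] [TopologicalSpace C] [TopologicalSpace Z]

instance (f g : C → A) : TopologicalSpace (HoEq f g) :=
  inferInstanceAs (TopologicalSpace (Quot _))

namespace HoEq

/-- The inclusion of `A` into the homotopy coequalizer. -/
def mkA (f g : C → A) : C(A, HoEq f g) := ⟨fun a => Quot.mk _ (Sum.inl a), by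
  exact continuous_quot_mk.comp continuous_inl⟩

/-- The cylinder `C × I` mapped into the homotopy coequalizer; it is injective away from its ends. -/
def mkC (f g : C → A) : C(C × I, HoEq f g) := ⟨fun a => Quot.mk _ (Sum.inr a), by
  exact continuous_quot_mk.comp continuous_inr⟩

lemma mkC_zero (f g : C → A) (c : C) : mkC f g (c, 0) = mkA f g (f c) :=
  Quot.sound (HoEqRel.zero c)

lemma mkC_one (f g : C → A) (c : C) : mkC f g (c, 1) = mkA f g (g c) :=
  Quot.sound (HoEqRel.one c)

lemma ind {f g : C → A} {p : HoEq f g → Prop} (hA : ∀ a, p (mkA f g a))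
    (hC : ∀ c, p (mkC f g c)) (x : HoEq f g) : p x := by
  rcases x with ⟨a | c⟩
  · exact hA a
  · exact hC c

/-- The map out of the homotopy coequalizer given by a map on `A` and a homotopy on `C` between
its restrictions along `f` and `g`. -/
def desc {f g : C → A} (u : A → Z) (v : C × I → Z) (hu : Continuous u) (hv : Continuous v)
    (h0 : ∀ c, v (c, 0) = u (f c)) (h1 : ∀ c, v (c, 1) = u (g c)) : C(HoEq f g, Z) :=
  ⟨Quot.lift (Sum.elim u v) (by
    rintro _ _ (c | c)
    · exact h0 c
    · exact h1 c), continuous_quot_lift _ (continuous_sum_dom.2 ⟨hu, hv⟩)⟩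

@[simp] lemma desc_mkA {f g : C → A} (u : A → Z) (v : C × I → Z) (hu hv h0 h1) (a : A) :
    desc (f := f) (g := g) u v hu hv h0 h1 (mkA f g a) = u a := rfl

@[simp] lemma desc_mkC {f g : C → A} (u : A → Z) (v : C × I → Z) (hu hv h0 h1) (c : C × I) :
    desc (f := f) (g := g) u v hu hv h0 h1 (mkC f g c) = v c := rfl

lemma hom_ext {f g : C → A} {F F' : C(HoEq f g, Z)} (hA : ∀ a, F (mkA f g a) = F' (mkA f g a))
    (hC : ∀ c, F (mkC f g c) = F' (mkC f g c)) : F = F' := by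
  ext x; exact ind (p := fun x => F x = F' x) hA hC x

end HoEq

/-- Precomposition of a path of maps with a map. -/
abbrev Path.pre {X Y Z : Type} [TopologicalSpace X] [TopologicalSpace Y] [TopologicalSpace Z]
    {u v : C(Y, Z)} (τ : Path u v) (f : C(X, Y)) : Path (u.comp f) (v.comp f) :=
  τ.map (f := fun w : C(Y, Z) => w.comp f) (ContinuousMap.continuous_precomp f)

/-- Postcomposition of a path of maps with a map. -/
abbrev Path.post {X Y Z : Type} [TopologicalSpace X] [TopologicalSpace Y] [TopologicalSpace Z]
    {u v : C(X, Y)} (τ : Path u v) (f : C(Y, Z)) : Path (f.comp u) (f.comp v) :=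
  τ.map (f := fun w : C(X, Y) => f.comp w) (ContinuousMap.continuous_postcomp f)

namespace HoEq

/-- The tautological path of maps `C → HoEq f g`, from `f` to `g`. -/
def taut (f g : C(C, A)) : Path ((mkA f g).comp f) ((mkA f g).comp g) where
  toFun t := ⟨fun c => mkC f g (c, t), by fun_prop⟩
  continuous_toFun := ContinuousMap.continuous_of_continuous_uncurry _ (by
    simp only [Function.uncurry_def, ContinuousMap.coe_mk]; fun_prop)
  source' := by ext c; exact mkC_zero _ _ c
  target' := by ext c; exact mkC_one _ _ c

variable [LocallyCompactSpace C]

/-- The map out of a homotopy coequalizer given by a map `u` out of `A` and a path of maps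
from `u ∘ f` to `u ∘ g`. -/
def ofData {f g : C(C, A)} (u : C(A, Z)) (p : Path (u.comp f) (u.comp g)) : C(HoEq f g, Z) :=
  desc u (fun q => p q.2 q.1) u.continuous (by fun_prop) (fun c => by simp) (fun c => by simp)

lemma ofData_comp_mkA {f g : C(C, A)} (u : C(A, Z)) (p : Path (u.comp f) (u.comp g)) :
    (ofData u p).comp (mkA f g) = u := by ext; rfl

lemma taut_post_ofData {f g : C(C, A)} (u : C(A, Z)) (p : Path (u.comp f) (u.comp g)) (t : I) :
    (taut f g).post (ofData u p) t = p t := by ext; rfl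

lemma ofData_self {f g : C(C, A)} (F : C(HoEq f g, Z)) :
    ofData (F.comp (mkA f g)) ((taut f g).post F) = F :=
  hom_ext (fun _ => rfl) (fun _ => rfl)

/-- The universal property of the homotopy coequalizer for homotopies: a homotopy `τ` on `A`, and a
square of maps `C → Z` with sides `p`, `p'` and the restrictions of `τ` along `f` and `g`, give a
homotopy between the two maps. Local compactness of `A` turns the path `τ` in `C(A, Z)` into a
map on `I × A`. -/
lemma homotopic_of_square [LocallyCompactSpace A] {f g : C(C, A)} {u u' : C(A, Z)}
    {p : Path (u.comp f) (u.comp g)} {p' : Path (u'.comp f) (u'.comp g)}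
    (τ : Path u u') (S : I × I → C(C, Z)) (hS : Continuous S)
    (h0 : ∀ t, S (0, t) = p t) (h1 : ∀ t, S (1, t) = p' t)
    (hf : ∀ s, S (s, 0) = (τ s).comp f) (hg : ∀ s, S (s, 1) = (τ s).comp g) :
    (ofData u p).Homotopic (ofData u' p') := by
  let K : C(HoEq f g, C(I, Z)) := desc
    (fun a => ⟨fun s => τ s a, by fun_prop⟩) (fun q => ⟨fun s => S (s, q.2) q.1, by fun_prop⟩)
    (ContinuousMap.continuous_of_continuous_uncurry _ (by
      simp only [Function.uncurry_def, ContinuousMap.coe_mk]; fun_prop))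
    (ContinuousMap.continuous_of_continuous_uncurry _ (by
      simp only [Function.uncurry_def, ContinuousMap.coe_mk]; fun_prop))
    (fun c => by ext s; simp [hf]) (fun c => by ext s; simp [hg])
  refine ⟨⟨⟨fun q => K q.2 q.1, by fun_prop⟩, fun x => ?_, fun x => ?_⟩⟩
  · induction x using ind with
    | hA a => simp [K, ofData]
    | hC c => simp [K, ofData, h0]
  · induction x using ind with
    | hA a => simp [K, ofData]
    | hC c => simp [K, ofData, h1]

/-- A square with prescribed left, right and bottom sides, whose top side is the
concatenation of the other three. -/
lemma exists_square {M : Type} [TopologicalSpace M] {x y x' y' : M} (l : Path x x')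
    (r : Path y y') (p : Path x y) : ∃ S : I × I → M, Continuous S ∧
      (∀ t, S (0, t) = ((Path.refl x).symm.trans (p.trans (Path.refl y))) t) ∧
      (∀ t, S (1, t) = (l.symm.trans (p.trans r)) t) ∧
      (∀ s, S (s, 0) = l s) ∧ (∀ s, S (s, 1) = r s) := by
  let sub : ∀ {a b : M} (q : Path a b) (s : I), Path a (q s) := fun {a b} q s =>
    ⟨⟨fun t => q (s * t), by fun_prop⟩, by simp, by simp⟩
  have hsub : ∀ {a b : M} (q : Path a b), Continuous (fun x : I × I => sub q x.1 x.2) := by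
    intro a b q
    change Continuous fun x : I × I => q (x.1 * x.2)
    fun_prop
  refine ⟨fun z : I × I => ((sub l z.1).symm.trans (p.trans (sub r z.1))) z.2, ?_, ?_, ?_, ?_, ?_⟩
  · have hp : Continuous fun x : I × I => p x.2 := by fun_prop
    exact Path.trans_continuous_family (fun s => (sub l s).symm)
      (Path.symm_continuous_family (fun s => sub l s) (hsub l)) (fun s => p.trans (sub r s))
      (Path.trans_continuous_family (fun _ : I => p) hp (fun s => sub r s) (hsub r))
  · intro t
    simp [Path.trans_apply, Path.symm_apply, sub]
  · intro t
    simp [Path.trans_apply, Path.symm_apply, sub]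
  · intro s; simp
  · intro s; simp

open Path.Homotopic in
/-- `homotopic_of_square` for a square of paths in `C(C, Z)` which commutes up to homotopy. -/
lemma homotopic_of_path [LocallyCompactSpace A] {f g : C(C, A)} {u u' : C(A, Z)}
    {p : Path (u.comp f) (u.comp g)} {p' : Path (u'.comp f) (u'.comp g)}
    (τ : Path u u') (h : Quotient.trans (.mk (τ.pre f)) (.mk p') =
      Quotient.trans (.mk p) (.mk (τ.pre g))) :
    (ofData u p).Homotopic (ofData u' p') := by
  have one : ∀ {v : C(A, Z)} {q q' : Path (v.comp f) (v.comp g)},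
      Path.Homotopic.Quotient.mk q = .mk q' → (ofData v q).Homotopic (ofData v q') := by
    intro v q q' hq
    obtain ⟨H⟩ := Path.Homotopic.Quotient.exact hq
    exact homotopic_of_square (Path.refl v) (fun x => H x) (by fun_prop) (by simp) (by simp)
      (by simp) (by simp)
  obtain ⟨S, hS, h0, h1, hl, hr⟩ := exists_square (τ.pre f) (τ.pre g) p
  refine (one ?_).trans ((homotopic_of_square τ S hS h0 h1 hl hr).trans (one ?_))
  · simp
  · simp only [Quotient.mk_trans, Quotient.mk_symm, ← h]
    rw [← Quotient.trans_assoc]; simp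

open Path.Homotopic in
/-- Homotopy classes of maps out of a homotopy coequalizer, in terms of path classes in
function spaces. -/
lemma homotopic_iff [LocallyCompactSpace A] {f g : C(C, A)} {F F' : C(HoEq f g, Z)} :
    F.Homotopic F' ↔ ∃ τ : Path (F.comp (mkA f g)) (F'.comp (mkA f g)),
      Quotient.trans (.mk (τ.pre f)) (.mk ((taut f g).post F')) =
      Quotient.trans (.mk ((taut f g).post F)) (.mk (τ.pre g)) := by
  constructor
  · rintro ⟨H⟩
    let τ : Path (F.comp (mkA f g)) (F'.comp (mkA f g)) :=
      ⟨⟨fun t => ⟨fun a => H (t, mkA f g a), by fun_prop⟩,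
        ContinuousMap.continuous_of_continuous_uncurry _ (by
          simp only [Function.uncurry_def, ContinuousMap.coe_mk]; fun_prop)⟩,
        by ext; simp, by ext; simp⟩
    refine ⟨τ, ?_⟩
    let P : ContinuousMap.Homotopy (⟨fun φ => F.comp φ, ContinuousMap.continuous_postcomp F⟩ :
        C(C(C, HoEq f g), C(C, Z))) ⟨fun φ => F'.comp φ, ContinuousMap.continuous_postcomp F'⟩ :=
      ⟨⟨fun q => ⟨fun c => H (q.1, q.2 c), by fun_prop⟩,
        ContinuousMap.continuous_of_continuous_uncurry _ (by
          simp only [Function.uncurry_def, ContinuousMap.coe_mk]; fun_prop)⟩,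
        fun _ => by ext; simp, fun _ => by ext; simp⟩
    have := Path.Homotopic.map_trans_evalAt P (taut f g)
    exact (Quotient.eq.2 this).symm
  · rintro ⟨τ, h⟩
    rw [← ofData_self F, ← ofData_self F']
    exact homotopic_of_path τ h

end HoEq

end

/-! ### Homotopy invariance of homotopy coequalizers -/

section

section pre
variable {X Y Z W : Type} [TopologicalSpace X] [TopologicalSpace Y] [TopologicalSpace Z]
  [TopologicalSpace W]

/-- Precomposition on path classes in function spaces. -/
def preQ (f : C(X, Y)) {u v : C(Y, Z)} (p : Path.Homotopic.Quotient u v) :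
    Path.Homotopic.Quotient (u.comp f) (v.comp f) :=
  p.map (ContinuousMap.compRightContinuousMap Z f)

/-- Postcomposition on path classes in function spaces. -/
def postQ (f : C(Y, Z)) {u v : C(X, Y)} (p : Path.Homotopic.Quotient u v) :
    Path.Homotopic.Quotient (f.comp u) (f.comp v) :=
  p.map ⟨fun w => f.comp w, ContinuousMap.continuous_postcomp f⟩

lemma preQ_mk (f : C(X, Y)) {u v : C(Y, Z)} (p : Path u v) :
    preQ f (.mk p) = .mk (p.pre f) := rfl

lemma postQ_mk (f : C(Y, Z)) {u v : C(X, Y)} (p : Path u v) :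
    postQ f (.mk p) = .mk (p.post f) := rfl

lemma preQ_trans (f : C(X, Y)) {u v w : C(Y, Z)} (p : Path.Homotopic.Quotient u v)
    (q : Path.Homotopic.Quotient v w) : preQ f (p.trans q) = (preQ f p).trans (preQ f q) :=
  (FundamentalGroupoid.map (ContinuousMap.compRightContinuousMap Z f)).map_comp
    (X := ⟨u⟩) (Y := ⟨v⟩) (Z := ⟨w⟩) p q

lemma postQ_trans (f : C(Y, Z)) {u v w : C(X, Y)} (p : Path.Homotopic.Quotient u v)
    (q : Path.Homotopic.Quotient v w) : postQ f (p.trans q) = (postQ f p).trans (postQ f q) :=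
  (FundamentalGroupoid.map (X := C(X, Y)) (Y := C(X, Z))
    ⟨fun w => f.comp w, ContinuousMap.continuous_postcomp f⟩).map_comp
    (X := ⟨u⟩) (Y := ⟨v⟩) (Z := ⟨w⟩) p q

lemma postQ_symm (f : C(Y, Z)) {u v : C(X, Y)} (p : Path.Homotopic.Quotient u v) :
    postQ f p.symm = (postQ f p).symm := by
  induction p using Path.Homotopic.Quotient.ind with
  | mk p => rw [← Path.Homotopic.Quotient.mk_symm, postQ_mk, postQ_mk, ← Path.Homotopic.Quotient.mk_symm]; rfl

/-- The interchange law between homotopies of maps `Y → Z` and homotopies of maps `X → Y`. -/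
lemma interchange [LocallyCompactSpace X] [LocallyCompactSpace Y] {u v : C(Y, Z)}
    {a b : C(X, Y)} (p : Path.Homotopic.Quotient u v) (q : Path.Homotopic.Quotient a b) :
    (postQ u q).trans (preQ b p) = (preQ a p).trans (postQ v q) := by
  induction p using Path.Homotopic.Quotient.ind with
  | mk p =>
  induction q using Path.Homotopic.Quotient.ind with
  | mk q =>
  let P : ContinuousMap.Homotopy (⟨fun φ => u.comp φ, ContinuousMap.continuous_postcomp u⟩ :
      C(C(X, Y), C(X, Z))) ⟨fun φ => v.comp φ, ContinuousMap.continuous_postcomp v⟩ :=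
    ⟨⟨fun q => ⟨fun c => p q.1 (q.2 c), by fun_prop⟩,
      ContinuousMap.continuous_of_continuous_uncurry _ (by
        simp only [Function.uncurry_def, ContinuousMap.coe_mk]; fun_prop)⟩,
      fun _ => by ext; simp, fun _ => by ext; simp⟩
  exact Path.Homotopic.Quotient.eq.2 (Path.Homotopic.map_trans_evalAt P q)

/-- Precomposition with a homotopy equivalence is a homotopy equivalence of function spaces. -/
def preEquiv [LocallyCompactSpace X] [LocallyCompactSpace Y]
    (e : ContinuousMap.HomotopyEquiv X Y) :
    ContinuousMap.HomotopyEquiv C(Y, Z) C(X, Z) where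
  toFun := ContinuousMap.compRightContinuousMap Z e.toFun
  invFun := ContinuousMap.compRightContinuousMap Z e.invFun
  left_inv := by
    obtain ⟨H⟩ := e.right_inv
    refine ⟨⟨⟨fun q => q.2.comp (H.curry q.1), ?_⟩, fun u => ?_, fun u => ?_⟩⟩
    · exact continuous_snd.compCM (H.curry.continuous.comp continuous_fst)
    · ext x; simp
    · ext x; simp
  right_inv := by
    obtain ⟨H⟩ := e.left_inv
    refine ⟨⟨⟨fun q => q.2.comp (H.curry q.1), ?_⟩, fun u => ?_, fun u => ?_⟩⟩
    · exact continuous_snd.compCM (H.curry.continuous.comp continuous_fst)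
    · ext x; simp
    · ext x; simp

/-- A homotopy equivalence is fully faithful on fundamental groupoids. -/
lemma HomotopyEquiv.map_bijective (e : ContinuousMap.HomotopyEquiv X Y) (u v : X) :
    Function.Bijective (fun p : Path.Homotopic.Quotient u v => p.map e.toFun) := by
  have h1 := (FundamentalGroupoidFunctor.equivOfHomotopyEquiv e).full_functor
  have h2 := (FundamentalGroupoidFunctor.equivOfHomotopyEquiv e).faithful_functor
  exact ⟨fun p q h => h2.map_injective (X := ⟨u⟩) (Y := ⟨v⟩) h,
    fun q => h1.map_surjective (X := ⟨u⟩) (Y := ⟨v⟩) q⟩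

/-- Precomposition with a homotopy equivalence `X ≃ Y` is bijective on homotopy classes of paths in
`C(Y, Z)`, being a homotopy equivalence from `C(Y, Z)` to `C(X, Z)`. -/
lemma preQ_bijective [LocallyCompactSpace X] [LocallyCompactSpace Y]
    (e : ContinuousMap.HomotopyEquiv X Y) (u v : C(Y, Z)) :
    Function.Bijective (fun p : Path.Homotopic.Quotient u v => preQ e.toFun p) :=
  HomotopyEquiv.map_bijective (preEquiv (Z := Z) e) u v

/-- A map which induces bijections on homotopy classes of maps into all spaces is a homotopy
equivalence. -/
lemma exists_homotopyEquiv_of_yoneda (Φ : C(X, Y))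
    (hi : ∀ F F' : C(Y, Y), (F.comp Φ).Homotopic (F'.comp Φ) → F.Homotopic F')
    (hs : ∀ F : C(X, X), ∃ F' : C(Y, X), F.Homotopic (F'.comp Φ)) :
    ∃ e : ContinuousMap.HomotopyEquiv X Y, e.toFun = Φ := by
  obtain ⟨Ψ, hΨ⟩ := hs (.id X)
  refine ⟨⟨Φ, Ψ, hΨ.symm, hi _ _ ?_⟩, rfl⟩
  rw [ContinuousMap.comp_assoc]
  have := (ContinuousMap.Homotopic.refl Φ).comp hΨ
  simpa using this.symm
end pre

namespace Path.Homotopic.Quotient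
variable {X : Type} [TopologicalSpace X] {x y z : X}

lemma trans_symm_cancel (p : Path.Homotopic.Quotient x y) (q : Path.Homotopic.Quotient y z) :
    p.symm.trans (p.trans q) = q := by rw [← trans_assoc]; simp

lemma symm_trans_cancel (p : Path.Homotopic.Quotient y x) (q : Path.Homotopic.Quotient y z) :
    p.trans (p.symm.trans q) = q := by rw [← trans_assoc]; simp

lemma trans_left_cancel {p : Path.Homotopic.Quotient x y} {q q' : Path.Homotopic.Quotient y z}
    (h : p.trans q = p.trans q') : q = q' := by
  rw [← trans_symm_cancel p q, h, trans_symm_cancel]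

lemma trans_right_cancel {p : Path.Homotopic.Quotient y z} {q q' : Path.Homotopic.Quotient x y}
    (h : q.trans p = q'.trans p) : q = q' := by
  have := congrArg (fun r => r.trans p.symm) h
  simpa [trans_assoc] using this

/-- Two squares of a fundamental groupoid which commute, pasted to the two ends of a third one: the
outer rectangle commutes if and only if the middle square does. -/
lemma conj_iff {x' y' z z' w w' : X} {τf : Path.Homotopic.Quotient x x'}
    {p : Path.Homotopic.Quotient x y} {p' : Path.Homotopic.Quotient x' y'}
    {Tf : Path.Homotopic.Quotient y y'} {t : Path.Homotopic.Quotient y z}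
    {t' : Path.Homotopic.Quotient y' z'} {q : Path.Homotopic.Quotient w z}
    {q' : Path.Homotopic.Quotient w' z'} {Tg : Path.Homotopic.Quotient z z'}
    {τg : Path.Homotopic.Quotient w w'} (h1 : p.trans Tf = τf.trans p')
    (h2 : q.trans Tg = τg.trans q') :
    τf.trans (p'.trans (t'.trans q'.symm)) = (p.trans (t.trans q.symm)).trans τg ↔
      Tf.trans t' = t.trans Tg := by
  have e1 : τf.trans (p'.trans (t'.trans q'.symm)) =
      (p.trans ((Tf.trans t').trans q'.symm)) := by
    rw [← trans_assoc, ← h1]; simp only [trans_assoc]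
  have e2 : q.symm.trans τg = Tg.trans q'.symm := by
    apply trans_right_cancel (p := q')
    rw [trans_assoc, ← h2, trans_symm_cancel, trans_assoc]; simp
  have e3 : (p.trans (t.trans q.symm)).trans τg = (p.trans ((t.trans Tg).trans q'.symm)) := by
    simp only [trans_assoc, e2]
  rw [e1, e3]
  exact ⟨fun h => trans_right_cancel (trans_left_cancel h), fun h => by rw [h]⟩
end Path.Homotopic.Quotient

/-- The homotopy type of a homotopy coequalizer depends only on the homotopy types of the two
spaces and the homotopy classes of the two maps. -/
theorem HoEq.nonempty_homotopyEquiv {A C A' C' : Type} [TopologicalSpace A] [TopologicalSpace C]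
    [TopologicalSpace A'] [TopologicalSpace C'] [LocallyCompactSpace A] [LocallyCompactSpace C]
    [LocallyCompactSpace A'] [LocallyCompactSpace C'] {f g : C(C, A)} {f' g' : C(C', A')}
    (α : ContinuousMap.HomotopyEquiv A A') (β : ContinuousMap.HomotopyEquiv C C')
    (hf : (α.toFun.comp f).Homotopic (f'.comp β.toFun))
    (hg : (α.toFun.comp g).Homotopic (g'.comp β.toFun)) :
    Nonempty (ContinuousMap.HomotopyEquiv (HoEq f g) (HoEq f' g')) := by
  have toP : ∀ {X Y : Type} [TopologicalSpace X] [TopologicalSpace Y] {u v : C(X, Y)},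
    u.Homotopic v → Nonempty (Path.Homotopic.Quotient u v) := by
      rintro X Y _ _ u v ⟨H⟩
      exact ⟨.mk ⟨H.curry, by ext; simp, by ext; simp⟩⟩
  obtain ⟨a⟩ := toP hf
  obtain ⟨b⟩ := toP hg
  let m := HoEq.mkA f' g'
  let t : Path.Homotopic.Quotient (m.comp f') (m.comp g') := .mk (HoEq.taut f' g')
  obtain ⟨P, hP⟩ := Path.Homotopic.Quotient.mk_surjective
    ((postQ m a).trans ((preQ β.toFun t).trans (postQ m b).symm))
  -- `Φ` is `α` on the bottom, and on the cylinder the tautological path conjugated with `a`, `b`.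
  let Φ : C(HoEq f g, HoEq f' g') := HoEq.ofData (m.comp α.toFun) P
  have hΦ : Φ.comp (HoEq.mkA f g) = m.comp α.toFun := rfl
  have key : ∀ {Z : Type} [TopologicalSpace Z] (F : C(HoEq f' g', Z)),
      Path.Homotopic.Quotient.mk ((HoEq.taut f g).post (F.comp Φ)) =
      ((postQ (F.comp m) a).trans ((preQ β.toFun (postQ F t)).trans
        (postQ (F.comp m) b).symm)) := by
    intro Z _ F
    have h1 : Path.Homotopic.Quotient.mk ((HoEq.taut f g).post (F.comp Φ)) = postQ F (.mk P) := by
      rw [postQ_mk]; congr 1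
    refine h1.trans ((congrArg (postQ F) hP).trans ?_)
    rw [postQ_trans, postQ_trans, postQ_symm]
    induction a using Path.Homotopic.Quotient.ind
    induction b using Path.Homotopic.Quotient.ind
    rfl
  -- Composition with `Φ` is bijective on homotopy classes of maps to any space.
  refine (exists_homotopyEquiv_of_yoneda Φ ?_ ?_).elim fun e _ => ⟨e⟩
  · intro F F' h
    obtain ⟨τ, hτ⟩ := HoEq.homotopic_iff.1 h
    obtain ⟨τ', hτ'⟩ := (preQ_bijective α (F.comp m) (F'.comp m)).2 (.mk τ)
    obtain ⟨τ', rfl⟩ := Path.Homotopic.Quotient.mk_surjective τ'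
    refine HoEq.homotopic_iff.2 ⟨τ', ?_⟩
    rw [key, key] at hτ
    have hf' : Path.Homotopic.Quotient.mk (τ.pre f) = preQ (α.toFun.comp f) (.mk τ') :=
      congrArg (preQ f) hτ'.symm
    have hg' : Path.Homotopic.Quotient.mk (τ.pre g) = preQ (α.toFun.comp g) (.mk τ') :=
      congrArg (preQ g) hτ'.symm
    have h3 := (Path.Homotopic.Quotient.conj_iff
      (interchange (Path.Homotopic.Quotient.mk τ') a)
      (interchange (Path.Homotopic.Quotient.mk τ') b)).1
      ((congrArg (fun r => Path.Homotopic.Quotient.trans r _) hf').symm.trans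
        (hτ.trans (congrArg (Path.Homotopic.Quotient.trans _) hg')))
    apply (preQ_bijective β (F.comp (m.comp f')) (F'.comp (m.comp g'))).1
    exact (preQ_trans β.toFun (preQ f' (.mk τ')) (postQ F' t)).trans
      (h3.trans (preQ_trans β.toFun (postQ F t) (preQ g' (.mk τ'))).symm)
  · intro F
    let u : C(A, _) := F.comp (HoEq.mkA f g)
    let u' := u.comp α.invFun
    have hu : u.Homotopic (u'.comp α.toFun) := by
      have := (ContinuousMap.Homotopic.refl u).comp α.left_inv.symm
      simpa [u', ContinuousMap.comp_assoc] using this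
    obtain ⟨K⟩ := toP hu
    obtain ⟨p', hp'⟩ := (preQ_bijective β (u'.comp f') (u'.comp g')).2
      ((postQ u' a).symm.trans ((preQ f K).symm.trans
        ((Path.Homotopic.Quotient.mk ((HoEq.taut f g).post F)).trans ((preQ g K).trans (postQ u' b)))))
    obtain ⟨p', rfl⟩ := Path.Homotopic.Quotient.mk_surjective p'
    obtain ⟨K, rfl⟩ := Path.Homotopic.Quotient.mk_surjective K
    refine ⟨HoEq.ofData u' p', HoEq.homotopic_iff.2 ⟨K, ?_⟩⟩
    have hk := key (HoEq.ofData u' p')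
    have h4 : postQ (HoEq.ofData u' p') t = .mk p' := rfl
    rw [h4] at hk
    rw [hk]
    refine (congrArg (Path.Homotopic.Quotient.trans _) (congrArg (Path.Homotopic.Quotient.trans _)
      (congrArg (fun r => Path.Homotopic.Quotient.trans r _) hp'))).trans ?_
    change Path.Homotopic.Quotient.trans (preQ f (.mk K)) (Path.Homotopic.Quotient.trans (postQ u' a) (Path.Homotopic.Quotient.trans
      (Path.Homotopic.Quotient.trans (postQ u' a).symm (Path.Homotopic.Quotient.trans (preQ f (.mk K)).symm (Path.Homotopic.Quotient.trans
        (.mk ((HoEq.taut f g).post F)) (Path.Homotopic.Quotient.trans (preQ g (.mk K)) (postQ u' b)))))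
      (postQ u' b).symm)) = Path.Homotopic.Quotient.trans (.mk ((HoEq.taut f g).post F)) (preQ g (.mk K))
    simp [Path.Homotopic.Quotient.trans_assoc, Path.Homotopic.Quotient.symm_trans_cancel]

end

/-! ### Homotopies out of graphs, and the Cayley tree of a free group -/

section

section discrete
variable {A C Z : Type} [TopologicalSpace A] [TopologicalSpace C] [TopologicalSpace Z]

/-- A path of maps evaluated at a point. -/
abbrev Path.at' {u v : C(C, Z)} (p : Path u v) (c : C) : Path (u c) (v c) :=
  p.map (f := fun w : C(C, Z) => w c) (continuous_eval_const c)

/-- Paths of maps out of a discrete space are homotopic if they are so at each point. -/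
lemma path_homotopic_of_discrete [DiscreteTopology C] {u v : C(C, Z)} {p q : Path u v}
    (h : ∀ c, (p.at' c).Homotopic (q.at' c)) : p.Homotopic q := by
  let H := fun c => (h c).some
  refine ⟨⟨⟨⟨fun x => ⟨fun c => H c x, continuous_of_discreteTopology⟩, ?_⟩, ?_, ?_⟩, ?_⟩⟩
  · refine ContinuousMap.continuous_of_continuous_uncurry _ ?_
    exact continuous_prod_of_discrete_right.2 fun c => (H c).continuous
  · intro t; ext c; exact (H c).apply_zero t
  · intro t; ext c; exact (H c).apply_one t
  · rintro t x hx
    ext c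
    exact (H c).prop' t x hx

/-- The path in a homotopy coequalizer along the segment of the cylinder over `c`. -/
def HoEq.edge (f g : C → A) (c : C) : Path (HoEq.mkA f g (f c)) (HoEq.mkA f g (g c)) where
  toFun t := HoEq.mkC f g (c, t)
  source' := HoEq.mkC_zero f g c
  target' := HoEq.mkC_one f g c

/-- Two maps out of a graph are homotopic as soon as there are path classes between the images
of the vertices, compatible with the edges. -/
lemma HoEq.homotopic_of_discrete [DiscreteTopology A] [DiscreteTopology C] {f g : C(C, A)}
    {F F' : C(HoEq f g, Z)}
    (τ : ∀ a, Path.Homotopic.Quotient (F (HoEq.mkA f g a)) (F' (HoEq.mkA f g a)))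
    (h : ∀ c, (τ (f c)).trans (.mk ((HoEq.edge f g c).map F'.continuous)) =
      (Path.Homotopic.Quotient.mk ((HoEq.edge f g c).map F.continuous)).trans (τ (g c))) :
    F.Homotopic F' := by
  choose p hp using fun a => Path.Homotopic.Quotient.mk_surjective (τ a)
  let P : Path (F.comp (HoEq.mkA f g)) (F'.comp (HoEq.mkA f g)) :=
    ⟨⟨fun t => ⟨fun a => p a t, continuous_of_discreteTopology⟩,
      ContinuousMap.continuous_of_continuous_uncurry _
        (continuous_prod_of_discrete_right.2 fun a => (p a).continuous)⟩,
      by ext; simp, by ext; simp⟩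
  refine HoEq.homotopic_iff.2 ⟨P, ?_⟩
  rw [← Path.Homotopic.Quotient.mk_trans, ← Path.Homotopic.Quotient.mk_trans]
  refine Path.Homotopic.Quotient.eq.2 (path_homotopic_of_discrete fun c => ?_)
  have := h c
  rw [← hp, ← hp, ← Path.Homotopic.Quotient.mk_trans, ← Path.Homotopic.Quotient.mk_trans] at this
  have h2 := Path.Homotopic.Quotient.eq.1 this
  simp only [Path.at', Path.map_trans]
  exact h2
end discrete

section tree
variable {α : Type}

instance : TopologicalSpace (FreeGroup α) := ⊥
instance : DiscreteTopology (FreeGroup α) := ⟨rfl⟩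

/-- A discrete copy of the set of edges of the Cayley tree. -/
def TreeEdge (α : Type) : Type := FreeGroup α × α
instance : TopologicalSpace (TreeEdge α) := ⊥
instance : DiscreteTopology (TreeEdge α) := ⟨rfl⟩

/-- The source of an edge of the Cayley tree. -/
def treeSrc : C(TreeEdge α, FreeGroup α) := ⟨fun c => c.1, continuous_of_discreteTopology⟩
/-- The target of an edge of the Cayley tree. -/
def treeTgt : C(TreeEdge α, FreeGroup α) :=
  ⟨fun c => FreeGroup.of c.2 * c.1, continuous_of_discreteTopology⟩

/-- The Cayley graph of the free group on `α`, with an edge from `u` to `a u` for every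
`u` and every generator `a`. -/
abbrev CayTree (α : Type) : Type := HoEq (treeSrc (α := α)) (treeTgt (α := α))

/-- The vertex of the Cayley tree given by an element of the free group. -/
abbrev CayTree.vertex (u : FreeGroup α) : CayTree α := HoEq.mkA _ _ u

/-- The edge of the Cayley tree from `u` to `a u`. -/
abbrev CayTree.edge (u : FreeGroup α) (a : α) :
    Path (CayTree.vertex u) (CayTree.vertex (FreeGroup.of a * u)) :=
  HoEq.edge treeSrc treeTgt (u, a)

/-- A compatible choice of path classes from the vertex `1` to all vertices of the tree. -/
lemma CayTree.exists_classes : ∃ E : ∀ u : FreeGroup α,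
    Path.Homotopic.Quotient (CayTree.vertex (1 : FreeGroup α)) (CayTree.vertex u),
    E 1 = .refl _ ∧ ∀ u a, E (FreeGroup.of a * u) = (E u).trans (.mk (CayTree.edge u a)) := by
  let S := Σ u : FreeGroup α,
    Path.Homotopic.Quotient (CayTree.vertex (1 : FreeGroup α)) (CayTree.vertex u)
  let step : α → Equiv.Perm S := fun a => Equiv.ofBijective
    (fun x => ⟨FreeGroup.of a * x.1, x.2.trans (.mk (CayTree.edge x.1 a))⟩) (by
      constructor
      · rintro ⟨u, x⟩ ⟨v, y⟩ h
        obtain ⟨h1, h2⟩ := Sigma.mk.inj h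
        obtain rfl := mul_left_cancel h1
        have h3 : x = y := Path.Homotopic.Quotient.trans_right_cancel (eq_of_heq h2)
        rw [h3]
      · rintro ⟨v, y⟩
        obtain ⟨u, rfl⟩ : ∃ u, v = FreeGroup.of a * u := ⟨(FreeGroup.of a)⁻¹ * v, by group⟩
        exact ⟨⟨u, y.trans (Path.Homotopic.Quotient.mk (CayTree.edge u a)).symm⟩, by
          simp [Path.Homotopic.Quotient.trans_assoc]⟩)
  let Φ : FreeGroup α →* Equiv.Perm S := FreeGroup.lift step
  have hΦa : ∀ a x, Φ (FreeGroup.of a) x =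
      ⟨FreeGroup.of a * x.1, x.2.trans (.mk (CayTree.edge x.1 a))⟩ := by
    intro a x
    simp only [Φ, FreeGroup.lift_apply_of]; rfl
  have h1 : ∀ u x, (Φ u x).1 = u * x.1 := by
    intro u
    induction u using FreeGroup.induction_on with
    | C1 => simp
    | of a => intro x; rw [hΦa]
    | inv_of a ih =>
      intro x
      have := hΦa a (Φ (FreeGroup.of a)⁻¹ x)
      rw [← Equiv.Perm.mul_apply, ← map_mul] at this
      simp only [mul_inv_cancel, map_one, Equiv.Perm.one_apply] at this
      have := congrArg Sigma.fst this
      simp only at this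
      rw [this]; group
    | mul x y hx hy => intro z; rw [map_mul, Equiv.Perm.mul_apply, hx, hy, mul_assoc]
  let x0 : S := ⟨1, .refl _⟩
  have h2 : ∀ u, ∃ E : Path.Homotopic.Quotient (CayTree.vertex (1 : FreeGroup α)) (CayTree.vertex u),
      Φ u x0 = ⟨u, E⟩ := by
    intro u
    have := h1 u x0
    rcases hx : Φ u x0 with ⟨v, E⟩
    rw [hx] at this
    simp only [x0, mul_one] at this
    subst this
    exact ⟨E, rfl⟩
  choose E hE using h2
  refine ⟨E, ?_, fun u a => ?_⟩
  · have := hE 1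
    rw [map_one] at this
    exact (eq_of_heq (Sigma.mk.inj this).2).symm
  · have := hE (FreeGroup.of a * u)
    rw [map_mul, Equiv.Perm.mul_apply, hE, hΦa] at this
    exact (eq_of_heq (Sigma.mk.inj this).2).symm

/-- The Cayley tree contracts to `1`: the classes of paths from the vertices to `1` in
`CayTree.exists_classes` are compatible with the edges. -/
instance CayTree.contractible : ContractibleSpace (CayTree α) := by
  rw [contractible_iff_id_nullhomotopic]
  obtain ⟨E, -, hE⟩ := CayTree.exists_classes (α := α)
  refine ⟨CayTree.vertex 1, HoEq.homotopic_of_discrete (fun u => (E u).symm) ?_⟩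
  rintro ⟨u, a⟩
  have h1 : Path.Homotopic.Quotient.mk ((HoEq.edge treeSrc treeTgt (u, a)).map
      (ContinuousMap.const (CayTree α) (CayTree.vertex (1 : FreeGroup α))).continuous) = .refl _ := rfl
  have h2 := hE u a
  refine (congrArg _ h1).trans ?_
  have h3 : Path.Homotopic.Quotient.mk ((HoEq.edge treeSrc treeTgt (u, a)).map
      (ContinuousMap.id (CayTree α)).continuous) = .mk (CayTree.edge u a) := rfl
  refine Eq.trans ?_ (congrArg (fun r => Path.Homotopic.Quotient.trans r _) h3.symm)
  change Path.Homotopic.Quotient.trans (E u).symm (.refl _) = Path.Homotopic.Quotient.trans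
    (.mk (CayTree.edge u a)) (E (FreeGroup.of a * u)).symm
  apply Path.Homotopic.Quotient.trans_right_cancel (p := E (FreeGroup.of a * u))
  simp only [Path.Homotopic.Quotient.trans_assoc, Path.Homotopic.Quotient.trans_refl,
    Path.Homotopic.Quotient.symm_trans]
  rw [hE, Path.Homotopic.Quotient.trans_symm_cancel]
end tree

end

/-! ### The universal cover of a wedge of circles -/

section

section cover
variable {α : Type}

/-- A point of the wedge of circles is the wedge point (`none`) or an interior point of a
circle. -/
def WedgeGraph.nf (x : WedgeGraph α) : Option (α × I) := by
  classical
  exact Quot.lift (fun y : (Σ _ : α, I) ⊕ Unit => Sum.elim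
    (fun z => if z.2 = 0 ∨ z.2 = 1 then none else some (z.1, z.2)) (fun _ => none) y)
    (by rintro _ _ (a | a) <;> simp) x

lemma WedgeGraph.nf_pt : WedgeGraph.nf (WedgeGraph.pt α) = none := rfl

lemma WedgeGraph.nf_loop (a : α) {t : I} (h0 : t ≠ 0) (h1 : t ≠ 1) :
    WedgeGraph.nf (WedgeGraph.loop a t) = some (a, t) := by
  classical
  have : WedgeGraph.nf (WedgeGraph.loop a t) =
    if t = 0 ∨ t = 1 then none else some (a, t) := by
      unfold WedgeGraph.nf WedgeGraph.loop; congr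
  rw [this, if_neg (by tauto)]

namespace CayTree

/-- The projection of the Cayley tree to the wedge of circles. -/
def proj (α : Type) : C(CayTree α, WedgeGraph α) :=
  HoEq.desc (fun _ => WedgeGraph.pt α) (fun q => WedgeGraph.loop q.1.2 q.2) continuous_const
    (continuous_prod_of_discrete_left.2 fun c => (WedgeGraph.loop c.2).continuous)
    (fun c => by simp) (fun c => by simp)

/-- Right translation on the edges. -/
def edgeMul (g : FreeGroup α) (c : TreeEdge α) : TreeEdge α := (c.1 * g⁻¹, c.2)

/-- Right translation on the Cayley tree. -/
def trans (g : FreeGroup α) : C(CayTree α, CayTree α) :=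
  HoEq.desc (fun u => HoEq.mkA _ _ (u * g⁻¹)) (fun q => HoEq.mkC _ _ (edgeMul g q.1, q.2))
    continuous_of_discreteTopology
    (continuous_prod_of_discrete_left.2 fun c => by fun_prop)
    (fun c => HoEq.mkC_zero _ _ _) (fun c => (HoEq.mkC_one _ _ _).trans (by
      change CayTree.vertex (FreeGroup.of c.2 * (c.1 * g⁻¹)) =
        CayTree.vertex (FreeGroup.of c.2 * c.1 * g⁻¹)
      rw [mul_assoc]))

lemma trans_mkA (g u : FreeGroup α) :
  trans g (HoEq.mkA treeSrc treeTgt u) = HoEq.mkA treeSrc treeTgt (u * g⁻¹) := rfl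
lemma trans_mkC (g u : FreeGroup α) (a : α) (t : I) :
  trans g (HoEq.mkC treeSrc treeTgt ((u, a), t)) = HoEq.mkC treeSrc treeTgt ((u * g⁻¹, a), t) := rfl

/-- The free group acts on its Cayley tree by `g • u = u g⁻¹`. -/
instance : MulAction (FreeGroup α) (CayTree α) where
  smul g x := trans g x
  one_smul x := by
    change trans 1 x = x
    induction x using HoEq.ind with
    | hA u => rw [trans_mkA]; simp
    | hC c => obtain ⟨⟨u, a⟩, t⟩ := c; rw [trans_mkC]; simp
  mul_smul g h x := by
    change trans (g * h) x = trans g (trans h x)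
    induction x using HoEq.ind with
    | hA u => simp only [trans_mkA]; simp [mul_assoc]
    | hC c => obtain ⟨⟨u, a⟩, t⟩ := c; simp only [trans_mkC]; simp [mul_assoc]

lemma smul_mkA (g u : FreeGroup α) :
  g • (HoEq.mkA treeSrc treeTgt u : CayTree α) = HoEq.mkA treeSrc treeTgt (u * g⁻¹) := rfl
lemma smul_mkC (g u : FreeGroup α) (a : α) (t : I) :
  g • (HoEq.mkC treeSrc treeTgt ((u, a), t) : CayTree α) =
    HoEq.mkC treeSrc treeTgt ((u * g⁻¹, a), t) := rfl

lemma proj_mkA (u : FreeGroup α) : proj α (HoEq.mkA treeSrc treeTgt u) = WedgeGraph.pt α := rfl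
lemma proj_mkC (u : FreeGroup α) (a : α) (t : I) :
  proj α (HoEq.mkC treeSrc treeTgt ((u, a), t)) = WedgeGraph.loop a t := rfl

/-- A point of the Cayley tree is a vertex or an interior point of an edge. -/
lemma ind' {p : CayTree α → Prop} (hA : ∀ u, p (HoEq.mkA treeSrc treeTgt u))
    (hC : ∀ u a (t : I), t ≠ 0 → t ≠ 1 → p (HoEq.mkC treeSrc treeTgt ((u, a), t)))
    (x : CayTree α) : p x := by
  induction x using HoEq.ind with
  | hA u => exact hA u
  | hC c =>
    obtain ⟨⟨u, a⟩, t⟩ := c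
    by_cases h0 : t = 0
    · subst h0; exact (congrArg p (HoEq.mkC_zero treeSrc treeTgt ((u, a) : TreeEdge α))).mpr (hA _)
    by_cases h1 : t = 1
    · subst h1; exact (congrArg p (HoEq.mkC_one treeSrc treeTgt ((u, a) : TreeEdge α))).mpr (hA _)
    exact hC u a t h0 h1

/-- The open star of the vertex `v`, as a predicate on the tree. -/
def star (v : FreeGroup α) : C(CayTree α, Prop) :=
  HoEq.desc (fun u => u = v)
    (fun q => ((q.2 : ℝ) < 1 / 2 ∧ q.1.1 = v) ∨ (1 / 2 < (q.2 : ℝ) ∧ FreeGroup.of q.1.2 * q.1.1 = v))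
    continuous_of_discreteTopology
    (continuous_prod_of_discrete_left.2 fun c => continuous_Prop.2 (by
      have h1 : IsOpen {t : I | (t : ℝ) < 1 / 2} := isOpen_lt (by fun_prop) (by fun_prop)
      have h2 : IsOpen {t : I | 1 / 2 < (t : ℝ)} := isOpen_lt (by fun_prop) (by fun_prop)
      exact (h1.inter (isOpen_const (p := c.1 = v))).union
        (h2.inter (isOpen_const (p := FreeGroup.of c.2 * c.1 = v)))))
    (fun c => by simp [treeSrc]) (fun c => by simp [treeTgt]; norm_num)

/-- The open edge from `v` in direction `b`, as a predicate on the tree. -/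
def openEdge (v : FreeGroup α) (b : α) : C(CayTree α, Prop) :=
  HoEq.desc (fun _ => False) (fun q => ((0 < (q.2 : ℝ) ∧ (q.2 : ℝ) < 1) ∧ q.1.1 = v ∧ q.1.2 = b))
    continuous_const
    (continuous_prod_of_discrete_left.2 fun c => continuous_Prop.2 (by
      have h1 : IsOpen {t : I | 0 < (t : ℝ)} := isOpen_lt (by fun_prop) (by fun_prop)
      have h2 : IsOpen {t : I | (t : ℝ) < 1} := isOpen_lt (by fun_prop) (by fun_prop)
      exact (h1.inter h2).inter (isOpen_const (p := c.1 = v ∧ c.2 = b))))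
    (fun c => by simp) (fun c => by simp)

/-- The wedge of circles is the quotient of the Cayley tree by the free group, acting freely
and properly discontinuously. -/
lemma isQuotientCoveringMap : IsQuotientCoveringMap (proj α) (FreeGroup α) where
  toIsQuotientMap := by
    let j : (Σ _ : α, I) ⊕ Unit → CayTree α := Sum.elim
      (fun z => HoEq.mkC treeSrc treeTgt (((1 : FreeGroup α), z.1), z.2))
      (fun _ => HoEq.mkA treeSrc treeTgt (1 : FreeGroup α))
    have hj : Continuous j := by
      refine continuous_sum_dom.2 ⟨continuous_sigma fun a => ?_, continuous_const⟩
      exact (HoEq.mkC (treeSrc (α := α)) treeTgt).continuous.comp (by fun_prop)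
    refine Topology.IsQuotientMap.of_comp hj (proj α).continuous ?_
    have : proj α ∘ j = Quot.mk (WedgeGraphRel α) := by
      ext x; rcases x with x | x <;> rfl
    rw [this]
    exact isQuotientMap_quot_mk
  continuous_const_smul g := (trans g).continuous
  apply_eq_iff_mem_orbit {x y} := by
    constructor
    · intro h
      induction x using ind' with
      | hA u =>
        induction y using ind' with
        | hA v => exact ⟨u⁻¹ * v, by simp [smul_mkA]⟩
        | hC v a t h0 h1 =>
          have := congrArg WedgeGraph.nf h
          rw [proj_mkC, WedgeGraph.nf_loop a h0 h1, proj_mkA, WedgeGraph.nf_pt] at this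
          simp at this
      | hC u b s h0' h1' =>
        induction y using ind' with
        | hA v =>
          have := congrArg WedgeGraph.nf h
          rw [proj_mkC, WedgeGraph.nf_loop b h0' h1', proj_mkA, WedgeGraph.nf_pt] at this
          simp at this
        | hC v a t h0 h1 =>
          have := congrArg WedgeGraph.nf h
          rw [proj_mkC, proj_mkC, WedgeGraph.nf_loop b h0' h1', WedgeGraph.nf_loop a h0 h1] at this
          simp only [Option.some.injEq, Prod.mk.injEq] at this
          obtain ⟨rfl, rfl⟩ := this
          exact ⟨u⁻¹ * v, by simp [smul_mkC]⟩
    · rintro ⟨g, rfl⟩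
      induction y using HoEq.ind with
      | hA u => rfl
      | hC c => rfl
  disjoint e := by
    induction e using ind' with
    | hA v =>
      -- The translates of the open star of a vertex are disjoint.
      refine ⟨{x | star v x}, (continuous_Prop.1 (star v).continuous).mem_nhds
        (show v = v from rfl), ?_⟩
      rintro g ⟨_, ⟨x, hx, rfl⟩, hx'⟩
      induction x using HoEq.ind with
      | hA u =>
        have h1 : u = v := hx
        have h2 : u * g⁻¹ = v := hx'
        rw [h1] at h2; simpa using h2
      | hC c =>
        obtain ⟨⟨u, a⟩, t⟩ := c
        have h1 : ((t : ℝ) < 1 / 2 ∧ u = v) ∨ (1 / 2 < (t : ℝ) ∧ FreeGroup.of a * u = v) := hx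
        have h2 : ((t : ℝ) < 1 / 2 ∧ u * g⁻¹ = v) ∨
          (1 / 2 < (t : ℝ) ∧ FreeGroup.of a * (u * g⁻¹) = v) := hx'
        rcases h1 with ⟨h1, h3⟩ | ⟨h1, h3⟩ <;> rcases h2 with ⟨h2, h4⟩ | ⟨h2, h4⟩
        · rw [h3] at h4; simpa using h4
        · linarith
        · linarith
        · rw [← mul_assoc, h3] at h4; simpa using h4
    | hC v b s h0 h1 =>
      -- The translates of an open edge are disjoint.
      refine ⟨{x | openEdge v b x}, (continuous_Prop.1 (openEdge v b).continuous).mem_nhds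
        ⟨⟨unitInterval.pos_iff_ne_zero.2 h0, unitInterval.lt_one_iff_ne_one.2 h1⟩, rfl, rfl⟩, ?_⟩
      rintro g ⟨_, ⟨x, hx, rfl⟩, hx'⟩
      induction x using HoEq.ind with
      | hA u => exact absurd hx id
      | hC c =>
        obtain ⟨⟨u, a⟩, t⟩ := c
        have h1 : u = v := hx.2.1
        have h2 : u * g⁻¹ = v := hx'.2.1
        rw [h1] at h2; simpa using h2

lemma isCoveringMap : IsCoveringMap (proj α) := isQuotientCoveringMap.isCoveringMap

end CayTree

/-- The fundamental group of a wedge of circles is generated by the circles. -/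
lemma WedgeGraph.exists_lift_eq (x : FundamentalGroup (WedgeGraph α) (WedgeGraph.pt α)) :
    ∃ u : FreeGroup α, FreeGroup.lift (fun a => (FundamentalGroup.fromPath
      (X := TopCat.of (WedgeGraph α)) (Path.Homotopic.Quotient.mk (WedgeGraph.loop a)))) u = x := by
  obtain ⟨E, hE1, hE⟩ := CayTree.exists_classes (α := α)
  let D : FreeGroup α → FundamentalGroup (WedgeGraph α) (WedgeGraph.pt α) := fun u =>
    FundamentalGroup.fromPath ((E u).map (CayTree.proj α))
  have hD1 : D 1 = 1 := by simp only [D, hE1]; rfl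
  have hDa : ∀ u a, D (FreeGroup.of a * u) = (FundamentalGroup.fromPath
      (X := TopCat.of (WedgeGraph α)) (Path.Homotopic.Quotient.mk (WedgeGraph.loop a))) * D u := by
    intro u a
    simp only [D, hE]
    exact (FundamentalGroupoid.map (CayTree.proj α)).map_comp (X := ⟨_⟩) (Y := ⟨_⟩) (Z := ⟨_⟩)
      (E u) (Path.Homotopic.Quotient.mk (CayTree.edge u a))
  have hD : ∀ u v, D (u * v) = FreeGroup.lift (fun a => (FundamentalGroup.fromPath
      (X := TopCat.of (WedgeGraph α)) (Path.Homotopic.Quotient.mk (WedgeGraph.loop a)))) u * D v := by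
    intro u
    induction u using FreeGroup.induction_on with
    | C1 => simp
    | of a => intro v; rw [hDa, FreeGroup.lift_apply_of]
    | inv_of a ih =>
      intro v
      have := hDa ((FreeGroup.of a)⁻¹ * v) a
      rw [mul_inv_cancel_left] at this
      rw [this, map_inv, FreeGroup.lift_apply_of, inv_mul_cancel_left]
    | mul x y hx hy => intro v; rw [mul_assoc, hx, hy, map_mul, mul_assoc]
  obtain ⟨γ, hγ⟩ := Path.Homotopic.Quotient.mk_surjective
    (x₀ := WedgeGraph.pt α) (x₁ := WedgeGraph.pt α) x
  -- The lift of a loop ends at some vertex `u`, and is homotopic to `E u` as the tree is simply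
  -- connected.
  obtain ⟨Γ, hΓ, hΓ0⟩ := CayTree.isCoveringMap.exists_path_lifts (γ : C(I, WedgeGraph α))
    (CayTree.vertex 1) (by simp [CayTree.proj_mkA])
  have hΓ1 : ∃ u, Γ 1 = CayTree.vertex u := by
    have h1 : CayTree.proj α (Γ 1) = WedgeGraph.pt α := (congrFun hΓ 1).trans γ.target
    generalize Γ 1 = y at h1
    induction y using CayTree.ind' with
    | hA u => exact ⟨u, rfl⟩
    | hC u a t h0 h1' =>
      have := congrArg WedgeGraph.nf h1
      rw [CayTree.proj_mkC, WedgeGraph.nf_loop a h0 h1', WedgeGraph.nf_pt] at this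
      simp at this
  obtain ⟨u, hu⟩ := hΓ1
  let Γ' : Path (CayTree.vertex (1 : FreeGroup α)) (CayTree.vertex u) := ⟨Γ, hΓ0, hu⟩
  have h2 : E u = .mk Γ' := by
    obtain ⟨e, he⟩ := Path.Homotopic.Quotient.mk_surjective (E u)
    rw [← he]
    exact Path.Homotopic.Quotient.eq.2 (SimplyConnectedSpace.paths_homotopic _ _)
  refine ⟨u, ?_⟩
  have h3 := hD u 1
  rw [hD1, mul_one, mul_one] at h3
  rw [← h3, ← hγ]
  simp only [D, h2]
  have : Γ'.map (CayTree.proj α).continuous = γ := by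
    ext t; exact congrFun hΓ t
  exact congrArg Path.Homotopic.Quotient.mk this
end cover

end

/-! ### Spheres, and the asphericity of wedges of circles -/

section

section sphere
variable {n : ℕ}

/-- A function on the cube vanishing exactly on the boundary. -/
def cubeBump (x : Fin n → I) : ℝ := ∏ i, ((x i : ℝ) * (1 - (x i : ℝ)))

lemma cubeBump_eq_zero {x : Fin n → I} : cubeBump x = 0 ↔ x ∈ Cube.boundary (Fin n) := by
  unfold cubeBump Cube.boundary
  rw [Finset.prod_eq_zero_iff]
  simp only [Finset.mem_univ, true_and, mul_eq_zero, Set.mem_ofPred_eq, sub_eq_zero, Subtype.ext_iff,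
    Set.Icc.coe_zero, Set.Icc.coe_one]
  exact exists_congr fun i => or_congr Iff.rfl eq_comm

/-- Collapsing the boundary of the cube. -/
def cubeCollapse (x : Fin n → I) : (Fin n → ℝ) × ℝ := (fun i => cubeBump x * x i, cubeBump x)

lemma continuous_cubeCollapse : Continuous (cubeCollapse (n := n)) := by
  unfold cubeCollapse cubeBump; fun_prop

/-- A metric model of the sphere: the cube with its boundary collapsed to a point. -/
abbrev Sph (n : ℕ) : Type := Set.range (cubeCollapse (n := n))

instance : CompactSpace (Sph n) := isCompact_iff_compactSpace.1 (isCompact_range continuous_cubeCollapse)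

/-- The quotient map from the cube. -/
def Sph.q (n : ℕ) : C(Fin n → I, Sph n) :=
  ⟨Set.rangeFactorization cubeCollapse, continuous_cubeCollapse.subtype_mk _⟩

lemma Sph.isQuotientMap_q : Topology.IsQuotientMap (Sph.q n) :=
  (Sph.q n).continuous.isClosedMap.isQuotientMap (Sph.q n).continuous
    Set.rangeFactorization_surjective

/-- The quotient map from the cube to the sphere identifies exactly the points of the boundary. -/
lemma Sph.q_eq_q {x y : Fin n → I} :
    Sph.q n x = Sph.q n y ↔ x = y ∨ (x ∈ Cube.boundary (Fin n) ∧ y ∈ Cube.boundary (Fin n)) := by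
  have h0 : Sph.q n x = Sph.q n y ↔ cubeCollapse x = cubeCollapse y := Subtype.ext_iff
  rw [h0, ← cubeBump_eq_zero, ← cubeBump_eq_zero]
  unfold cubeCollapse
  rw [Prod.mk.injEq]
  constructor
  · rintro ⟨h1, h2⟩
    by_cases h : cubeBump x = 0
    · exact Or.inr ⟨h, h2 ▸ h⟩
    · left
      ext i
      have := congrFun h1 i
      simp only [← h2] at this
      exact mul_left_cancel₀ h this
  · rintro (rfl | ⟨h1, h2⟩)
    · exact ⟨rfl, rfl⟩
    · rw [h1, h2]; simp

/-- All maps of spheres of dimension at least `2` to `Z` are nullhomotopic. -/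
def SphNull (Z : Type) [TopologicalSpace Z] : Prop :=
  ∀ n : ℕ, 2 ≤ n → ∀ f : C(Sph n, Z), f.Nullhomotopic

variable {Z W : Type} [TopologicalSpace Z] [TopologicalSpace W]

/-- Null-homotopy of all maps from spheres is a homotopy invariant. -/
lemma SphNull.of_homotopyEquiv (h : SphNull Z) (e : ContinuousMap.HomotopyEquiv Z W) :
    SphNull W := by
  intro n hn f
  obtain ⟨z, hz⟩ := h n hn (e.invFun.comp f)
  refine ⟨e.toFun z, ?_⟩
  have h1 : (e.toFun.comp (e.invFun.comp f)).Homotopic (e.toFun.comp (.const _ z)) :=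
    (ContinuousMap.Homotopic.refl e.toFun).comp hz
  have h2 : ((e.toFun.comp e.invFun).comp f).Homotopic ((ContinuousMap.id _).comp f) :=
    e.right_inv.comp (.refl f)
  exact h2.symm.trans h1

/-- Radial stretching of the cube by the factor `1 + s`, followed by the retraction to the
cube. -/
def cubeStretch (s : I) (x : Fin n → I) : Fin n → I := fun i =>
  Set.projIcc (0 : ℝ) 1 zero_le_one (1 / 2 + (1 + s) * ((x i : ℝ) - 1 / 2))

lemma cubeStretch_mem {s : I} {x : Fin n → I} (hx : x ∈ Cube.boundary (Fin n)) :
    cubeStretch s x ∈ Cube.boundary (Fin n) := by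
  obtain ⟨i, hi⟩ := hx
  have := s.2.1
  refine ⟨i, hi.imp (fun h => ?_) (fun h => ?_)⟩
  · exact Set.projIcc_of_le_left _ (by rw [h]; simp; linarith)
  · exact Set.projIcc_of_right_le _ (by rw [h]; simp; linarith)

/-- A function on the cube that vanishes on the boundary and equals `1` in the middle. -/
def cubeHeight (x : Fin n → I) : I :=
  Set.projIcc (0 : ℝ) 1 zero_le_one (2 - 4 * ‖fun i => (x i : ℝ) - 1 / 2‖)

lemma cubeHeight_boundary {x : Fin n → I} (hx : x ∈ Cube.boundary (Fin n)) : cubeHeight x = 0 := by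
  obtain ⟨i, hi⟩ := hx
  refine Set.projIcc_of_le_left _ ?_
  have := norm_le_pi_norm (fun i => (x i : ℝ) - 1 / 2) i
  have h2 : ‖(x i : ℝ) - 1 / 2‖ = 1 / 2 := by
    rcases hi with h | h <;> rw [h, Real.norm_eq_abs] <;> norm_num
  linarith

/-- Every point has height `1`, or else it is stretched to the boundary of the cube. -/
lemma cubeHeight_cases (x : Fin n → I) :
    cubeHeight x = 1 ∨ cubeStretch 1 x ∈ Cube.boundary (Fin n) := by
  by_cases h : 1 / 4 < ‖fun i => (x i : ℝ) - 1 / 2‖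
  · right
    have : ∃ i, 1 / 4 < ‖(x i : ℝ) - 1 / 2‖ := by
      by_contra! hc
      exact absurd ((pi_norm_le_iff_of_nonneg (by norm_num)).2 hc) (not_le.2 h)
    obtain ⟨i, hi⟩ := this
    rw [Real.norm_eq_abs, lt_abs] at hi
    refine ⟨i, hi.symm.imp (fun h => ?_) (fun h => ?_)⟩
    · exact Set.projIcc_of_le_left _ (by simp; linarith)
    · exact Set.projIcc_of_right_le _ (by simp; linarith)
  · left
    exact Set.projIcc_of_right_le _ (by linarith)

/-- A space all of whose spheres of dimension at least `2` are freely null-homotopic has trivial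
homotopy groups in these degrees. A free null-homotopy of a sphere moves the base point along a
path; `cubeStretch` and `cubeHeight` spread this path over a collar of the boundary of the cube, and
following it back there gives a null-homotopy relative to the boundary. -/
lemma SphNull.aspherical (h : SphNull Z) : Aspherical Z := by
  intro z n hn
  have hne : Nonempty (Fin n) := ⟨⟨0, by omega⟩⟩
  refine ⟨fun a b => ?_⟩
  have key : ∀ f : GenLoop (Fin n) Z z, (f : C(Fin n → I, Z)).HomotopicRel
      (.const _ z) (Cube.boundary (Fin n)) := by
    intro f
    have hlift : ∀ x y, Sph.q n x = Sph.q n y → f.1 x = f.1 y := by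
      intro x y hxy
      rcases Sph.q_eq_q.1 hxy with rfl | ⟨h1, h2⟩
      · rfl
      · exact (f.2 x h1).trans (f.2 y h2).symm
    obtain ⟨c, ⟨K⟩⟩ := h n hn (Sph.isQuotientMap_q.lift f.1 hlift)
    have hK0 : ∀ x, K (0, Sph.q n x) = f.1 x := by
      intro x; rw [K.apply_zero]
      exact DFunLike.congr_fun (Sph.isQuotientMap_q.lift_comp f.1 hlift) x
    let o : Fin n → I := fun _ => 0
    have ho : o ∈ Cube.boundary (Fin n) := ⟨hne.some, Or.inl rfl⟩
    have hbd : ∀ x ∈ Cube.boundary (Fin n), Sph.q n x = Sph.q n o :=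
      fun x hx => Sph.q_eq_q.2 (Or.inr ⟨hx, ho⟩)
    have hcs : Continuous fun p : I × (Fin n → I) => cubeStretch p.1 p.2 := by
      refine continuous_pi fun i => continuous_projIcc.comp ?_
      fun_prop
    have hch : Continuous (cubeHeight (n := n)) := by
      refine continuous_projIcc.comp ?_
      fun_prop
    let m : C(Fin n → I, Z) := ⟨fun x => K (cubeHeight x, Sph.q n o), by fun_prop⟩
    have hz : K (0, Sph.q n o) = z := (hK0 o).trans (f.2 o ho)
    -- The inner cube is stretched over the whole cube while `K` runs up to time `t`; over the
    -- collar left behind `K` runs along the track of the base point.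
    have s1 : f.1.HomotopicRel m (Cube.boundary (Fin n)) := by
      refine ⟨⟨⟨⟨fun p => K (min p.1 (cubeHeight p.2), Sph.q n (cubeStretch p.1 p.2)), ?_⟩, ?_, ?_⟩,
        ?_⟩⟩
      · exact K.continuous.comp ((continuous_fst.min (hch.comp continuous_snd)).prodMk
          ((Sph.q n).continuous.comp hcs))
      · intro x
        have : cubeStretch 0 x = x := by
          ext i; simp [cubeStretch, Set.projIcc_of_mem _ (x i).2]
        simp only [this]
        rw [min_eq_left unitInterval.nonneg']; exact hK0 x
      · intro x
        simp only [m]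
        rw [min_eq_right unitInterval.le_one']
        rcases cubeHeight_cases x with h1 | h1
        · change K (cubeHeight x, _) = K (cubeHeight x, _)
          rw [h1]
          exact (K.apply_one _).trans (K.apply_one (Sph.q n o)).symm
        · rw [hbd _ h1]; rfl
      · intro t x hx
        change K (min t (cubeHeight x), Sph.q n (cubeStretch t x)) = f.1 x
        rw [cubeHeight_boundary hx, hbd _ (cubeStretch_mem hx), min_eq_right unitInterval.nonneg', hz]
        exact (f.2 x hx).symm
    -- `m` is the track of the base point followed up to the height, and can be retracted along it.
    have s2 : m.HomotopicRel (.const _ z) (Cube.boundary (Fin n)) := by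
      refine ⟨⟨⟨⟨fun p => K (unitInterval.symm p.1 * cubeHeight p.2, Sph.q n o), by fun_prop⟩, ?_, ?_⟩,
        ?_⟩⟩
      · intro x; simp [m]
      · intro x; simp [hz]
      · intro t x hx
        change K (_ * cubeHeight x, Sph.q n o) = K (cubeHeight x, Sph.q n o)
        rw [cubeHeight_boundary hx, mul_zero]
    exact s1.trans s2
  induction a using Quotient.inductionOn with
  | h a =>
    induction b using Quotient.inductionOn with
    | h b => exact Quotient.sound ((key a).trans (key b).symm)

lemma isPreconnected_boundary (hn : 2 ≤ n) :
    IsPreconnected (Metric.sphere (fun _ : Fin n => (1 / 2 : ℝ)) (1 / 2)) := by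
  refine isPreconnected_sphere ?_ _ _
  rw [rank_fin_fun]
  exact_mod_cast hn

lemma coe_mem_sphere {x : Fin n → I} (hx : x ∈ Cube.boundary (Fin n)) :
    (fun i => (x i : ℝ)) ∈ Metric.sphere (fun _ : Fin n => (1 / 2 : ℝ)) (1 / 2) := by
  rw [mem_sphere_iff_norm]
  apply le_antisymm
  · refine (pi_norm_le_iff_of_nonneg (by norm_num)).2 fun i => ?_
    have h1 := (x i).2.1
    have h2 := (x i).2.2
    rw [Real.norm_eq_abs, abs_le]
    constructor <;> (simp; linarith)
  · obtain ⟨i, hi⟩ := hx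
    have := norm_le_pi_norm ((fun i => (x i : ℝ)) - (fun _ => (1 / 2 : ℝ))) i
    refine le_trans ?_ this
    rcases hi with h | h <;> (simp [h]; try norm_num)

lemma proj_sphere_mem {y : Fin n → ℝ}
    (hy : y ∈ Metric.sphere (fun _ : Fin n => (1 / 2 : ℝ)) (1 / 2)) :
    (fun i => Set.projIcc (0 : ℝ) 1 zero_le_one (y i)) ∈ Cube.boundary (Fin n) := by
  rw [mem_sphere_iff_norm] at hy
  by_contra hc
  have h1 : ∀ i, 0 < y i ∧ y i < 1 := by
    intro i
    by_contra h
    refine hc ⟨i, ?_⟩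
    rw [not_and_or, not_lt, not_lt] at h
    exact h.imp (Set.projIcc_of_le_left _) (Set.projIcc_of_right_le _)
  have : ‖y - fun _ => (1 / 2 : ℝ)‖ < 1 / 2 := by
    refine (pi_norm_lt_iff (by norm_num)).2 fun i => ?_
    have := h1 i
    rw [Real.norm_eq_abs, abs_lt]
    constructor <;> (simp; linarith)
  linarith

/-- A wedge of circles is aspherical. -/
lemma WedgeGraph.sphNull (α : Type) : SphNull (WedgeGraph α) := by
  intro n hn f
  have hne : Nonempty (Fin n) := ⟨⟨0, by omega⟩⟩
  let cl : C(Fin n → ℝ, Fin n → I) :=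
    ⟨fun y i => Set.projIcc (0 : ℝ) 1 zero_le_one (y i), by fun_prop⟩
  let F : C(Fin n → ℝ, WedgeGraph α) := (f.comp (Sph.q n)).comp cl
  -- The map on the cube, extended to `ℝⁿ` by clamping the coordinates, lifts to the tree. It is
  -- constant on the boundary of the cube, which is connected, and hence so is the lift; the lift
  -- therefore factors through the sphere.
  obtain ⟨e, he⟩ := CayTree.isQuotientCoveringMap.surjective (F 0)
  obtain ⟨G, ⟨-, hG⟩, -⟩ := CayTree.isCoveringMap.existsUnique_continuousMap_lifts F 0 e he
  let o : Fin n → I := fun _ => 0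
  have ho : o ∈ Cube.boundary (Fin n) := ⟨hne.some, Or.inl rfl⟩
  let inc : C(Fin n → I, Fin n → ℝ) := ⟨fun x i => x i, by fun_prop⟩
  have hci : ∀ x, cl (inc x) = x := by
    intro x; ext i; simp [cl, inc]
  have hcon : Set.EqOn G (fun _ => G (inc o)) (Metric.sphere (fun _ : Fin n => (1 / 2 : ℝ)) (1 / 2)) := by
    refine CayTree.isCoveringMap.eqOn_of_comp_eqOn (isPreconnected_boundary hn) G.continuous.continuousOn
      continuousOn_const ?_ (coe_mem_sphere ho) rfl
    intro y hy
    change (CayTree.proj α ∘ G) y = (CayTree.proj α ∘ G) (inc o)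
    rw [hG]
    change f (Sph.q n (cl y)) = f (Sph.q n (cl (inc o)))
    rw [hci]
    exact congrArg f (Sph.q_eq_q.2 (Or.inr ⟨proj_sphere_mem hy, ho⟩))
  have hlift : ∀ x y, Sph.q n x = Sph.q n y → (G.comp inc) x = (G.comp inc) y := by
    intro x y hxy
    rcases Sph.q_eq_q.1 hxy with rfl | ⟨h1, h2⟩
    · rfl
    · exact (hcon (coe_mem_sphere h1)).trans (hcon (coe_mem_sphere h2)).symm
  let g : C(Sph n, CayTree α) := Sph.isQuotientMap_q.lift (G.comp inc) hlift
  have hfg : f = (CayTree.proj α).comp g := by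
    ext s
    obtain ⟨x, rfl⟩ := Sph.isQuotientMap_q.surjective s
    have h1 : g (Sph.q n x) = G (inc x) :=
      DFunLike.congr_fun (Sph.isQuotientMap_q.lift_comp (G.comp inc) hlift) x
    rw [ContinuousMap.comp_apply, h1]
    have := congrFun hG (inc x)
    simp only [Function.comp_apply] at this
    rw [this]
    change _ = f (Sph.q n (cl (inc x)))
    rw [hci]
  obtain ⟨c, hc⟩ := (contractible_iff_id_nullhomotopic (CayTree α)).1 inferInstance
  refine ⟨CayTree.proj α c, ?_⟩
  rw [hfg]
  have := (ContinuousMap.Homotopic.refl (CayTree.proj α)).comp (hc.comp (.refl g))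
  exact this

end sphere

section wedge
variable {α : Type} [TopologicalSpace α] [DiscreteTopology α]

/-- A wedge of circles is a graph with one vertex. -/
def WedgeGraph.homeo (α : Type) [TopologicalSpace α] [DiscreteTopology α] :
    WedgeGraph α ≃ₜ HoEq (ContinuousMap.const α ()) (ContinuousMap.const α ()) where
  toFun := Quot.lift (Sum.elim (fun z => HoEq.mkC _ _ (z.1, z.2)) (fun _ => HoEq.mkA _ _ ())) (by
    rintro _ _ (a | a)
    · exact HoEq.mkC_zero _ _ _
    · exact HoEq.mkC_one _ _ _)
  invFun := HoEq.desc (fun _ => WedgeGraph.pt α) (fun q => WedgeGraph.loop q.1 q.2) continuous_const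
    (continuous_prod_of_discrete_left.2 fun c => (WedgeGraph.loop c).continuous)
    (fun c => by simp) (fun c => by simp)
  left_inv x := by
    rcases x with ⟨x | x⟩ <;> rfl
  right_inv x := by
    induction x using HoEq.ind with
    | hA u => rfl
    | hC c => rfl
  continuous_toFun := continuous_quot_lift _ (Continuous.sumElim (continuous_sigma fun a =>
    (HoEq.mkC (ContinuousMap.const α ()) (ContinuousMap.const α ())).continuous.comp
      (by fun_prop)) (continuous_const (X := Unit)))
  continuous_invFun := ContinuousMap.continuous _

end wedge

end

/-! ### Locally trivial maps along paths -/

section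

/-- Gluing of continuous functions along a level set of `τ`, relative to a set. -/
lemma ContinuousOn.ite_le' {Z W : Type} [TopologicalSpace Z] [TopologicalSpace W] {S : Set Z}
    {τ : Z → I} (hτ : Continuous τ) {c : I} {f g : Z → W}
    (hf : ContinuousOn f (S ∩ {z | τ z ≤ c})) (hg : ContinuousOn g (S ∩ {z | c ≤ τ z}))
    (h : ∀ z ∈ S, τ z = c → f z = g z) : ContinuousOn (fun z => if τ z ≤ c then f z else g z) S := by
  rw [continuousOn_iff_continuous_domRestrict]
  refine continuous_if_le (f := fun z : S => τ z) (g := fun _ => c) (f' := fun z : S => f z)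
    (g' := fun z : S => g z) (by fun_prop) continuous_const ?_ ?_ ?_
  · exact hf.comp continuous_subtype_val.continuousOn fun z hz => ⟨z.2, hz⟩
  · exact hg.comp continuous_subtype_val.continuousOn fun z hz => ⟨z.2, hz⟩
  · exact fun z hz => h z z.2 hz

section bundle
variable {X Y F : Type} [TopologicalSpace X] [TopologicalSpace Y] [TopologicalSpace F]

/-- Local triviality with fiber `F`: over an open neighborhood `V` of each point, the fiber
coordinate `a` and the parametrization `b` of the total space over `V` are mutually inverse. -/
def LocTriv (p : X → Y) (F : Type) [TopologicalSpace F] : Prop :=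
  ∀ y : Y, ∃ V : Set Y, IsOpen V ∧ y ∈ V ∧ ∃ (a : X → F) (b : Y × F → X),
    ContinuousOn a (p ⁻¹' V) ∧ ContinuousOn b (V ×ˢ Set.univ) ∧
    (∀ y ∈ V, ∀ v, p (b (y, v)) = y ∧ a (b (y, v)) = v) ∧ ∀ x, p x ∈ V → b (p x, a x) = x

/-- Simultaneous trivialization, over the time interval `[0,c]`, of the pullbacks of `p` along
the paths in `U`. -/
def PathTriv (p : X → Y) (F : Type) [TopologicalSpace F] (U : Set C(I, Y)) (c : I) : Prop :=
  ∃ (g : C(I, Y) × I × X → F) (k : C(I, Y) × I × F → X),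
    ContinuousOn g {z | (z.1 ∈ U ∧ p z.2.2 = z.1 z.2.1) ∧ z.2.1 ≤ c} ∧
    ContinuousOn k {z | z.1 ∈ U ∧ z.2.1 ≤ c} ∧
    (∀ ω ∈ U, ∀ t ≤ c, ∀ v, p (k (ω, t, v)) = ω t ∧ g (ω, t, k (ω, t, v)) = v) ∧
    ∀ ω ∈ U, ∀ t ≤ c, ∀ x, p x = ω t → k (ω, t, g (ω, t, x)) = x

/-- Trivializing the map over the initial point of a path. -/
lemma PathTriv.zero {p : X → Y} (hp : LocTriv p F) (ω₀ : C(I, Y)) :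
    ∃ U, IsOpen U ∧ ω₀ ∈ U ∧ PathTriv p F U 0 := by
  obtain ⟨V, hV, hyV, a, b, ha, hb, h1, h2⟩ := hp (ω₀ 0)
  refine ⟨{ω | ω 0 ∈ V}, hV.preimage (continuous_eval_const 0), hyV, fun z => a z.2.2,
    fun z => b (z.1 z.2.1, z.2.2), ?_, ?_, ?_, ?_⟩
  · refine ha.comp (by fun_prop) ?_
    rintro ⟨ω, t, x⟩ ⟨⟨h, h'⟩, ht⟩
    obtain rfl : t = 0 := le_antisymm ht unitInterval.nonneg'
    simp only at h'
    simpa [h'] using h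
  · refine hb.comp (Continuous.continuousOn (by fun_prop)) ?_
    rintro ⟨ω, t, x⟩ ⟨h, ht⟩
    obtain rfl : t = 0 := le_antisymm ht unitInterval.nonneg'
    exact ⟨h, trivial⟩
  · rintro ω h t ht v
    obtain rfl : t = 0 := le_antisymm ht unitInterval.nonneg'
    exact h1 _ h v
  · rintro ω h t ht x hx
    obtain rfl : t = 0 := le_antisymm ht unitInterval.nonneg'
    simp only
    rw [← hx]; exact h2 x (by rw [hx]; exact h)

/-- A trivialization up to time `c` extends up to time `d` if the paths stay inside one trivializing
set between these times: it is continued by the local trivialization, matched at time `c`. -/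
lemma PathTriv.extend {p : X → Y} {U : Set C(I, Y)} {c d : I} (hcd : c ≤ d)
    (h : PathTriv p F U c) {V : Set Y} (hUV : ∀ ω ∈ U, ∀ t, c ≤ t → t ≤ d → ω t ∈ V)
    {a : X → F} {b : Y × F → X} (ha : ContinuousOn a (p ⁻¹' V))
    (hb : ContinuousOn b (V ×ˢ Set.univ))
    (h1 : ∀ y ∈ V, ∀ v, p (b (y, v)) = y ∧ a (b (y, v)) = v)
    (h2 : ∀ x, p x ∈ V → b (p x, a x) = x) : PathTriv p F U d := by
  obtain ⟨g, k, hg, hk, h3, h4⟩ := h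
  have hc : ∀ ω ∈ U, ω c ∈ V := fun ω hω => hUV ω hω c le_rfl hcd
  refine ⟨fun z => if z.2.1 ≤ c then g z else g (z.1, c, b (z.1 c, a z.2.2)),
    fun z => if z.2.1 ≤ c then k z else b (z.1 z.2.1, a (k (z.1, c, z.2.2))), ?_, ?_, ?_, ?_⟩
  · refine ContinuousOn.ite_le' (by fun_prop) (hg.mono ?_) ?_ ?_
    · rintro z ⟨⟨hz, _⟩, h⟩; exact ⟨hz, h⟩
    · have hax : ContinuousOn (fun z : C(I, Y) × I × X => a z.2.2)
          ({z | (z.1 ∈ U ∧ p z.2.2 = z.1 z.2.1) ∧ z.2.1 ≤ d} ∩ {z | c ≤ z.2.1}) := by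
        refine ha.comp (by fun_prop) ?_
        rintro ⟨ω, t, x⟩ ⟨⟨⟨hω, hx⟩, hd⟩, hct⟩
        change p x ∈ V
        simp only at hx
        rw [hx]; exact hUV ω hω t hct hd
      refine hg.comp (ContinuousOn.prodMk (by fun_prop) (ContinuousOn.prodMk (by fun_prop)
        (hb.comp (ContinuousOn.prodMk (by fun_prop) hax) ?_))) ?_
      · rintro ⟨ω, t, x⟩ ⟨⟨⟨hω, hx⟩, hd⟩, hct⟩
        exact ⟨hc ω hω, trivial⟩
      · rintro ⟨ω, t, x⟩ ⟨⟨⟨hω, hx⟩, hd⟩, hct⟩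
        exact ⟨⟨hω, (h1 _ (hc ω hω) _).1⟩, le_rfl⟩
    · rintro ⟨ω, t, x⟩ ⟨⟨hω, hx⟩, hd⟩ rfl
      simp only at hx ⊢
      rw [← hx, h2 x (by rw [hx]; exact hc ω hω)]
  · refine ContinuousOn.ite_le' (by fun_prop) (hk.mono ?_) ?_ ?_
    · rintro z ⟨⟨hz, _⟩, h⟩; exact ⟨hz, h⟩
    · have hkc : ContinuousOn (fun z : C(I, Y) × I × F => k (z.1, c, z.2.2))
          ({z | z.1 ∈ U ∧ z.2.1 ≤ d} ∩ {z | c ≤ z.2.1}) := by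
        refine hk.comp (by fun_prop) ?_
        rintro z ⟨⟨hω, hd⟩, hct⟩
        exact ⟨hω, le_rfl⟩
      refine hb.comp (ContinuousOn.prodMk (Continuous.continuousOn (by fun_prop))
        (ha.comp hkc ?_)) ?_
      · rintro ⟨ω, t, x⟩ ⟨⟨hω, hd⟩, hct⟩
        change p _ ∈ V
        rw [(h3 ω hω c le_rfl _).1]; exact hc ω hω
      · rintro ⟨ω, t, x⟩ ⟨⟨hω, hd⟩, hct⟩
        exact ⟨hUV ω hω t hct hd, trivial⟩
    · rintro ⟨ω, t, x⟩ ⟨hω, hd⟩ rfl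
      simp only
      have := (h3 ω hω t le_rfl x).1
      have h5 := h2 (k (ω, t, x)) (by rw [this]; exact hc ω hω)
      rw [this] at h5
      exact h5.symm
  · intro ω hω t ht v
    by_cases htc : t ≤ c
    · simp only [htc, if_true]; exact h3 ω hω t htc v
    · simp only [htc, if_false]
      have htV := hUV ω hω t (le_of_not_ge htc) ht
      refine ⟨(h1 _ htV _).1, ?_⟩
      rw [(h1 _ htV _).2]
      have := (h3 ω hω c le_rfl v)
      have h5 := h2 (k (ω, c, v)) (by rw [this.1]; exact hc ω hω)
      rw [this.1] at h5
      rw [h5, this.2]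
  · intro ω hω t ht x hx
    by_cases htc : t ≤ c
    · simp only [htc, if_true]; exact h4 ω hω t htc x hx
    · simp only [htc, if_false]
      have htV := hUV ω hω t (le_of_not_ge htc) ht
      have h5 := h1 (ω c) (hc ω hω) (a x)
      rw [h4 ω hω c le_rfl _ h5.1, h5.2, ← hx, h2 x (by rw [hx]; exact htV)]

/-- Every path has a neighbourhood in the space of paths over which the map is trivial along the
paths; the unit interval is cut into pieces, each of which the path maps to a trivializing set. -/
lemma PathTriv.exists {p : X → Y} (hp : LocTriv p F) (ω₀ : C(I, Y)) :
    ∃ U, IsOpen U ∧ ω₀ ∈ U ∧ PathTriv p F U 1 := by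
  choose V hV hyV a b ha hb h1 h2 using hp
  obtain ⟨t, t0, tm, ⟨N, hN⟩, ht⟩ := exists_monotone_Icc_subset_open_cover_unitInterval
    (c := fun y => ω₀ ⁻¹' V y) (fun y => (hV y).preimage ω₀.continuous)
    (fun s _ => Set.mem_iUnion.2 ⟨ω₀ s, hyV _⟩)
  have key : ∀ n, ∃ U, IsOpen U ∧ ω₀ ∈ U ∧ PathTriv p F U (t n) := by
    intro n
    induction n with
    | zero => rw [t0]; exact PathTriv.zero (fun y => ⟨V y, hV y, hyV y, a y, b y, ha y, hb y,
        h1 y, h2 y⟩) ω₀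
    | succ n ih =>
      obtain ⟨U, hU, hωU, h⟩ := ih
      obtain ⟨y, hy⟩ := ht n
      refine ⟨U ∩ {ω | Set.MapsTo ω (Set.Icc (t n) (t (n + 1))) (V y)},
        hU.inter (ContinuousMap.isOpen_setOfPred_mapsTo isCompact_Icc (hV y)), ⟨hωU, hy⟩, ?_⟩
      refine PathTriv.extend (U := U ∩ _) (c := t n) (tm (Nat.le_succ n)) ?_
        (fun ω hω s hs hs' => hω.2 ⟨hs, hs'⟩) (ha y) (hb y) (h1 y) (h2 y)
      obtain ⟨g, k, hg, hk, h3, h4⟩ := h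
      exact ⟨g, k, hg.mono fun z hz => ⟨⟨hz.1.1.1, hz.1.2⟩, hz.2⟩, hk.mono fun z hz =>
        ⟨hz.1.1, hz.2⟩, fun ω hω => h3 ω hω.1, fun ω hω => h4 ω hω.1⟩
  have := key N
  rwa [hN N le_rfl] at this

end bundle

end

/-! ### Connections on locally trivial maps -/

section

section connection
variable {X Y F : Type} [TopologicalSpace X] [TopologicalSpace F]

/-- A path-lifting function for `p`, depending continuously on all of its arguments: `T ω t t' x`
moves the point `x` over `ω t` to a point over `ω t'`. -/
structure Connection [TopologicalSpace Y] (p : X → Y) where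
  /-- The transport. -/
  T : C(I, Y) → I → I → X → X
  /-- Points over `ω t` are moved to points over `ω t'`. -/
  lies : ∀ ω t t' x, p x = ω t → p (T ω t t' x) = ω t'
  self : ∀ ω t x, p x = ω t → T ω t t x = x
  /-- Joint continuity, including in the path. -/
  cont : ContinuousOn (fun z : C(I, Y) × I × I × X => T z.1 z.2.1 z.2.2.1 z.2.2.2)
    {z | p z.2.2.2 = z.1 z.2.1}

lemma Connection.continuous [TopologicalSpace Y] {p : X → Y} (c : Connection p) {Z : Type}
    [TopologicalSpace Z] {ω : Z → C(I, Y)} {t t' : Z → I} {x : Z → X} (hω : Continuous ω)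
    (ht : Continuous t) (ht' : Continuous t') (hx : Continuous x)
    (h : ∀ z, p (x z) = ω z (t z)) : Continuous fun z => c.T (ω z) (t z) (t' z) (x z) :=
  c.cont.comp_continuous (f := fun z => (ω z, t z, t' z, x z)) (by fun_prop) h

open Classical in
/-- The stages of the construction of the transport from local trivializations over the sets
`U n`: at stage `n` the point has moved from time `t` to time `θ n`. -/
def transportStage {B : Type} (U : ℕ → Set B) (θ : ℕ → B × I × I × X → I)
    (g : ℕ → B × I × X → F) (k : ℕ → B × I × F → X) : ℕ → B × I × I × X → X
  | 0, z => z.2.2.2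
  | n + 1, z => if z.1 ∈ U n then
      k n (z.1, θ (n + 1) z, g n (z.1, θ n z, transportStage U θ g k n z))
      else transportStage U θ g k n z

/-- A locally trivial map to a metrizable, second countable space has a connection. A countable
partition of unity on the space of paths, subordinate to open sets of paths as in `PathTriv.exists`,
splits the motion from time `t` to time `t'` into stages `θ n`, the `n`-th of which uses the `n`-th
trivialization only. Near a given path only finitely many stages move the point. -/
theorem LocTriv.nonempty_connection [MetricSpace Y] [SecondCountableTopology Y] {p : X → Y}
    (hp : LocTriv p F) : Nonempty (Connection p) := by
  rcases isEmpty_or_nonempty C(I, Y) with hB | hB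
  · exact ⟨⟨fun _ _ _ x => x, fun ω => hB.elim ω, fun ω => hB.elim ω, fun z => hB.elim z.1⟩⟩
  choose V hV hωV hT using PathTriv.exists hp
  obtain ⟨S, hS, hSV⟩ := TopologicalSpace.countable_cover_nhds
    (fun ω => (hV ω).mem_nhds (hωV ω))
  have hSne : S.Nonempty := by
    obtain ⟨ω⟩ := hB
    have : ω ∈ ⋃ x ∈ S, V x := hSV ▸ Set.mem_univ _
    obtain ⟨x, hx, _⟩ := Set.mem_iUnion₂.1 this
    exact ⟨x, hx⟩
  obtain ⟨e, rfl⟩ := hS.exists_eq_range hSne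
  have hcov : ∀ ω, ∃ n, ω ∈ V (e n) := fun ω => by
    have : ω ∈ ⋃ x ∈ Set.range e, V x := hSV ▸ Set.mem_univ _
    simpa using this
  choose g k hg hk h1 h2 using fun n => hT (e n)
  obtain ⟨ρ, hρ⟩ := PartitionOfUnity.exists_isSubordinate (isClosed_univ (X := C(I, Y)))
    (fun n => V (e n)) (fun n => hV _) (fun ω _ => Set.mem_iUnion.2 (hcov ω))
  -- Partial sums of the partition of unity; they eventually reach `1`, when `θ n` reaches `t'`.
  let s : ℕ → C(I, Y) → ℝ := fun n ω => ∑ i ∈ Finset.range n, ρ i ω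
  let θ : ℕ → C(I, Y) × I × I × X → I := fun n z =>
    Set.projIcc 0 1 zero_le_one ((z.2.1 : ℝ) + ((z.2.2.1 : ℝ) - z.2.1) * s n z.1)
  have hs : ∀ n, Continuous (s n) := fun n => continuous_finsetSum _ fun i _ => (ρ i).continuous
  have hθ : ∀ n, Continuous (θ n) := fun n => by
    have := hs n
    refine continuous_projIcc.comp ?_
    fun_prop
  have hθs : ∀ n z, ρ n z.1 = 0 → θ (n + 1) z = θ n z := fun n z h => by
    simp only [θ, s, Finset.sum_range_succ, h, add_zero]
  have hθ0 : ∀ z, θ 0 z = z.2.1 := fun z => by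
    simp only [θ, s, Finset.range_zero, Finset.sum_empty, mul_zero, add_zero]
    exact Set.projIcc_val _ _
  have hθt : ∀ n z, z.2.1 = z.2.2.1 → θ n z = z.2.1 := fun n z h => by
    simp only [θ, h, sub_self, zero_mul, add_zero]
    exact Set.projIcc_val _ _
  have hθ1 : ∀ n z, s n z.1 = 1 → θ n z = z.2.2.1 := fun n z h => by
    simp only [θ, h, mul_one, add_sub_cancel]
    exact Set.projIcc_val _ _
  clear_value θ
  let τ := transportStage (fun n => V (e n)) θ g k
  have τs : ∀ n z, z.1 ∈ V (e n) → τ (n + 1) z =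
      k n (z.1, θ (n + 1) z, g n (z.1, θ n z, τ n z)) := fun n z h => if_pos h
  have τs' : ∀ n z, z.1 ∉ V (e n) → τ (n + 1) z = τ n z := fun n z h => if_neg h
  have τ0 : ∀ z, τ 0 z = z.2.2.2 := fun _ => rfl
  clear_value τ
  have hτ : ∀ n z, p z.2.2.2 = z.1 z.2.1 → p (τ n z) = z.1 (θ n z) := by
    intro n z hz
    induction n with
    | zero => rw [hθ0, τ0]; exact hz
    | succ n ih =>
      by_cases h : z.1 ∈ V (e n)
      · rw [τs n z h]; exact (h1 n _ h _ le_one' _).1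
      · have h0 : ρ n z.1 = 0 := by
          by_contra hne
          exact h (hρ n (subset_tsupport _ hne))
        rw [τs' n z h, hθs n z h0, ih]
  have hst : ∀ n z, p z.2.2.2 = z.1 z.2.1 → ρ n z.1 = 0 → τ (n + 1) z = τ n z := by
    intro n z hz h0
    by_cases h : z.1 ∈ V (e n)
    · rw [τs n z h, hθs n z h0]
      exact h2 n _ h _ le_one' _ (hτ n z hz)
    · exact τs' n z h
  have hself : ∀ n z, p z.2.2.2 = z.1 z.2.1 → z.2.1 = z.2.2.1 → τ n z = z.2.2.2 := by
    intro n z hz h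
    induction n with
    | zero => exact τ0 z
    | succ n ih =>
      by_cases hVn : z.1 ∈ V (e n)
      · rw [τs n z hVn, hθt _ z h, hθt _ z h, ih]
        exact h2 n _ hVn _ le_one' _ hz
      · rw [τs' n z hVn, ih]
  -- Continuity near a path which is not in `V (e n)` holds as stage `n` is trivial off the support
  -- of `ρ n`.
  have hcont : ∀ n, ContinuousOn (τ n) {z | p z.2.2.2 = z.1 z.2.1} := by
    intro n
    induction n with
    | zero =>
      rw [funext τ0]
      exact Continuous.continuousOn (by fun_prop)
    | succ n ih =>
      intro z hz
      by_cases h : z.1 ∈ V (e n)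
      · have hO : {z : C(I, Y) × I × I × X | z.1 ∈ V (e n)} ∈ nhds z :=
          ((hV (e n)).preimage continuous_fst).mem_nhds h
        rw [← continuousWithinAt_inter hO]
        have key : ContinuousOn (fun z : C(I, Y) × I × I × X =>
            k n (z.1, θ (n + 1) z, g n (z.1, θ n z, τ n z)))
            ({z | p z.2.2.2 = z.1 z.2.1} ∩ {z | z.1 ∈ V (e n)}) := by
          have h3 := hθ n
          have h4 := hθ (n + 1)
          have hgn : ContinuousOn (fun z : C(I, Y) × I × I × X => g n (z.1, θ n z, τ n z))
              ({z | p z.2.2.2 = z.1 z.2.1} ∩ {z | z.1 ∈ V (e n)}) :=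
            (hg n).comp (f := fun z : C(I, Y) × I × I × X => (z.1, θ n z, τ n z))
              (continuousOn_fst.prodMk (h3.continuousOn.prodMk (ih.mono Set.inter_subset_left)))
              (fun z hz => ⟨⟨hz.2, hτ n z hz.1⟩, le_one'⟩)
          exact (hk n).comp (f := fun z : C(I, Y) × I × I × X =>
            (z.1, θ (n + 1) z, g n (z.1, θ n z, τ n z)))
            (continuousOn_fst.prodMk (h4.continuousOn.prodMk hgn)) (fun z hz => ⟨hz.2, le_one'⟩)
        exact (key z ⟨hz, h⟩).congr (fun z hz => τs n z hz.2) (τs n z h)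
      · have hO : {z : C(I, Y) × I × I × X | z.1 ∉ tsupport (ρ n)} ∈ nhds z :=
          ((isClosed_tsupport _).isOpen_compl.preimage continuous_fst).mem_nhds
            (fun h' => h (hρ n h'))
        rw [← continuousWithinAt_inter hO]
        refine ((ih z hz).mono Set.inter_subset_left).congr (fun z hz => hst n z hz.1 ?_)
          (τs' n z h)
        exact image_eq_zero_of_notMem_tsupport hz.2
  have hloc : ∀ ω, ∃ N, ∃ O ∈ nhds ω, ∀ n ≥ N, ∀ ω' ∈ O, ρ n ω' = 0 := by
    intro ω
    obtain ⟨O, hO, hfin⟩ := ρ.locallyFinite ω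
    obtain ⟨N, hN⟩ := hfin.bddAbove
    refine ⟨N + 1, O, hO, fun n hn ω' hω' => ?_⟩
    by_contra hne
    have := hN (show n ∈ _ from ⟨ω', hne, hω'⟩)
    omega
  choose N O hO hN using hloc
  have hstab : ∀ ω z, z.1 ∈ O ω → p z.2.2.2 = z.1 z.2.1 → ∀ n ≥ N ω, τ n z = τ (N ω) z := by
    intro ω z hzO hz n hn
    induction n, hn using Nat.le_induction with
    | base => rfl
    | succ n hn ih => rw [hst n z hz (hN ω n hn _ hzO), ih]
  have hs1 : ∀ ω, s (N ω) ω = 1 := by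
    intro ω
    rw [← ρ.sum_eq_one (Set.mem_univ ω)]
    refine (finsum_eq_sum_of_support_subset _ fun i hi => ?_).symm
    by_contra h
    exact hi (hN ω i (by simpa using h) ω (mem_of_mem_nhds (hO ω)))
  refine ⟨⟨fun ω t t' x => τ (N ω) (ω, t, t', x), ?_, ?_, ?_⟩⟩
  · intro ω t t' x hx
    rw [hτ _ _ hx, hθ1 _ _ (hs1 ω)]
  · intro ω t x hx
    exact hself _ _ hx rfl
  · intro z hz
    have hO' : {z' : C(I, Y) × I × I × X | z'.1 ∈ O z.1} ∈ nhds z :=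
      continuous_fst.continuousAt.preimage_mem_nhds (hO z.1)
    rw [← continuousWithinAt_inter hO']
    refine ((hcont (N z.1) z hz).mono Set.inter_subset_left).congr (fun z' hz' => ?_) rfl
    have e1 := hstab z.1 z' hz'.2 hz'.1 (max (N z.1) (N z'.1)) (le_max_left _ _)
    have e2 := hstab z'.1 z' (mem_of_mem_nhds (hO _)) hz'.1 (max (N z.1) (N z'.1))
      (le_max_right _ _)
    exact e2.symm.trans e1

end connection

end

/-! ### Pullbacks of maps with a connection -/

section

lemma ContinuousMap.Homotopic.of_fun {X Z : Type} [TopologicalSpace X] [TopologicalSpace Z]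
    {f g : C(X, Z)} (H : X × I → Z) (hH : Continuous H) (h0 : ∀ x, H (x, 0) = f x)
    (h1 : ∀ x, H (x, 1) = g x) : f.Homotopic g :=
  ⟨⟨⟨fun z => H (z.2, z.1), by fun_prop⟩, h0, h1⟩⟩

/-- A homotopy, as a continuous family of paths. -/
lemma ContinuousMap.Homotopic.exists_paths {X Z : Type} [TopologicalSpace X] [TopologicalSpace Z]
    {f g : C(X, Z)} (h : f.Homotopic g) :
    ∃ D : C(X, C(I, Z)), ∀ x, D x 0 = f x ∧ D x 1 = g x := by
  obtain ⟨H⟩ := h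
  refine ⟨(H.toContinuousMap.comp (ContinuousMap.prodSwap)).curry, fun x => ⟨?_, ?_⟩⟩
  · exact H.apply_zero x
  · exact H.apply_one x

/-- A map with a left and a right homotopy inverse is a homotopy equivalence. -/
lemma nonempty_homotopyEquiv_of_left_right {X Z : Type} [TopologicalSpace X] [TopologicalSpace Z]
    (f : C(X, Z)) (l r : C(Z, X)) (hl : (l.comp f).Homotopic (.id X))
    (hr : (f.comp r).Homotopic (.id Z)) : Nonempty (ContinuousMap.HomotopyEquiv X Z) := by
  refine ⟨⟨f, r, ?_, hr⟩⟩
  have h1 : (r.comp f).Homotopic ((l.comp f).comp (r.comp f)) :=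
    (hl.comp (.refl (r.comp f))).symm
  have h2 : ((l.comp f).comp (r.comp f)).Homotopic (l.comp f) :=
    ContinuousMap.Homotopic.comp (.refl l) (hr.comp (.refl f))
  exact h1.trans (h2.trans hl)

section
variable {X Y : Type} [TopologicalSpace X] [TopologicalSpace Y]

/-- The total space of a map with a connection has no essential higher spheres if the base and the
fibres have none: a null-homotopy in the base lifts, by transport along the paths of its points, to
a homotopy from the given sphere to a sphere in a fibre. -/
lemma SphNull.of_connection {p : X → Y} (hp : Continuous p) (c : Connection p) (hY : SphNull Y)
    (hF : ∀ y, SphNull ↥(p ⁻¹' {y})) : SphNull X := by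
  intro n hn f
  obtain ⟨y, hy⟩ := hY n hn ((⟨p, hp⟩ : C(X, Y)).comp f)
  obtain ⟨D, hD⟩ := hy.exists_paths
  have h0 : ∀ s, p (f s) = D s 0 := fun s => (hD s).1.symm
  have hc : Continuous fun z : Sph n × I => c.T (D z.1) 0 z.2 (f z.1) :=
    c.continuous (by fun_prop) (by fun_prop) (by fun_prop) (by fun_prop) fun z => h0 z.1
  have hm : ∀ s, c.T (D s) 0 1 (f s) ∈ p ⁻¹' {y} := fun s => by
    rw [Set.mem_preimage, c.lies _ _ _ _ (h0 s), (hD s).2]; rfl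
  let f' : C(Sph n, ↥(p ⁻¹' {y})) := ⟨fun s => ⟨c.T (D s) 0 1 (f s), hm s⟩,
    Continuous.subtype_mk (hc.comp (by fun_prop : Continuous fun s : Sph n => (s, (1 : I)))) hm⟩
  obtain ⟨x, hx⟩ := hF y n hn f'
  refine ⟨x, ContinuousMap.Homotopic.trans (g := (⟨Subtype.val, continuous_subtype_val⟩ :
    C(↥(p ⁻¹' {y}), X)).comp f') ?_ ?_⟩
  · exact .of_fun _ hc (fun s => c.self _ _ _ (h0 s)) fun s => rfl
  · exact ContinuousMap.Homotopic.comp (.refl _) hx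

/-- The pullback of two maps, as a subspace of the product. -/
abbrev PB {W X Y : Type} (f : W → Y) (p : X → Y) : Type := {z : W × X // f z.1 = p z.2}

/-- The pullback of `p` along a homotopy equivalence of the base is homotopy equivalent to the
total space. -/
theorem Connection.pullback {W : Type} [TopologicalSpace W] {p : X → Y} (hp : Continuous p)
    (c : Connection p) (e : ContinuousMap.HomotopyEquiv W Y) :
    Nonempty (ContinuousMap.HomotopyEquiv (PB e p) X) := by
  obtain ⟨C, hC⟩ := e.left_inv.exists_paths
  obtain ⟨D, hD⟩ := e.right_inv.exists_paths
  have hw : Continuous fun z : PB e p => z.1.1 := by fun_prop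
  have hx : Continuous fun z : PB e p => z.1.2 := by fun_prop
  have he : Continuous (e : W → Y) := e.toFun.continuous
  have hfC : Continuous fun w => (e.toFun.comp (C w) : C(I, Y)) := by fun_prop
  have hfC0 : ∀ w, e.toFun (C w 0) = D (e w) 0 := fun w => by
    rw [(hC w).1, (hD (e w)).1]; rfl
  have hfC1 : ∀ w, e.toFun (C w 1) = e w := fun w => by rw [(hC w).2]; rfl
  have hD1 : ∀ y, D y 1 = y := fun y => (hD y).2
  have hD0 : ∀ y, e (e.invFun y) = D y 0 := fun y => (hD y).1.symm
  -- the right inverse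
  have hψ1 : Continuous fun z : X × I => c.T (D (p z.1)) 1 z.2 z.1 :=
    c.continuous (by fun_prop) (by fun_prop) (by fun_prop) (by fun_prop) fun z => (hD1 _).symm
  have hψ2 : Continuous fun x : X => c.T (D (p x)) 1 0 x :=
    hψ1.comp (by fun_prop : Continuous fun x : X => (x, (0 : I)))
  have hψ : ∀ x, e (e.invFun (p x)) = p (c.T (D (p x)) 1 0 x) := fun x => by
    rw [c.lies _ _ _ _ (hD1 _).symm]; exact hD0 _
  let ψ : C(X, PB e p) := ⟨fun x => ⟨(e.invFun (p x), _), hψ x⟩,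
    Continuous.subtype_mk (((map_continuous e.invFun).comp hp).prodMk hψ2) hψ⟩
  let π : C(PB e p, X) := ⟨fun z => z.1.2, hx⟩
  -- the transports `χ` and its homotopy inverse `χ'`
  have h1 : ∀ z : PB e p, p (c.T (D (e z.1.1)) 1 0 z.1.2) = D (e z.1.1) 0 := fun z =>
    c.lies _ _ _ _ (by rw [hD1]; exact z.2.symm)
  have h1c : Continuous fun z : PB e p => c.T (D (e z.1.1)) 1 0 z.1.2 :=
    c.continuous (by fun_prop) (by fun_prop) (by fun_prop) (by fun_prop)
      fun z => by rw [hD1]; exact z.2.symm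
  have h2 : Continuous fun z : PB e p × I => c.T (e.toFun.comp (C z.1.1.1)) 0 z.2
      (c.T (D (e z.1.1.1)) 1 0 z.1.1.2) :=
    c.continuous (by fun_prop) (by fun_prop) (by fun_prop) (h1c.comp continuous_fst)
      fun z => (h1 z.1).trans (hfC0 _).symm
  have h2p : ∀ (z : PB e p) t, p (c.T (e.toFun.comp (C z.1.1)) 0 t
      (c.T (D (e z.1.1)) 1 0 z.1.2)) = e.toFun (C z.1.1 t) := fun z t =>
    c.lies _ _ _ _ ((h1 z).trans (hfC0 _).symm)
  have h3p : ∀ z : PB e p, p (c.T (e.toFun.comp (C z.1.1)) 1 0 z.1.2) = D (e z.1.1) 0 := fun z => by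
    rw [c.lies _ _ _ _ (z.2.symm.trans (hfC1 _).symm)]; exact hfC0 _
  have h3 : Continuous fun z : PB e p => c.T (e.toFun.comp (C z.1.1)) 1 0 z.1.2 :=
    c.continuous (by fun_prop) (by fun_prop) (by fun_prop) (by fun_prop)
      fun z => (z.2.symm.trans (hfC1 _).symm)
  have h4 : Continuous fun z : PB e p => c.T (D (e z.1.1)) 0 1
      (c.T (e.toFun.comp (C z.1.1)) 1 0 z.1.2) :=
    c.continuous (by fun_prop) (by fun_prop) (by fun_prop) h3 h3p
  have hχ : ∀ z : PB e p, e z.1.1 = p (c.T (e.toFun.comp (C z.1.1)) 0 1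
      (c.T (D (e z.1.1)) 1 0 z.1.2)) := fun z => by rw [h2p]; exact (hfC1 _).symm
  let χ : C(PB e p, PB e p) := ⟨fun z => ⟨(z.1.1, _), hχ z⟩, Continuous.subtype_mk
    (hw.prodMk (h2.comp (by fun_prop : Continuous fun z : PB e p => (z, (1 : I))))) hχ⟩
  have hχ' : ∀ z : PB e p, e z.1.1 = p (c.T (D (e z.1.1)) 0 1
      (c.T (e.toFun.comp (C z.1.1)) 1 0 z.1.2)) := fun z => by
    rw [c.lies _ _ _ _ (h3p z)]; exact (hD1 _).symm
  let χ' : C(PB e p, PB e p) := ⟨fun z => ⟨(z.1.1, _), hχ' z⟩,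
    Continuous.subtype_mk (hw.prodMk h4) hχ'⟩
  refine nonempty_homotopyEquiv_of_left_right π (χ'.comp ψ) ψ ?_ ?_
  · have a1 : (ψ.comp π).Homotopic χ := by
      refine .of_fun (fun z => ⟨(C z.1.1.1 z.2, c.T (e.toFun.comp (C z.1.1.1)) 0 z.2
        (c.T (D (e z.1.1.1)) 1 0 z.1.1.2)), (h2p _ _).symm⟩)
        (Continuous.subtype_mk (Continuous.prodMk (by fun_prop) h2) _) ?_ ?_
      · intro z
        refine Subtype.ext (Prod.ext ?_ ?_)
        · change C z.1.1 0 = e.invFun (p z.1.2)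
          rw [(hC z.1.1).1, ← z.2]; rfl
        · change c.T _ 0 0 _ = c.T (D (p z.1.2)) 1 0 z.1.2
          rw [c.self _ _ _ ((h1 z).trans (hfC0 _).symm), z.2]
      · intro z
        refine Subtype.ext (Prod.ext ?_ rfl)
        exact (hC z.1.1).2
    -- In between is the transport `μ` along `D` back and forth, without the detour along `C`.
    have a2 : (χ'.comp χ).Homotopic (.id _) := by
      have b0 : Continuous fun z : PB e p × I => c.T (e.toFun.comp (C z.1.1.1)) z.2 0
          (c.T (e.toFun.comp (C z.1.1.1)) 0 z.2 (c.T (D (e z.1.1.1)) 1 0 z.1.1.2)) :=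
        c.continuous (by fun_prop) (by fun_prop) (by fun_prop) h2 fun z => h2p _ _
      have b0p : ∀ z : PB e p × I, p (c.T (e.toFun.comp (C z.1.1.1)) z.2 0
          (c.T (e.toFun.comp (C z.1.1.1)) 0 z.2 (c.T (D (e z.1.1.1)) 1 0 z.1.1.2))) =
          D (e z.1.1.1) 0 := fun z => by
        rw [c.lies _ _ _ _ (h2p _ _)]; exact hfC0 _
      have b1 : Continuous fun z : PB e p × I => c.T (D (e z.1.1.1)) 0 1 (c.T (e.toFun.comp (C z.1.1.1))
          z.2 0 (c.T (e.toFun.comp (C z.1.1.1)) 0 z.2 (c.T (D (e z.1.1.1)) 1 0 z.1.1.2))) :=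
        c.continuous (by fun_prop) (by fun_prop) (by fun_prop) b0 b0p
      have d0p : ∀ z : PB e p × I, p (c.T (D (e z.1.1.1)) 1 z.2 z.1.1.2) = D (e z.1.1.1) z.2 :=
        fun z => c.lies _ _ _ _ (by rw [hD1]; exact z.1.2.symm)
      have d0 : Continuous fun z : PB e p × I => c.T (D (e z.1.1.1)) 1 z.2 z.1.1.2 :=
        c.continuous (by fun_prop) (by fun_prop) (by fun_prop) (by fun_prop)
          fun z => by rw [hD1]; exact z.1.2.symm
      have d1 : Continuous fun z : PB e p × I => c.T (D (e z.1.1.1)) z.2 1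
          (c.T (D (e z.1.1.1)) 1 z.2 z.1.1.2) :=
        c.continuous (by fun_prop) (by fun_prop) (by fun_prop) d0 d0p
      have hμ : ∀ z : PB e p, e z.1.1 = p (c.T (D (e z.1.1)) 0 1
          (c.T (D (e z.1.1)) 1 0 z.1.2)) := fun z => by
        rw [c.lies _ _ _ _ (h1 z)]; exact (hD1 _).symm
      let μ : C(PB e p, PB e p) := ⟨fun z => ⟨(z.1.1, _), hμ z⟩, Continuous.subtype_mk
        (hw.prodMk (d1.comp (by fun_prop : Continuous fun z : PB e p => (z, (0 : I))))) hμ⟩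
      refine ContinuousMap.Homotopic.trans (g := μ) (ContinuousMap.Homotopic.symm ?_) ?_
      · have b2 : ∀ z : PB e p × I, e z.1.1.1 = p (c.T (D (e z.1.1.1)) 0 1
            (c.T (e.toFun.comp (C z.1.1.1)) z.2 0 (c.T (e.toFun.comp (C z.1.1.1)) 0 z.2
              (c.T (D (e z.1.1.1)) 1 0 z.1.1.2)))) := fun z => by
          rw [c.lies _ _ _ _ (b0p z)]; exact (hD1 _).symm
        refine .of_fun (fun z => ⟨(z.1.1.1, _), b2 z⟩)
          (((hw.comp continuous_fst).prodMk b1).subtype_mk b2) ?_ ?_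
        · intro z
          refine Subtype.ext (Prod.ext rfl ?_)
          change c.T _ 0 1 (c.T _ 0 0 (c.T _ 0 0 _)) = c.T _ 0 1 _
          have := c.self (e.toFun.comp (C z.1.1)) 0 _ ((h1 z).trans (hfC0 _).symm)
          rw [this, this]
        · intro z
          rfl
      · have d2 : ∀ z : PB e p × I, e z.1.1.1 = p (c.T (D (e z.1.1.1)) z.2 1
            (c.T (D (e z.1.1.1)) 1 z.2 z.1.1.2)) := fun z => by
          rw [c.lies _ _ _ _ (d0p z)]; exact (hD1 _).symm
        refine .of_fun (fun z => ⟨(z.1.1.1, _), d2 z⟩)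
          (((hw.comp continuous_fst).prodMk d1).subtype_mk d2) ?_ ?_
        · intro z; rfl
        · intro z
          refine Subtype.ext (Prod.ext rfl ?_)
          change c.T _ 1 1 (c.T _ 1 1 _) = z.1.2
          have := c.self (D (e z.1.1)) 1 z.1.2 (by rw [hD1]; exact z.2.symm)
          rw [this, this]
    exact (ContinuousMap.Homotopic.comp (.refl χ') a1).trans a2
  · exact .of_fun _ hψ1 (fun x => rfl) (fun x => c.self _ _ _ (hD1 _).symm)

end

end

/-! ### Mapping tori -/

section

section torus
variable {X Y F F₀ : Type} [TopologicalSpace X] [TopologicalSpace Y] [TopologicalSpace F]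
  [TopologicalSpace F₀]

/-- The pullback of a locally trivial map along a path is a product. -/
lemma LocTriv.exists_path_triv {p : X → Y} (hp : LocTriv p F) {y₀ : Y}
    (e : F₀ ≃ₜ ↥(p ⁻¹' {y₀})) (ω : C(I, Y)) (hω : ω 0 = y₀) :
    ∃ (Θ : C(F₀ × I, X)) (Ξ : C({z : I × X // p z.2 = ω z.1}, F₀)),
      (∀ v, Θ (v, 0) = e v) ∧ (∀ z, p (Θ z) = ω z.2) ∧
      (∀ v t h, Ξ ⟨(t, Θ (v, t)), h⟩ = v) ∧ ∀ z, Θ (Ξ z, z.1.1) = z.1.2 := by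
  obtain ⟨U, -, hωU, g, k, hg, hk, h1, h2⟩ := PathTriv.exists hp ω
  have he : ∀ v, p (e v) = ω 0 := fun v => (e v).2.trans hω.symm
  have hΞ : ∀ z : {z : I × X // p z.2 = ω z.1}, k (ω, 0, g (ω, z.1)) ∈ p ⁻¹' {y₀} := fun z => by
    rw [Set.mem_preimage, (h1 ω hωU 0 le_one' _).1, hω]; rfl
  have hg0 : Continuous fun v : F₀ => g (ω, 0, (e v : X)) :=
    hg.comp_continuous (f := fun v : F₀ => (ω, (0 : I), (e v : X))) (by fun_prop)
      fun v => ⟨⟨hωU, he v⟩, le_one'⟩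
  have hg1 : Continuous fun z : {z : I × X // p z.2 = ω z.1} => g (ω, z.1) :=
    hg.comp_continuous (f := fun z : {z : I × X // p z.2 = ω z.1} => (ω, z.1)) (by fun_prop)
      fun z => ⟨⟨hωU, z.2⟩, le_one'⟩
  have hk1 : Continuous fun z : {z : I × X // p z.2 = ω z.1} => k (ω, 0, g (ω, z.1)) :=
    hk.comp_continuous (f := fun z : {z : I × X // p z.2 = ω z.1} => (ω, 0, g (ω, z.1)))
      (continuous_const.prodMk (continuous_const.prodMk hg1)) fun z => ⟨hωU, le_one'⟩
  have hk2 : Continuous fun z : F₀ × I => k (ω, z.2, g (ω, 0, (e z.1 : X))) :=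
    hk.comp_continuous (f := fun z : F₀ × I => (ω, z.2, g (ω, 0, (e z.1 : X))))
      (continuous_const.prodMk (continuous_snd.prodMk (hg0.comp continuous_fst)))
      fun z => ⟨hωU, le_one'⟩
  refine ⟨⟨_, hk2⟩, ⟨fun z => e.symm ⟨_, hΞ z⟩, e.symm.continuous.comp (hk1.subtype_mk hΞ)⟩,
    fun v => h2 ω hωU 0 le_one' _ (he v), fun z => (h1 ω hωU _ le_one' _).1, fun v t h => ?_,
    fun z => ?_⟩
  · change e.symm _ = v
    rw [e.symm_apply_eq]
    refine Subtype.ext ?_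
    change k (ω, 0, g (ω, t, k (ω, t, g (ω, 0, (e v : X))))) = e v
    rw [(h1 ω hωU t le_one' _).2, h2 ω hωU 0 le_one' _ (he v)]
  · change k (ω, z.1.1, g (ω, 0, (e (e.symm _) : X))) = _
    rw [e.apply_symm_apply]
    change k (ω, z.1.1, g (ω, 0, k (ω, 0, g (ω, z.1)))) = _
    rw [(h1 ω hωU 0 le_one' _).2]
    exact h2 ω hωU _ le_one' _ z.2

instance {α : Type} [Finite α] : CompactSpace (WedgeGraph α) :=
  inferInstanceAs (CompactSpace (Quot _))

lemma WedgeGraph.ind' {α : Type} {q : WedgeGraph α → Prop} (h0 : q (WedgeGraph.pt α))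
    (h1 : ∀ a t, q (WedgeGraph.loop a t)) (x : WedgeGraph α) : q x := by
  rcases x with ⟨⟨a, t⟩ | ⟨⟩⟩
  · exact h1 a t
  · exact h0

/-- The circle indexed by `a` as a loop in `ℂ`, the other circles being collapsed. -/
def WedgeGraph.coord {α : Type} [DecidableEq α] (a : α) : WedgeGraph α → ℂ :=
  Quot.lift (Sum.elim (fun z => if z.1 = a then
    Complex.exp (2 * Real.pi * Complex.I * (z.2 : ℝ)) - 1 else 0) fun _ => 0) (by
    rintro _ _ (b | b)
    · simp
    · simp [Complex.exp_two_pi_mul_I])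

/-- The maps `WedgeGraph.coord` separate the points. -/
instance {α : Type} : T2Space (WedgeGraph α) := by
  classical
  refine T2Space.of_injective_continuous (f := fun (x : WedgeGraph α) (a : α) => WedgeGraph.coord a x) ?_ ?_
  · intro x y hxy
    have key : ∀ {t : I} , t ≠ 0 → t ≠ 1 →
        Complex.exp (2 * Real.pi * Complex.I * (t : ℝ)) - 1 ≠ 0 := by
      intro t h0 h1 h
      rw [sub_eq_zero, Complex.exp_eq_one_iff] at h
      obtain ⟨n, hn⟩ := h
      rw [mul_comm (n : ℂ)] at hn
      have h' := mul_left_cancel₀ (by simp [Real.pi_ne_zero]) hn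
      have h'' : (t : ℝ) = n := by exact_mod_cast h'
      have a0 : (0 : ℝ) < t := lt_of_le_of_ne t.2.1 (fun h => h0 (Subtype.ext h.symm))
      have a1 : (t : ℝ) < 1 := lt_of_le_of_ne t.2.2 (fun h => h1 (Subtype.ext h))
      rw [h''] at a0 a1
      norm_cast at a0 a1
      omega
    have hx : ∀ x : WedgeGraph α, x = WedgeGraph.pt α ∨ ∃ a t, t ≠ 0 ∧ t ≠ 1 ∧
        x = WedgeGraph.loop a t := by
      refine WedgeGraph.ind' (Or.inl rfl) fun a t => ?_
      by_cases h0 : t = 0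
      · left; rw [h0]; exact (WedgeGraph.loop a).source
      by_cases h1 : t = 1
      · left; rw [h1]; exact (WedgeGraph.loop a).target
      exact Or.inr ⟨a, t, h0, h1, rfl⟩
    have c1 : ∀ (a b : α) (t : I), WedgeGraph.coord a (WedgeGraph.loop b t) = if b = a then
      Complex.exp (2 * Real.pi * Complex.I * (t : ℝ)) - 1 else 0 := fun _ _ _ => rfl
    have c0 : ∀ a : α, WedgeGraph.coord a (WedgeGraph.pt α) = 0 := fun _ => rfl
    rcases hx x with rfl | ⟨a, t, h0, h1, rfl⟩ <;> rcases hx y with rfl | ⟨b, s, h0', h1', rfl⟩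
    · rfl
    · have := congrFun hxy b
      simp only [c0, c1, if_true] at this
      exact absurd this.symm (key h0' h1')
    · have := congrFun hxy a
      simp only [c0, c1, if_true] at this
      exact absurd this (key h0 h1)
    · have h := congrFun hxy a
      simp only [c1, if_true] at h
      by_cases hba : b = a
      · subst hba
        simp only [if_true, sub_left_inj] at h
        rw [Complex.exp_eq_exp_iff_exists_int] at h
        obtain ⟨n, hn⟩ := h
        have h' : (2 * Real.pi * Complex.I) * ((t : ℝ) : ℂ) =
          (2 * Real.pi * Complex.I) * ((s : ℝ) + n) := by rw [hn]; ring
        have h'' := mul_left_cancel₀ (by simp [Real.pi_ne_zero]) h'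
        have h3 : (t : ℝ) = s + n := by exact_mod_cast h''
        have a0 : (0 : ℝ) < t := lt_of_le_of_ne t.2.1 (fun h => h0 (Subtype.ext h.symm))
        have a1 : (t : ℝ) < 1 := lt_of_le_of_ne t.2.2 (fun h => h1 (Subtype.ext h))
        have b0 : (0 : ℝ) < s := lt_of_le_of_ne s.2.1 (fun h => h0' (Subtype.ext h.symm))
        have b1 : (s : ℝ) < 1 := lt_of_le_of_ne s.2.2 (fun h => h1' (Subtype.ext h))
        have n0 : (-1 : ℝ) < n := by linarith
        have n1 : (n : ℝ) < 1 := by linarith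
        norm_cast at n0 n1
        obtain rfl : n = 0 := by
          have : -1 < n := by exact_mod_cast n0
          omega
        congr 1
        exact Subtype.ext (by simpa using h3)
      · rw [if_neg hba] at h
        exact absurd h (key h0 h1)
  · refine continuous_pi fun a => continuous_quot_lift _ (continuous_sum_dom.2 ⟨?_,
      continuous_const⟩)
    refine continuous_sigma fun b => ?_
    by_cases h : b = a
    · simp only [Function.comp_def, Sum.elim_inl, h, if_true]
      fun_prop
    · simp only [Function.comp_def, Sum.elim_inl, h, if_false]
      fun_prop

/-- The pullback of a fibration along a map from a wedge of circles is the mapping torus of its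
monodromies. -/
theorem LocTriv.mappingTorus {r : ℕ} {p : X → Y} (hp : LocTriv p F) {y₀ : Y}
    (e : F₀ ≃ₜ ↥(p ⁻¹' {y₀})) (γ : C(WedgeGraph (Fin r), Y)) (hγ : γ (WedgeGraph.pt _) = y₀)
    (M : Fin r → C(F₀, F₀))
    (hM : ∀ k, ∃ H : F₀ × I → X, Continuous H ∧ (∀ x, H (x, 0) = e x) ∧ (∀ x, H (x, 1) = e (M k x)) ∧
      ∀ x t, p (H (x, t)) = γ (WedgeGraph.loop k t)) :
    ∃ N : Fin r → C(F₀, F₀), (∀ k, (N k).Homotopic (M k)) ∧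
      Nonempty (PB γ p ≃ₜ HoEq (fun z : F₀ × Fin r => z.1) fun z => N z.2 z.1) := by
  let ω : Fin r → C(I, Y) := fun k => γ.comp (WedgeGraph.loop k).toContinuousMap
  have ω0 : ∀ k, ω k 0 = y₀ := fun k => by
    rw [← hγ]; exact congrArg γ (WedgeGraph.loop k).source
  have ω1 : ∀ k, ω k 1 = y₀ := fun k => by
    rw [← hγ]; exact congrArg γ (WedgeGraph.loop k).target
  choose Θ Ξ h0 h1 h2 h3 using fun k => hp.exists_path_triv e (ω k) (ω0 k)
  have hN : ∀ k v, Θ k (v, 1) ∈ p ⁻¹' {y₀} := fun k v => (h1 k _).trans (ω1 k)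
  have hNc : ∀ k, Continuous fun v => (⟨Θ k (v, 1), hN k v⟩ : ↥(p ⁻¹' {y₀})) := fun k =>
    Continuous.subtype_mk (by fun_prop) _
  -- The monodromies of the trivializations over the loops; any two monodromies along the same loop
  -- are homotopic.
  let N : Fin r → C(F₀, F₀) := fun k =>
    ⟨fun v => e.symm ⟨Θ k (v, 1), hN k v⟩, e.symm.continuous.comp (hNc k)⟩
  have eN : ∀ k v, (e (N k v) : X) = Θ k (v, 1) := fun k v => by
    change (e (e.symm _) : X) = _
    rw [e.apply_symm_apply]
  refine ⟨N, fun k => ?_, ?_⟩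
  · obtain ⟨H, hH, H0, H1, Hp⟩ := hM k
    have hΞ : Continuous fun z : F₀ × I => Ξ k ⟨(z.2, H z), Hp z.1 z.2⟩ :=
      (Ξ k).continuous.comp (Continuous.subtype_mk (by fun_prop) _)
    refine .of_fun (fun z => N k (Ξ k ⟨(z.2, H z), Hp z.1 z.2⟩)) ((N k).continuous.comp hΞ) ?_ ?_
    · intro x
      have : (⟨(0, H (x, 0)), Hp x 0⟩ : {z : I × X // p z.2 = ω k z.1}) =
          ⟨(0, Θ k (x, 0)), h1 k _⟩ := Subtype.ext (Prod.ext rfl ((H0 x).trans (h0 k x).symm))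
      exact congrArg (N k) ((congrArg (Ξ k) this).trans (h2 k x 0 _))
    · intro x
      refine e.injective (Subtype.ext ?_)
      rw [eN, ← H1]
      exact h3 k ⟨(1, H (x, 1)), _⟩
  · let f : F₀ × Fin r → F₀ := fun z => z.1
    let g : F₀ × Fin r → F₀ := fun z => N z.2 z.1
    have u1 : ∀ x : F₀, γ (WedgeGraph.pt _) = p (e x) := fun x => hγ.trans (e x).2.symm
    have u2 : ∀ z : (F₀ × Fin r) × I, γ (WedgeGraph.loop z.1.2 z.2) = p (Θ z.1.2 (z.1.1, z.2)) :=
      fun z => (h1 z.1.2 (z.1.1, z.2)).symm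
    let Φ : C(HoEq f g, PB γ p) := HoEq.desc (fun x => ⟨(WedgeGraph.pt _, (e x : X)), u1 x⟩)
      (fun z => ⟨(WedgeGraph.loop z.1.2 z.2, Θ z.1.2 (z.1.1, z.2)), u2 z⟩)
      (Continuous.subtype_mk (by fun_prop) _)
      (by
        refine Continuous.subtype_mk ?_ u2
        have : Continuous fun q : Fin r × (F₀ × I) => ((WedgeGraph.loop q.1 q.2.2, Θ q.1 q.2) :
            WedgeGraph (Fin r) × X) := continuous_prod_of_discrete_left.2 fun k =>
            ((WedgeGraph.loop k).continuous.comp continuous_snd).prodMk (Θ k).continuous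
        exact this.comp (by fun_prop : Continuous fun z : (F₀ × Fin r) × I =>
          (z.1.2, (z.1.1, z.2))))
      (fun z => Subtype.ext (Prod.ext (WedgeGraph.loop z.2).source (h0 _ _)))
      (fun z => Subtype.ext (Prod.ext (WedgeGraph.loop z.2).target (eN _ _).symm))
    let S : Set (WedgeGraph (Fin r) × X) := {z | γ z.1 = p z.2}
    -- `Φ` is closed, hence a homeomorphism: it is glued from base changes of the proper maps from
    -- a point and the interval to the wedge.
    have hcl : ∀ {K : Type} [TopologicalSpace K] [CompactSpace K] (j : K → WedgeGraph (Fin r)),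
        Continuous j → IsClosedMap (S.restrictPreimage (Prod.map j (id : X → X))) :=
      fun j hj => (hj.isProperMap.universally_closed X).restrictPreimage S
    have hcA : IsClosedMap fun v : F₀ => (⟨(WedgeGraph.pt _, (e v : X)), u1 v⟩ : PB γ p) := by
      let ξ : F₀ ≃ₜ ↥(Prod.map (fun _ : Unit => WedgeGraph.pt (Fin r)) (id : X → X) ⁻¹' S) :=
        { toFun := fun v => ⟨((), (e v : X)), u1 v⟩
          invFun := fun z => e.symm ⟨z.1.2, (show γ (WedgeGraph.pt _) = p z.1.2 from z.2).symm.trans hγ⟩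
          left_inv := fun v => e.symm_apply_apply v
          right_inv := fun z => Subtype.ext (Prod.ext rfl (by
            change (e (e.symm _) : X) = _
            rw [e.apply_symm_apply]))
          continuous_toFun := Continuous.subtype_mk (by fun_prop) _
          continuous_invFun := e.symm.continuous.comp (Continuous.subtype_mk (by fun_prop) _) }
      exact (hcl _ continuous_const).comp ξ.isClosedMap
    have hcC : ∀ k, IsClosedMap fun z : F₀ × I =>
        (⟨(WedgeGraph.loop k z.2, Θ k z), u2 ((z.1, k), z.2)⟩ : PB γ p) := fun k => by
      let ξ : F₀ × I ≃ₜ ↥(Prod.map (WedgeGraph.loop k) (id : X → X) ⁻¹' S) :=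
        { toFun := fun z => ⟨(z.2, Θ k z), u2 ((z.1, k), z.2)⟩
          invFun := fun z => (Ξ k ⟨z.1, (show γ (WedgeGraph.loop k z.1.1) = p z.1.2 from z.2).symm⟩,
            z.1.1)
          left_inv := fun z => Prod.ext (h2 k z.1 z.2 _) rfl
          right_inv := fun z => Subtype.ext (Prod.ext rfl (h3 k ⟨z.1, _⟩))
          continuous_toFun := Continuous.subtype_mk (by fun_prop) _
          continuous_invFun := ((Ξ k).continuous.comp (Continuous.subtype_mk (by fun_prop) _)).prodMk
            (by fun_prop) }
      exact (hcl _ (WedgeGraph.loop k).continuous).comp ξ.isClosedMap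
    have hΦ : IsClosedMap Φ := by
      intro K hK
      have : Φ '' K = ((fun v : F₀ => (⟨(WedgeGraph.pt _, (e v : X)), u1 v⟩ : PB γ p)) ''
          (HoEq.mkA f g ⁻¹' K)) ∪ ⋃ k, (fun z : F₀ × I =>
          (⟨(WedgeGraph.loop k z.2, Θ k z), u2 ((z.1, k), z.2)⟩ : PB γ p)) ''
          ((fun z : F₀ × I => HoEq.mkC f g ((z.1, k), z.2)) ⁻¹' K) := by
        ext z
        constructor
        · rintro ⟨y, hy, rfl⟩
          induction y using HoEq.ind with
          | hA x => exact Or.inl ⟨x, hy, rfl⟩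
          | hC c => exact Or.inr (Set.mem_iUnion.2 ⟨c.1.2, (c.1.1, c.2), hy, rfl⟩)
        · rintro (⟨x, hx, rfl⟩ | hz)
          · exact ⟨_, hx, rfl⟩
          · obtain ⟨k, x, hx, rfl⟩ := Set.mem_iUnion.1 hz
            exact ⟨_, hx, rfl⟩
      rw [this]
      refine IsClosed.union (hcA _ (hK.preimage (map_continuous _))) (isClosed_iUnion_of_finite
        fun k => hcC k _ (hK.preimage ?_))
      fun_prop
    have hcase : ∀ z : HoEq f g, (∃ x, z = HoEq.mkA f g x) ∨ ∃ c : (F₀ × Fin r) × I, c.2 ≠ 0 ∧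
        c.2 ≠ 1 ∧ z = HoEq.mkC f g c := by
      intro z
      induction z using HoEq.ind with
      | hA x => exact Or.inl ⟨x, rfl⟩
      | hC c =>
        obtain ⟨c, t⟩ := c
        by_cases h0 : t = 0
        · left; rw [h0]; exact ⟨_, HoEq.mkC_zero f g c⟩
        by_cases h1 : t = 1
        · left; rw [h1]; exact ⟨_, HoEq.mkC_one f g c⟩
        exact Or.inr ⟨(c, t), h0, h1, rfl⟩
    have hinj : Function.Injective Φ := by
      intro z z' hzz
      have e1 : WedgeGraph.nf (Φ z).1.1 = WedgeGraph.nf (Φ z').1.1 := by rw [hzz]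
      have e2 : (Φ z).1.2 = (Φ z').1.2 := by rw [hzz]
      rcases hcase z with ⟨x, rfl⟩ | ⟨⟨⟨x, k⟩, t⟩, t0, t1, rfl⟩ <;>
        rcases hcase z' with ⟨x', rfl⟩ | ⟨⟨⟨x', k'⟩, t'⟩, t0', t1', rfl⟩
      · exact congrArg _ (e.injective (Subtype.ext e2))
      · have : none = some (k', t') := e1.trans (WedgeGraph.nf_loop k' t0' t1')
        cases this
      · have : some (k, t) = none := (WedgeGraph.nf_loop k t0 t1).symm.trans e1
        cases this
      · have : some (k, t) = some (k', t') :=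
          (WedgeGraph.nf_loop k t0 t1).symm.trans (e1.trans (WedgeGraph.nf_loop k' t0' t1'))
        cases this
        have e3 : Θ k (x, t) = Θ k (x', t) := e2
        obtain rfl : x = x' := by
          rw [← h2 k x t (h1 k _), ← h2 k x' t (h1 k _)]
          exact congrArg (Ξ k) (Subtype.ext (Prod.ext rfl e3))
        rfl
    have hsurj : Function.Surjective Φ := by
      rintro ⟨⟨w, x⟩, hz⟩
      induction w using WedgeGraph.ind' with
      | h0 =>
        refine ⟨HoEq.mkA f g (e.symm ⟨x, hz.symm.trans hγ⟩), Subtype.ext (Prod.ext rfl ?_)⟩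
        change (e (e.symm _) : X) = x
        rw [e.apply_symm_apply]
      | h1 k t => exact ⟨HoEq.mkC f g ((Ξ k ⟨(t, x), hz.symm⟩, k), t),
          Subtype.ext (Prod.ext rfl (h3 k ⟨(t, x), _⟩))⟩
    exact ⟨((Equiv.ofBijective Φ ⟨hinj, hsurj⟩).toHomeomorphOfContinuousClosed
      Φ.continuous hΦ).symm⟩

end torus

end

/-! ### Maps of graphs inducing isomorphisms of fundamental groups -/

section

section
variable {Z Y V J : Type} [TopologicalSpace Z] [TopologicalSpace Y] [TopologicalSpace V]
  [TopologicalSpace J]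

namespace Path.Homotopic.Quotient

lemma map_trans' (f : C(Z, Y)) {x y z : Z} (p : Path.Homotopic.Quotient x y)
    (q : Path.Homotopic.Quotient y z) : (p.trans q).map f = (p.map f).trans (q.map f) := by
  induction p using Path.Homotopic.Quotient.ind with
  | mk p =>
  induction q using Path.Homotopic.Quotient.ind with
  | mk q => exact congrArg Path.Homotopic.Quotient.mk (Path.map_trans p q f.continuous)

lemma map_symm' (f : C(Z, Y)) {x y : Z} (p : Path.Homotopic.Quotient x y) :
    p.symm.map f = (p.map f).symm := by
  induction p using Path.Homotopic.Quotient.ind with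
  | mk p => rfl

end Path.Homotopic.Quotient

/-- A map inducing a fully faithful functor of fundamental groupoids. -/
def PiFull (γ : C(Z, Y)) : Prop :=
  ∀ x y, Function.Bijective fun p : Path.Homotopic.Quotient x y => p.map γ

/-- On a path connected space it suffices to look at loops at one base point. -/
lemma PiFull.of_base [PathConnectedSpace Z] (γ : C(Z, Y)) (z : Z)
    (h : Function.Bijective fun p : Path.Homotopic.Quotient z z => p.map γ) : PiFull γ := by
  intro x y
  have sx := Path.Homotopic.Quotient.mk (PathConnectedSpace.somePath z x)
  have sy := Path.Homotopic.Quotient.mk (PathConnectedSpace.somePath z y)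
  constructor
  · intro p p' hp
    have := h.1 (a₁ := sx.trans (p.trans sy.symm)) (a₂ := sx.trans (p'.trans sy.symm)) (by
      simp only [Path.Homotopic.Quotient.map_trans']
      rw [show p.map γ = p'.map γ from hp])
    exact Path.Homotopic.Quotient.trans_right_cancel
      (Path.Homotopic.Quotient.trans_left_cancel this)
  · intro q
    obtain ⟨u, hu⟩ := h.2 ((sx.map γ).trans (q.trans (sy.map γ).symm))
    refine ⟨sx.symm.trans (u.trans sy), ?_⟩
    simp only [Path.Homotopic.Quotient.map_trans', Path.Homotopic.Quotient.map_symm']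
    rw [show u.map γ = _ from hu, Path.Homotopic.Quotient.trans_assoc,
      Path.Homotopic.Quotient.trans_assoc,
      Path.Homotopic.Quotient.trans_symm_cancel]
    simp

variable [DiscreteTopology V] [DiscreteTopology J] {f g : C(J, V)}

/-- Maps from a graph lift up to homotopy along a map which is full on fundamental groupoids. -/
lemma PiFull.exists_lift [PathConnectedSpace Y] [Nonempty Z] {γ : C(Z, Y)} (hγ : PiFull γ)
    (e : C(HoEq f g, Y)) : ∃ φ : C(HoEq f g, Z), (γ.comp φ).Homotopic e := by
  obtain ⟨z⟩ := ‹Nonempty Z›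
  have τ : ∀ v, Path.Homotopic.Quotient (γ z) (e (HoEq.mkA f g v)) := fun v =>
    .mk (PathConnectedSpace.somePath _ _)
  choose u hu using fun j : J => (hγ z z).2 (((τ (f j)).trans
    (.mk ((HoEq.edge f g j).map e.continuous))).trans (τ (g j)).symm)
  choose q hq using fun j => Path.Homotopic.Quotient.mk_surjective (u j)
  let φ : C(HoEq f g, Z) := HoEq.desc (fun _ => z) (fun c => q c.1 c.2) continuous_const
    (continuous_prod_of_discrete_left.2 fun j => (q j).continuous) (fun j => (q j).source)
    (fun j => (q j).target)
  refine ⟨φ, HoEq.homotopic_of_discrete τ fun j => ?_⟩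
  have h1 : Path.Homotopic.Quotient.mk ((HoEq.edge f g j).map (γ.comp φ).continuous) =
      (u j).map γ := by rw [← hq]; rfl
  have h2 : (τ (f j)).trans (.mk ((HoEq.edge f g j).map e.continuous)) =
      ((u j).map γ).trans (τ (g j)) := by
    rw [show (u j).map γ = _ from hu j, Path.Homotopic.Quotient.trans_assoc]
    simp
  exact h2.trans (congrArg (fun q => q.trans (τ (g j))) h1.symm)

/-- Maps from a graph which become homotopic after composition with a map which is fully
faithful on fundamental groupoids are homotopic. -/
lemma PiFull.homotopic [LocallyCompactSpace V] [LocallyCompactSpace J] {γ : C(Z, Y)}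
    (hγ : PiFull γ) {φ φ' : C(HoEq f g, Z)}
    (h : (γ.comp φ).Homotopic (γ.comp φ')) : φ.Homotopic φ' := by
  obtain ⟨P, hP⟩ := HoEq.homotopic_iff.1 h
  choose τ hτ using fun v => (hγ (φ (HoEq.mkA f g v)) (φ' (HoEq.mkA f g v))).2 (.mk (P.at' v))
  refine HoEq.homotopic_of_discrete τ fun j => (hγ _ _).1 ?_
  simp only [Path.Homotopic.Quotient.map_trans']
  rw [show (τ (f j)).map γ = _ from hτ _, show (τ (g j)).map γ = _ from hτ _]
  have := congrArg (fun q => q.map (⟨fun w => w j, continuous_eval_const j⟩ : C(C(J, Y), Y))) hP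
  simp only [Path.Homotopic.Quotient.map_trans'] at this
  exact this

end

end

/-! ### Loops freely generating the fundamental group -/

section

instance {α : Type} : PathConnectedSpace (WedgeGraph α) := by
  refine ⟨⟨WedgeGraph.pt α⟩, ?_⟩
  have h : ∀ x : WedgeGraph α, Joined (WedgeGraph.pt α) x := by
    refine WedgeGraph.ind' (Joined.refl _) fun a t => ?_
    refine ⟨⟨⟨fun s => WedgeGraph.loop a (t * s), by fun_prop⟩, ?_, ?_⟩⟩
    · simp
    · simp
  exact fun x y => (h x).symm.trans (h y)

/-- The map from a wedge of circles given by loops. -/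
def WedgeGraph.desc {α Y : Type} [TopologicalSpace Y] {y₀ : Y} (γ : α → Path y₀ y₀) :
    C(WedgeGraph α, Y) :=
  ⟨Quot.lift (Sum.elim (fun z => γ z.1 z.2) fun _ => y₀) (by
    rintro _ _ (a | a)
    · exact (γ a).source
    · exact (γ a).target), continuous_quot_lift _ (continuous_sum_dom.2
      ⟨continuous_sigma fun a => (γ a).continuous, continuous_const⟩)⟩

/-- Loops freely generating the fundamental group give a fully faithful functor of fundamental
groupoids. -/
lemma WedgeGraph.piFull_desc {α Y : Type} [TopologicalSpace Y] {y₀ : Y}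
    (γ : α → Path y₀ y₀) (θ : FundamentalGroup Y y₀ ≃* FreeGroup α)
    (hθ : ∀ k, θ (FundamentalGroup.fromPath (X := TopCat.of Y) ⟦γ k⟧) = FreeGroup.of k) :
    PiFull (WedgeGraph.desc γ) := by
  refine PiFull.of_base _ (WedgeGraph.pt α) ?_
  let Γ : FundamentalGroup (WedgeGraph α) (WedgeGraph.pt α) →* FundamentalGroup Y y₀ :=
    FundamentalGroup.map (WedgeGraph.desc γ) (WedgeGraph.pt α)
  let L := FreeGroup.lift (fun a => (FundamentalGroup.fromPath
      (X := TopCat.of (WedgeGraph α)) (Path.Homotopic.Quotient.mk (WedgeGraph.loop a))))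
  have h1 : (θ.toMonoidHom.comp Γ).comp L = MonoidHom.id _ := by
    ext a
    simp only [MonoidHom.comp_apply, L, FreeGroup.lift_apply_of]
    exact hθ a
  have h2 : Function.Bijective Γ := by
    constructor
    · intro x x' h
      obtain ⟨u, rfl⟩ := WedgeGraph.exists_lift_eq x
      obtain ⟨u', rfl⟩ := WedgeGraph.exists_lift_eq x'
      have := congrArg θ h
      have e1 : u = u' := (DFunLike.congr_fun h1 u).symm.trans
        (this.trans (DFunLike.congr_fun h1 u'))
      rw [e1]
    · intro y
      refine ⟨L (θ y), θ.injective ?_⟩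
      exact DFunLike.congr_fun h1 (θ y)
  exact h2

/-- If `Y` is dominated by a graph and its fundamental group is freely generated by loops, then
`Y` is homotopy equivalent to a wedge of circles via these loops. -/
theorem WedgeGraph.exists_homotopyEquiv {r : ℕ} {Y V J : Type} [TopologicalSpace Y]
    [PathConnectedSpace Y] [TopologicalSpace V] [TopologicalSpace J] [DiscreteTopology V]
    [DiscreteTopology J] {y₀ : Y} (γ : Fin r → Path y₀ y₀)
    (θ : FundamentalGroup Y y₀ ≃* FreeGroup (Fin r))
    (hθ : ∀ k, θ (FundamentalGroup.fromPath (X := TopCat.of Y) ⟦γ k⟧) = FreeGroup.of k)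
    {f g : C(J, V)} (e : C(Y, HoEq f g)) (e' : C(HoEq f g, Y))
    (he : (e'.comp e).Homotopic (ContinuousMap.id Y)) :
    ∃ E : ContinuousMap.HomotopyEquiv (WedgeGraph (Fin r)) Y, E.toFun = WedgeGraph.desc γ := by
  have hγ := WedgeGraph.piFull_desc γ θ hθ
  obtain ⟨φ, hφ⟩ := hγ.exists_lift e'
  have h1 : ((WedgeGraph.desc γ).comp (φ.comp e)).Homotopic (ContinuousMap.id Y) := by
    refine ContinuousMap.Homotopic.trans ?_ he
    rw [← ContinuousMap.comp_assoc]
    exact ContinuousMap.Homotopic.comp hφ (ContinuousMap.Homotopic.refl e)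
  let h := WedgeGraph.homeo (Fin r)
  let hs : C(_, _) := ⟨h.symm, h.symm.continuous⟩
  have hh : hs.comp (⟨h, h.continuous⟩ : C(_, _)) = ContinuousMap.id _ := by
    ext x; exact h.symm_apply_apply x
  have h2 : ((φ.comp e).comp (WedgeGraph.desc γ)).Homotopic (ContinuousMap.id _) := by
    have h3 : ((WedgeGraph.desc γ).comp (((φ.comp e).comp (WedgeGraph.desc γ)).comp hs)).Homotopic
        ((WedgeGraph.desc γ).comp hs) := by
      have := ContinuousMap.Homotopic.comp h1
        (ContinuousMap.Homotopic.refl ((WedgeGraph.desc γ).comp hs))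
      exact this
    have h4 := ContinuousMap.Homotopic.comp (hγ.homotopic h3)
        (ContinuousMap.Homotopic.refl (⟨h, h.continuous⟩ : C(_, _)))
    rw [ContinuousMap.comp_assoc, hh] at h4
    exact h4
  exact ⟨⟨WedgeGraph.desc γ, φ.comp e, h2, h1⟩, rfl⟩

end

/-! ### The complement of finitely many points in the plane -/

section

/-- The plane minus the points `(a, 0)`, `a ∈ A`. -/
abbrev Slit (A : Finset ℝ) : Type := {z : ℝ × ℝ // z.1 ∈ A → z.2 ≠ 0}

/-- The set of components of `ℝ ∖ A`, a component being encoded by the elements of `A` which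
lie to its left. -/
def Gap (A : Finset ℝ) : Type := {s : Finset ℝ // ∃ x ∉ A, A.filter (· < x) = s}
instance (A : Finset ℝ) : TopologicalSpace (Gap A) := ⊥
instance (A : Finset ℝ) : DiscreteTopology (Gap A) := ⟨rfl⟩

/-- Two points with the same elements of `A` to their left are joined by a segment missing `A`. -/
lemma Gap.segment {A : Finset ℝ} {x m : ℝ} (hx : x ∉ A) (hm : m ∉ A)
    (h : A.filter (· < x) = A.filter (· < m)) (t : I) : (1 - (t : ℝ)) * x + t * m ∉ A := by
  intro ha
  have h0 := t.2.1
  have h1 := t.2.2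
  have key := Finset.ext_iff.1 h ((1 - (t : ℝ)) * x + t * m)
  simp only [Finset.mem_filter, ha, true_and] at key
  have hx' : (1 - (t : ℝ)) * x + t * m ≠ x := fun h => hx (h ▸ ha)
  have hm' : (1 - (t : ℝ)) * x + t * m ≠ m := fun h => hm (h ▸ ha)
  rcases lt_or_ge ((1 - (t : ℝ)) * x + t * m) x with h2 | h2
  · have h3 := key.1 h2
    rcases le_total x m with hxm | hxm
    · nlinarith [mul_nonneg h0 (sub_nonneg.2 hxm)]
    · nlinarith [mul_nonneg (sub_nonneg.2 h1) (sub_nonneg.2 hxm)]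
  · have h3 := lt_of_le_of_ne (not_lt.1 fun h => not_lt.2 h2 (key.2 h)) hm'.symm
    have h2 := lt_of_le_of_ne h2 hx'.symm
    rcases le_total x m with hxm | hxm
    · nlinarith [mul_nonneg (sub_nonneg.2 h1) (sub_nonneg.2 hxm)]
    · nlinarith [mul_nonneg h0 (sub_nonneg.2 hxm)]

/-- The complement of finitely many points of a line in the plane is dominated by the graph with
two vertices (the two half planes) and one edge for each component of the complement of these
points in the line. -/
theorem Slit.dominated (A : Finset ℝ) :
    ∃ (e : C(Slit A, HoEq (ContinuousMap.const (Gap A) false) (ContinuousMap.const (Gap A) true)))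
      (e' : C(HoEq (ContinuousMap.const (Gap A) false) (ContinuousMap.const (Gap A) true), Slit A)),
      (e'.comp e).Homotopic (ContinuousMap.id _) := by
  classical
  set f := ContinuousMap.const (Gap A) false
  set g := ContinuousMap.const (Gap A) true
  have hj : ∀ x : ℝ, ∃ j : Gap A, x ∉ A → j.1 = A.filter (· < x) := by
    intro x
    by_cases hx : x ∈ A
    · obtain ⟨m, hm⟩ := Infinite.exists_notMem_finset A
      exact ⟨⟨_, m, hm, rfl⟩, fun h => absurd hx h⟩
    · exact ⟨⟨_, x, hx, rfl⟩, fun _ => rfl⟩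
  choose j hj using hj
  choose m hm hmj using fun s : Gap A => s.2
  -- `q` is continuous and vanishes exactly on `A`. On the vertical line over `x ∉ A` the map `e`
  -- follows an edge from the bottom vertex to the top vertex while `|y| < q x`; above and below
  -- it is constant.
  let q : ℝ → ℝ := fun x => ∏ a ∈ A, |x - a|
  have hq : Continuous q := by fun_prop
  have hq0 : ∀ x, 0 ≤ q x := fun x => Finset.prod_nonneg fun a _ => abs_nonneg _
  have hqA : ∀ x, q x = 0 ↔ x ∈ A := fun x => by
    simp only [q, Finset.prod_eq_zero_iff, abs_eq_zero, sub_eq_zero]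
    exact ⟨fun ⟨a, ha, h⟩ => h ▸ ha, fun h => ⟨x, h, rfl⟩⟩
  clear_value q
  let c : ℝ × ℝ → I := fun z => Set.projIcc 0 1 zero_le_one ((1 + z.2 / q z.1) / 2)
  let e₀ : Slit A → HoEq f g := fun z => if z.1.1 ∈ A then HoEq.mkA _ _ (decide (0 < z.1.2)) else
    HoEq.mkC _ _ (j z.1.1, c z.1)
  have hpos : ∀ z : Slit A, q z.1.1 ≤ z.1.2 → e₀ z = HoEq.mkA _ _ true := by
    intro z hz
    by_cases hA : z.1.1 ∈ A
    · have : 0 < z.1.2 := lt_of_le_of_ne (by rwa [(hqA _).2 hA] at hz) (z.2 hA).symm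
      simp only [e₀, hA, if_true, this, decide_true]
    · have : 0 < q z.1.1 := lt_of_le_of_ne (hq0 _) (fun h => hA ((hqA _).1 h.symm))
      have hc : c z.1 = 1 := Set.projIcc_of_right_le _ (by
        have := (one_le_div this).2 hz
        linarith)
      simp only [e₀, hA, if_false, hc]
      exact HoEq.mkC_one _ _ _
  have hneg : ∀ z : Slit A, z.1.2 ≤ - q z.1.1 → e₀ z = HoEq.mkA _ _ false := by
    intro z hz
    by_cases hA : z.1.1 ∈ A
    · have : ¬ 0 < z.1.2 := not_lt.2 (by rwa [(hqA _).2 hA, neg_zero] at hz)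
      simp only [e₀, hA, if_true, this, decide_false]
    · have : 0 < q z.1.1 := lt_of_le_of_ne (hq0 _) (fun h => hA ((hqA _).1 h.symm))
      have hc : c z.1 = 0 := Set.projIcc_of_le_left _ (by
        have : z.1.2 / q z.1.1 ≤ -1 := by rw [div_le_iff₀ this]; linarith
        linarith)
      simp only [e₀, hA, if_false, hc]
      exact HoEq.mkC_zero _ _ _
  have he₀ : Continuous e₀ := by
    refine continuous_iff_continuousAt.2 fun z => ?_
    by_cases hA : z.1.1 ∈ A
    · rcases lt_or_gt_of_ne (z.2 hA) with h | h
      · have : ∀ᶠ z' : Slit A in nhds z, z'.1.2 < - q z'.1.1 :=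
          (isOpen_lt (by fun_prop) (by fun_prop)).mem_nhds
            (show z.1.2 < - q z.1.1 by rwa [(hqA _).2 hA, neg_zero])
        refine ContinuousAt.congr (f := fun _ => HoEq.mkA f g false) continuousAt_const ?_
        filter_upwards [this] with z' hz' using (hneg z' hz'.le).symm
      · have : ∀ᶠ z' : Slit A in nhds z, q z'.1.1 < z'.1.2 :=
          (isOpen_lt (by fun_prop) (by fun_prop)).mem_nhds
            (show q z.1.1 < z.1.2 by rwa [(hqA _).2 hA])
        refine ContinuousAt.congr (f := fun _ => HoEq.mkA f g true) continuousAt_const ?_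
        filter_upwards [this] with z' hz' using (hpos z' hz'.le).symm
    · have h1 : ∀ᶠ x in nhds z.1.1, ∀ a ∈ A, x ≠ a ∧ (a < x ↔ a < z.1.1) := by
        rw [Filter.eventually_all_finset]
        intro a ha
        rcases lt_or_gt_of_ne (fun h => hA (h ▸ ha) : z.1.1 ≠ a) with h | h
        · filter_upwards [isOpen_Iio.mem_nhds (Set.mem_Iio.2 h)] with x hx
          exact ⟨hx.ne, iff_of_false hx.not_gt h.not_gt⟩
        · filter_upwards [isOpen_Ioi.mem_nhds (Set.mem_Ioi.2 h)] with x hx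
          exact ⟨hx.ne', iff_of_true hx h⟩
      have h2 : ∀ᶠ z' : Slit A in nhds z, ∀ a ∈ A, z'.1.1 ≠ a ∧ (a < z'.1.1 ↔ a < z.1.1) :=
        (continuous_fst.comp continuous_subtype_val).continuousAt.eventually h1
      have hq' : q z.1.1 ≠ 0 := fun h => hA ((hqA _).1 h)
      have h3 : ContinuousAt (fun z' : Slit A => HoEq.mkC f g (j z.1.1, c z'.1)) z := by
        refine (HoEq.mkC f g).continuous.continuousAt.comp (continuousAt_const.prodMk ?_)
        refine continuous_projIcc.continuousAt.comp ?_
        refine ContinuousAt.div_const (continuousAt_const.add ?_) _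
        exact ContinuousAt.div (by fun_prop) (by fun_prop) hq'
      refine h3.congr ?_
      filter_upwards [h2] with z' hz'
      have hA' : z'.1.1 ∉ A := fun h => (hz' _ h).1 rfl
      have : j z'.1.1 = j z.1.1 := by
        refine Subtype.ext ?_
        rw [hj _ hA, hj _ hA']
        refine Finset.filter_congr fun a ha => (hz' a ha).2
      simp only [e₀, hA', if_false, this]
  let e : C(Slit A, HoEq f g) := ⟨e₀, he₀⟩
  have hv : ∀ z : Gap A × I, ((1 - |2 * (z.2 : ℝ) - 1|) * m z.1, 2 * (z.2 : ℝ) - 1).1 ∈ A →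
      ((1 - |2 * (z.2 : ℝ) - 1|) * m z.1, 2 * (z.2 : ℝ) - 1).2 ≠ 0 := by
    intro z h h0
    dsimp only at h h0
    rw [h0] at h
    simp at h
    exact hm _ h
  have hu : ∀ b : Bool, ((0 : ℝ), if b then (1 : ℝ) else -1).1 ∈ A →
      ((0 : ℝ), if b then (1 : ℝ) else -1).2 ≠ 0 := by
    rintro (_ | _) <;> simp
  -- The edge of a gap `j` goes from `(0, -1)` through `(m j, 0)` to `(0, 1)`.
  let e' : C(HoEq f g, Slit A) := HoEq.desc (fun b => ⟨_, hu b⟩) (fun z => ⟨_, hv z⟩)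
    continuous_of_discreteTopology
    (Continuous.subtype_mk (by
      have : Continuous m := continuous_of_discreteTopology
      fun_prop) hv) (fun j => by ext <;> simp [f]) (fun j => by ext <;> norm_num [g])
  -- The three features of `e' ∘ e` making the straight line homotopy to the identity avoid `A`.
  have k1 : ∀ z : Slit A, 0 < z.1.2 → 0 < (e' (e z)).1.2 := by
    intro z hz
    rcases le_or_gt (q z.1.1) z.1.2 with h | h
    · have : e z = HoEq.mkA _ _ true := hpos z h
      rw [this]
      simp [e']
    · have hq' : 0 < q z.1.1 := hz.trans h
      have hA : z.1.1 ∉ A := fun h => hq'.ne' ((hqA _).2 h)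
      have : e z = HoEq.mkC _ _ (j z.1.1, c z.1) := if_neg hA
      rw [this]
      simp only [e', HoEq.desc_mkC]
      have h1 : 0 < z.1.2 / q z.1.1 := div_pos hz hq'
      have h2 : (1 : ℝ) / 2 < (c z.1 : ℝ) := by
        simp only [c, Set.coe_projIcc]
        refine lt_max_of_lt_right (lt_min (by norm_num) (by linarith))
      linarith
  have k2 : ∀ z : Slit A, z.1.2 < 0 → (e' (e z)).1.2 < 0 := by
    intro z hz
    rcases le_or_gt z.1.2 (- q z.1.1) with h | h
    · have : e z = HoEq.mkA _ _ false := hneg z h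
      rw [this]
      simp [e']
    · have hq' : 0 < q z.1.1 := by linarith
      have hA : z.1.1 ∉ A := fun h => hq'.ne' ((hqA _).2 h)
      have : e z = HoEq.mkC _ _ (j z.1.1, c z.1) := if_neg hA
      rw [this]
      simp only [e', HoEq.desc_mkC]
      have h1 : z.1.2 / q z.1.1 < 0 := div_neg_of_neg_of_pos hz hq'
      have h2 : (c z.1 : ℝ) < 1 / 2 := by
        simp only [c, Set.coe_projIcc]
        refine max_lt (by norm_num) (min_lt_of_right_lt (by linarith))
      linarith
  have k3 : ∀ z : Slit A, z.1.2 = 0 → (e' (e z)).1 = (m (j z.1.1), 0) := by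
    intro z hz
    have hA : z.1.1 ∉ A := fun h => z.2 h hz
    have : e z = HoEq.mkC _ _ (j z.1.1, c z.1) := if_neg hA
    rw [this]
    have h2 : (c z.1 : ℝ) = 1 / 2 := by
      simp only [c, Set.coe_projIcc, hz]
      norm_num
    simp only [e', HoEq.desc_mkC, h2]
    norm_num
  have hH : ∀ z : Slit A × I, ((1 - (z.2 : ℝ)) * z.1.1.1 + z.2 * (e' (e z.1)).1.1,
      (1 - (z.2 : ℝ)) * z.1.1.2 + z.2 * (e' (e z.1)).1.2).1 ∈ A →
      ((1 - (z.2 : ℝ)) * z.1.1.1 + z.2 * (e' (e z.1)).1.1,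
      (1 - (z.2 : ℝ)) * z.1.1.2 + z.2 * (e' (e z.1)).1.2).2 ≠ 0 := by
    rintro ⟨z, t⟩ h h0
    dsimp only at h h0
    have t0 := t.2.1
    have t1 := t.2.2
    rcases lt_trichotomy z.1.2 0 with hz | hz | hz
    · have := k2 z hz
      rcases t0.lt_or_eq with t0 | t0
      · nlinarith [mul_neg_of_pos_of_neg t0 this]
      · rw [← t0] at h0; simp at h0; exact hz.ne h0
    · have hA : z.1.1 ∉ A := fun h => z.2 h hz
      rw [k3 z hz] at h
      exact Gap.segment hA (hm _) ((hj _ hA).symm.trans (hmj _).symm) t h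
    · have := k1 z hz
      rcases t0.lt_or_eq with t0 | t0
      · nlinarith [mul_pos t0 this]
      · rw [← t0] at h0; simp at h0; exact hz.ne' h0
  refine ⟨e, e', ContinuousMap.Homotopic.symm ?_⟩
  refine ContinuousMap.Homotopic.of_fun (fun z => ⟨_, hH z⟩) (Continuous.subtype_mk (by fun_prop) hH)
    (fun z => ?_) (fun z => ?_)
  · ext <;> simp
  · ext <;> simp

end

/-! ### Complements of finitely many points of the projective line -/

section

/-- Some real linear form with coefficient `1` at the real part is injective on a given finite set. -/
lemma exists_shear (A : Finset ℂ) : ∃ t : ℝ, Set.InjOn (fun z : ℂ => z.re + t * z.im) A := by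
  have h : (⋃ z ∈ (A : Set ℂ), ⋃ w ∈ (A : Set ℂ),
      {t : ℝ | z ≠ w ∧ z.re + t * z.im = w.re + t * w.im}).Finite := by
    refine A.finite_toSet.biUnion fun z _ => A.finite_toSet.biUnion fun w _ => ?_
    refine Set.Subsingleton.finite ?_
    rintro t ⟨hzw, ht⟩ s ⟨-, hs⟩
    by_contra hts
    have h1 : (t - s) * (z.im - w.im) = 0 := by linarith
    have h2 : z.im = w.im := by
      rcases mul_eq_zero.1 h1 with h | h
      · exact absurd (sub_eq_zero.1 h) hts
      · exact sub_eq_zero.1 h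
    rw [h2] at ht
    exact hzw (Complex.ext (by linarith) h2)
  obtain ⟨t, ht⟩ := h.infinite_compl.nonempty
  refine ⟨t, fun z hz w hw hzw => by_contra fun hne => ht ?_⟩
  simp only [Set.mem_iUnion]
  exact ⟨z, hz, w, hw, hne, hzw⟩

/-- After a linear change of coordinates and a polynomial shear, finitely many points of the
plane lie on a line. -/
lemma exists_homeomorph_slit (A : Finset ℂ) :
    ∃ A' : Finset ℝ, Nonempty (↥((A : Set ℂ)ᶜ) ≃ₜ Slit A') := by
  obtain ⟨t, ht⟩ := exists_shear A
  -- In the coordinates `(re + t im, im)` the points of `A` lie on the graph of `q`.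
  let q := Lagrange.interpolate A (fun z : ℂ => z.re + t * z.im) Complex.im
  have hq : ∀ z ∈ A, q.eval (z.re + t * z.im) = z.im := fun z hz =>
    Lagrange.eval_interpolate_at_node Complex.im ht hz
  have hqc : Continuous fun x => q.eval x := q.continuous
  clear_value q
  let Φ : ℂ → ℝ × ℝ := fun z => (z.re + t * z.im, z.im - q.eval (z.re + t * z.im))
  let Ψ : ℝ × ℝ → ℂ := fun p => ⟨p.1 - t * (p.2 + q.eval p.1), p.2 + q.eval p.1⟩
  have h1 : ∀ z, Ψ (Φ z) = z := fun z => by apply Complex.ext <;> simp [Φ, Ψ]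
  have h2 : ∀ p, Φ (Ψ p) = p := fun p => by ext <;> simp [Φ, Ψ]
  have hΦ : Continuous Φ := by fun_prop
  have hΨ : Continuous Ψ := by
    have : Ψ = fun p => ((p.1 - t * (p.2 + q.eval p.1) : ℝ) : ℂ) +
        ((p.2 + q.eval p.1 : ℝ) : ℂ) * Complex.I := by
      ext p; apply Complex.ext <;> simp [Ψ]
    rw [this]; fun_prop
  let A' := A.image fun z : ℂ => z.re + t * z.im
  have key : ∀ z, (z ∈ (A : Set ℂ)ᶜ ↔ ((Φ z).1 ∈ A' → (Φ z).2 ≠ 0)) := by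
    intro z
    constructor
    · intro hz h h0
      obtain ⟨a, ha, haz⟩ := Finset.mem_image.1 h
      simp only [Φ] at haz h0
      rw [← haz, hq a ha, sub_eq_zero] at h0
      refine hz ?_
      have : z = a := Complex.ext (by rw [h0] at haz; linarith) h0
      rw [this]; exact ha
    · intro h hz
      refine h (Finset.mem_image_of_mem _ hz) ?_
      simp only [Φ]
      rw [hq z hz, sub_self]
  refine ⟨A', ⟨⟨⟨fun z => ⟨Φ z, (key z).1 z.2⟩, fun p => ⟨Ψ p, (key _).2 ?_⟩, fun z => ?_,
    fun p => ?_⟩, ?_, ?_⟩⟩⟩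
  · rw [h2]; exact p.2
  · exact Subtype.ext (h1 _)
  · exact Subtype.ext (h2 _)
  · exact Continuous.subtype_mk (by fun_prop) _
  · exact Continuous.subtype_mk (by fun_prop) _

/-- The complement of a nonempty finite set of points of the projective line is homeomorphic to
the complement of finitely many points of the affine line. -/
lemma exists_homeomorph_compl (B : Finset ProjLine) (hB : B.Nonempty) :
    ∃ A : Finset ℂ, Nonempty (↥((B : Set ProjLine)ᶜ) ≃ₜ ↥((A : Set ℂ)ᶜ)) := by
  obtain ⟨b, hb⟩ := hB
  let p := b.rep
  have hp : p ≠ 0 := b.rep_nonzero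
  let D : ℂ := p 0 * (starRingEnd ℂ) (p 0) + p 1 * (starRingEnd ℂ) (p 1)
  have hD : D ≠ 0 := by
    simp only [D, Complex.mul_conj]
    norm_cast
    intro h
    have h0 := Complex.normSq_nonneg (p 0)
    have h1 := Complex.normSq_nonneg (p 1)
    refine hp ?_
    ext i
    fin_cases i
    · exact Complex.normSq_eq_zero.1 (show Complex.normSq (p 0) = 0 by linarith)
    · exact Complex.normSq_eq_zero.1 (show Complex.normSq (p 1) = 0 by linarith)
  -- `ℓ` vanishes exactly on the line `b`, and `(ℓ, m)` are linear coordinates.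
  let ℓ : (Fin 2 → ℂ) → ℂ := fun v => p 1 * v 0 - p 0 * v 1
  let m : (Fin 2 → ℂ) → ℂ := fun v => (starRingEnd ℂ) (p 0) * v 0 + (starRingEnd ℂ) (p 1) * v 1
  let c : ℂ → Fin 2 → ℂ := fun z =>
    ![((starRingEnd ℂ) (p 1) + p 0 * z) / D, (- (starRingEnd ℂ) (p 0) + p 1 * z) / D]
  have hℓc : ∀ z, ℓ (c z) = 1 := fun z => by
    simp only [ℓ, c, Matrix.cons_val_zero, Matrix.cons_val_one]
    field_simp; simp only [D]; ring
  have hmc : ∀ z, m (c z) = z := fun z => by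
    simp only [m, c, Matrix.cons_val_zero, Matrix.cons_val_one]
    field_simp; simp only [D]; ring
  have hcm : ∀ v, ℓ v ≠ 0 → ℓ v • c (m v / ℓ v) = v := fun v hv => by
    ext i
    fin_cases i
    · simp only [c, Pi.smul_apply, smul_eq_mul, Fin.zero_eta, Matrix.cons_val_zero]
      field_simp
      simp only [D, ℓ, m]; ring
    · simp only [c, Pi.smul_apply, smul_eq_mul, Fin.mk_one, Matrix.cons_val_one,
        Matrix.cons_val_zero]
      field_simp
      simp only [D, ℓ, m]; ring
  have hc0 : ∀ z, c z ≠ 0 := fun z h => by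
    have := hℓc z
    rw [h] at this
    simp [ℓ] at this
  have hℓb : ∀ v (hv : v ≠ 0), ℓ v = 0 → Projectivization.mk ℂ v hv = b := by
    intro v hv h
    rw [← b.mk_rep]
    refine (Projectivization.mk_eq_mk_iff' ℂ _ _ _ _).2 ⟨m v / D, ?_⟩
    have h' : p 1 * v 0 = p 0 * v 1 := sub_eq_zero.1 h
    ext i
    fin_cases i
    · change m v / D * p 0 = v 0
      field_simp
      simp only [m, D]
      linear_combination (-(starRingEnd ℂ) (p 1)) * h'
    · change m v / D * p 1 = v 1
      field_simp
      simp only [m, D]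
      linear_combination ((starRingEnd ℂ) (p 0)) * h'
  have hbℓ : ∀ v (hv : v ≠ 0), Projectivization.mk ℂ v hv = b → ℓ v = 0 := by
    intro v hv h
    rw [← b.mk_rep] at h
    obtain ⟨a, ha⟩ := (Projectivization.mk_eq_mk_iff' ℂ _ _ _ _).1 h
    simp only [ℓ, p, ← ha, Pi.smul_apply, smul_eq_mul]
    ring
  have hcont : Continuous c := by
    refine continuous_pi fun i => ?_
    fin_cases i
    · simp only [c, Fin.zero_eta, Matrix.cons_val_zero]; fun_prop
    · simp only [c, Fin.mk_one, Matrix.cons_val_one, Matrix.cons_val_zero]; fun_prop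
  have hℓ : Continuous ℓ := by fun_prop
  have hm : Continuous m := by fun_prop
  have hℓs : ∀ (a : ℂ) v, ℓ (a • v) = a * ℓ v := fun a v => by simp [ℓ]; ring
  have hms : ∀ (a : ℂ) v, m (a • v) = a * m v := fun a v => by simp [m]; ring
  clear_value ℓ m c D
  let ψ : ℂ → ProjLine := fun z => Projectivization.mk ℂ (c z) (hc0 z)
  have hψ : Continuous ψ := by
    have h1 : Continuous fun v : {v : Fin 2 → ℂ // v ≠ 0} => Projectivization.mk ℂ v.1 v.2 :=
      continuous_quot_mk
    exact h1.comp (Continuous.subtype_mk hcont hc0)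
  let φ : ProjLine → ℂ := Quotient.lift (fun v : {v : Fin 2 → ℂ // v ≠ 0} => m v / ℓ v) (by
    rintro v w ⟨a, ha⟩
    have ha' : (a : ℂ) • w.1 = v.1 := ha
    rw [← ha', hℓs, hms, mul_div_mul_left _ _ a.ne_zero])
  have hφ : ∀ v hv, φ (Projectivization.mk ℂ v hv) = m v / ℓ v := fun v hv => rfl
  have hφψ : ∀ z, φ (ψ z) = z := fun z => by rw [hφ, hℓc, hmc, div_one]
  have hψφ : ∀ y, y ≠ b → ψ (φ y) = y := by
    intro y
    induction y using Projectivization.ind with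
    | h v hv =>
      intro hy
      have hv' : ℓ v ≠ 0 := fun h => hy (hℓb v hv h)
      rw [hφ]
      exact ((Projectivization.mk_eq_mk_iff' ℂ _ _ _ _).2 ⟨ℓ v, hcm v hv'⟩).symm
  have hφc : ContinuousOn φ {b}ᶜ := by
    have hq : Topology.IsQuotientMap
        (fun v : {v : Fin 2 → ℂ // v ≠ 0} => Projectivization.mk ℂ v.1 v.2) :=
      isQuotientMap_quot_mk
    have hpre : (fun v : {v : Fin 2 → ℂ // v ≠ 0} => Projectivization.mk ℂ v.1 v.2) ⁻¹' {b}ᶜ =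
        {v | ℓ v.1 ≠ 0} := by
      ext v
      exact not_congr ⟨hbℓ v.1 v.2, hℓb v.1 v.2⟩
    have hO : IsOpen ({b}ᶜ : Set ProjLine) := by
      rw [← hq.isOpen_preimage, hpre]
      exact isOpen_ne_fun (by fun_prop) continuous_const
    refine (hq.continuousOn_isOpen_iff hO).2 ?_
    rw [hpre]
    exact ContinuousOn.div (f := fun v : {v : Fin 2 → ℂ // v ≠ 0} => m v.1) (by fun_prop)
      (by fun_prop) fun v hv => hv
  let A : Finset ℂ := B.preimage ψ fun z _ w _ h => by rw [← hφψ z, h, hφψ]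
  have h1 : ∀ y : ↥((B : Set ProjLine)ᶜ), y.1 ≠ b := fun y h => y.2 (h ▸ hb)
  have h2 : ∀ y : ↥((B : Set ProjLine)ᶜ), φ y.1 ∈ (A : Set ℂ)ᶜ := fun y h => by
    have := Finset.mem_preimage.1 h
    rw [hψφ _ (h1 y)] at this
    exact y.2 this
  have h3 : ∀ z : ↥((A : Set ℂ)ᶜ), ψ z.1 ∈ (B : Set ProjLine)ᶜ := fun z h =>
    z.2 (Finset.mem_preimage.2 h)
  exact ⟨A, ⟨⟨⟨fun y => ⟨_, h2 y⟩, fun z => ⟨_, h3 z⟩, fun y => Subtype.ext (hψφ _ (h1 y)),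
    fun z => Subtype.ext (hφψ _)⟩, Continuous.subtype_mk (hφc.comp_continuous
      continuous_subtype_val h1) h2, Continuous.subtype_mk (hψ.comp continuous_subtype_val) h3⟩⟩⟩

end

/-! ### The pencil has no values in `B` outside of the curve -/

section

section bezout
open Polynomial nonZeroDivisors

/-- Relatively prime polynomials over a factorial ring generate an ideal containing a nonzero
constant. -/
lemma exists_bezout_const {R : Type*} [CommRing R] [IsDomain R] [UniqueFactorizationMonoid R]
    {p q : R[X]} (h : IsRelPrime p q) (hq : q ≠ 0) :
    ∃ (c : R) (a b : R[X]), c ≠ 0 ∧ C c = a * p + b * q := by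
  classical
  let K := FractionRing R
  have hinj : Function.Injective (algebraMap R K) := IsFractionRing.injective R K
  let φ := algebraMap R K
  have hmap : Function.Injective (Polynomial.map φ) := Polynomial.map_injective _ hinj
  have hnz : ∀ b ∈ R⁰, b ≠ 0 := fun b hb => nonZeroDivisors.ne_zero hb
  -- By Gauss' lemma the polynomials stay coprime over the fraction field.
  have hcop : IsCoprime (p.map φ) (q.map φ) := by
    rw [← isRelPrime_iff_isCoprime]
    intro d hp' hq'
    have hd : d ≠ 0 := by
      rintro rfl
      exact hq (hmap (by rw [zero_dvd_iff.1 hq', Polynomial.map_zero]))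
    let : StrongNormalizationMonoid R := UniqueFactorizationMonoid.strongNormalizationMonoid
    let : NormalizedGCDMonoid R := UniqueFactorizationMonoid.toNormalizedGCDMonoid R
    let P := (IsLocalization.integerNormalization R⁰ d).primPart
    obtain ⟨c, hc, hcd⟩ := IsLocalization.integerNormalization_spec R⁰ d
    have h1 : P.map φ ∣ d := by
      have h2 : P.map φ ∣ c • d := by
        rw [← hcd]
        exact Polynomial.map_dvd φ (Polynomial.primPart_dvd _)
      rw [Algebra.smul_def] at h2
      refine (IsUnit.dvd_mul_left ?_).1 h2
      rw [Polynomial.algebraMap_apply]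
      exact Polynomial.isUnit_C.2 (IsUnit.mk0 _ (by simpa [K] using hnz c hc))
    have hP : P.IsPrimitive := Polynomial.isPrimitive_primPart _
    have h3 := hP.dvd_of_fraction_map_dvd_fraction_map (K := K) (h1.trans hp')
    have h4 := hP.dvd_of_fraction_map_dvd_fraction_map (K := K) (h1.trans hq')
    exact isUnit_or_eq_zero_of_isUnit_integerNormalization_primPart hd (h h3 h4)
  obtain ⟨a, b, hab⟩ := hcop
  obtain ⟨c, hc, hca⟩ := IsLocalization.integerNormalization_spec R⁰ a
  obtain ⟨d, hd, hdb⟩ := IsLocalization.integerNormalization_spec R⁰ b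
  refine ⟨c * d, C d * IsLocalization.integerNormalization R⁰ a,
    C c * IsLocalization.integerNormalization R⁰ b, mul_ne_zero (hnz c hc) (hnz d hd), hmap ?_⟩
  simp only [Polynomial.map_add, Polynomial.map_mul, Polynomial.map_C, φ]
  rw [hca, hdb, Algebra.smul_def, Algebra.smul_def, Polynomial.algebraMap_apply,
    Polynomial.algebraMap_apply, map_mul, map_mul]
  linear_combination (-(C (algebraMap R K c) * C (algebraMap R K d))) * hab
end bezout

open MvPolynomial in
/-- Near a zero of `f₁` there are zeros of `f₁` at which the coprime polynomial `f₀` does not vanish;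
here `f₁` is not identically zero on the line through the given zero in the direction of the first
coordinate. -/
lemma exists_zero_near_aux {n : ℕ} {f₀ f₁ : MvPolynomial (Fin (n + 1)) ℂ} (h : IsRelPrime f₀ f₁)
    {x : ℂ} {y : Fin n → ℂ} (h1 : eval (Fin.cons x y : Fin (n + 1) → ℂ) f₁ = 0)
    {x' : ℂ} (hx' : eval (Fin.cons x' y : Fin (n + 1) → ℂ) f₁ ≠ 0) {ε : ℝ} (hε : 0 < ε) :
    ∃ x₁ y₁, dist x₁ x < ε ∧ dist y₁ y < ε ∧ eval (Fin.cons x₁ y₁ : Fin (n + 1) → ℂ) f₁ = 0 ∧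
      eval (Fin.cons x₁ y₁ : Fin (n + 1) → ℂ) f₀ ≠ 0 := by
  let G := fun f : MvPolynomial (Fin (n + 1)) ℂ => finSuccEquiv ℂ n f
  have hG : IsRelPrime (G f₀) (G f₁) := by
    intro d hd0 hd1
    have e0 := map_dvd (finSuccEquiv ℂ n).symm hd0
    have e1 := map_dvd (finSuccEquiv ℂ n).symm hd1
    simp only [G, AlgEquiv.symm_apply_apply] at e0 e1
    have := (h e0 e1).map (finSuccEquiv ℂ n)
    simpa using this
  have hf₁ : f₁ ≠ 0 := by rintro rfl; simp at hx'
  have hG1 : G f₁ ≠ 0 := by simpa [G] using hf₁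
  obtain ⟨c, a, b, hc, hcab⟩ := exists_bezout_const hG hG1
  let Q : (Fin n → ℂ) → Polynomial ℂ := fun y => (G f₁).map (eval y)
  have hQ : ∀ t y, (Q y).eval t = eval (Fin.cons t y : Fin (n + 1) → ℂ) f₁ := fun t y =>
    (eval_eq_eval_mv_eval' y t f₁).symm
  have hQc : Continuous fun z : ℂ × (Fin n → ℂ) => (Q z.2).eval z.1 := by
    simp only [hQ]
    exact (MvPolynomial.continuous_eval f₁).comp (continuous_pi fun i => by
      refine Fin.cases ?_ (fun i => ?_) i
      · simp only [Fin.cons_zero]; fun_prop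
      · simp only [Fin.cons_succ]; fun_prop)
  have hQy : Q y ≠ 0 := fun h => hx' (by rw [← hQ, h, Polynomial.eval_zero])
  -- a radius such that `Q y` has no zero on the circle
  obtain ⟨ρ, ⟨hρ0, hρε⟩, hρ⟩ : ∃ ρ ∈ Set.Ioo 0 ε, ∀ z ∈ Metric.sphere x ρ, (Q y).eval z ≠ 0 := by
    have hfin : ((fun z => dist z x) '' ((Q y).roots.toFinset : Set ℂ)).Finite :=
      (Finset.finite_toSet _).image _
    obtain ⟨ρ, hρ, hρ'⟩ := ((Set.Ioo_infinite hε).sdiff hfin).nonempty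
    refine ⟨ρ, hρ, fun z hz h0 => hρ' ⟨z, ?_, hz⟩⟩
    simpa [hQy] using h0
  have hcomp := isCompact_sphere x ρ
  obtain ⟨z₀, hz₀, hmin⟩ := hcomp.exists_isMinOn (NormedSpace.sphere_nonempty.2 hρ0.le)
    (f := fun z => ‖(Q y).eval z‖) (by fun_prop)
  let m := ‖(Q y).eval z₀‖
  have hm : 0 < m := norm_pos_iff.2 (hρ z₀ hz₀)
  have ev1 : ∀ᶠ y' in nhds y, ∀ z ∈ Metric.sphere x ρ, m / 2 < ‖(Q y').eval z‖ := by
    have := hcomp.eventually_forall_of_forall_eventually (x₀ := y)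
      (P := fun y' z => m / 2 < ‖(Q y').eval z‖) (fun z hz => by
        refine ContinuousAt.eventually_lt continuousAt_const
          (f := fun _ => m / 2) (g := fun q : (Fin n → ℂ) × ℂ => ‖(Q q.1).eval q.2‖) ?_ ?_
        · exact (hQc.comp continuous_swap).norm.continuousAt
        · have := hmin hz
          have : m ≤ ‖(Q y).eval z‖ := this
          simp only
          linarith)
    exact this
  have ev2 : ∀ᶠ y' in nhds y, ‖(Q y').eval x‖ < m / 8 := by
    refine ContinuousAt.eventually_lt (f := fun y' => ‖(Q y').eval x‖) ?_ continuousAt_const ?_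
    · exact (hQc.comp (by fun_prop : Continuous fun y' : Fin n → ℂ => (x, y'))).norm.continuousAt
    · simp only [hQ, h1, norm_zero]; linarith
  obtain ⟨δ, hδ, hδ'⟩ := Metric.eventually_nhds_iff.1
    ((ev1.and ev2).and (Metric.ball_mem_nhds y hε))
  obtain ⟨y₁, hy₁, hcy⟩ : ∃ y₁, dist y₁ y < δ ∧ eval y₁ c ≠ 0 := by
    by_contra hcon
    push Not at hcon
    refine hc (funext_set (fun i => Metric.ball (y i) δ) (fun i => ?_) fun z hz => ?_)
    · exact infinite_of_mem_nhds (y i) (Metric.ball_mem_nhds _ hδ)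
    · rw [map_zero]
      exact hcon z ((dist_pi_lt_iff hδ).2 fun i => hz i (Set.mem_univ _))
  obtain ⟨⟨hd1, hd2⟩, hd3⟩ := hδ' hy₁
  have hdiff : Differentiable ℂ fun t => (Q y₁).eval t := (Q y₁).differentiable
  have hsph : ∀ z ∈ Metric.sphere x ρ, m / 4 ≤ ‖(Q y₁).eval z - (Q y₁).eval x‖ := fun z hz => by
    have := norm_sub_norm_le ((Q y₁).eval z) ((Q y₁).eval x)
    have := hd1 z hz
    linarith
  have hfreq : ∃ᶠ z in nhds x, (Q y₁).eval z ≠ (Q y₁).eval x := by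
    intro hev
    have hev : ∀ᶠ z in nhds x, (Q y₁).eval z = (Q y₁).eval x := by simpa using hev
    have hinf : Set.Infinite {z | (Q y₁).eval z = (Polynomial.C ((Q y₁).eval x)).eval z} := by
      refine infinite_of_mem_nhds x ?_
      simp only [Polynomial.eval_C]
      exact hev
    have heq := Polynomial.eq_of_infinite_eval_eq _ _ hinf
    have := hsph z₀ hz₀
    rw [heq] at this
    simp only [Polynomial.eval_C, sub_self, norm_zero] at this
    linarith
  have hball := DiffContOnCl.ball_subset_image_closedBall
    (hdiff.diffContOnCl (s := Metric.ball x ρ)) hρ0 hsph hfreq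
  obtain ⟨x₁, hx₁, hx₁0⟩ := hball (show (0 : ℂ) ∈ _ by
    rw [Metric.mem_ball, dist_comm, dist_zero_right]; linarith)
  refine ⟨x₁, y₁, lt_of_le_of_lt hx₁ hρε, hd3, (hQ _ _).symm.trans hx₁0, fun h0 => hcy ?_⟩
  have := congrArg (fun P => (P.map (eval y₁)).eval x₁) hcab
  simp only [Polynomial.map_add, Polynomial.map_mul, Polynomial.map_C, Polynomial.eval_add,
    Polynomial.eval_mul, Polynomial.eval_C] at this
  have e0 : ((G f₀).map (eval y₁)).eval x₁ = 0 := (eval_eq_eval_mv_eval' y₁ x₁ f₀).symm.trans h0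
  have e1 : ((G f₁).map (eval y₁)).eval x₁ = 0 := hx₁0
  rw [this, e0, e1]
  simp

end

/-! ### Zeros of coprime polynomials, and the values of the pencil -/

section

open MvPolynomial in
/-- Near any zero of `f₁` there are zeros of `f₁` at which the coprime polynomial `f₀` does not
vanish. A shear makes the line through the zero in the direction of the first coordinate
leave the zero set of `f₁`. -/
theorem exists_zero_near {n : ℕ} {f₀ f₁ : MvPolynomial (Fin (n + 1)) ℂ} (h : IsRelPrime f₀ f₁)
    (h1 : f₁ ≠ 0) {v : Fin (n + 1) → ℂ} (hv : eval v f₁ = 0) {U : Set (Fin (n + 1) → ℂ)}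
    (hU : U ∈ nhds v) : ∃ w ∈ U, eval w f₁ = 0 ∧ eval w f₀ ≠ 0 := by
  obtain ⟨w, hw⟩ : ∃ w : Fin (n + 1) → ℂ, eval w (f₁ * (X 0 - C (v 0))) ≠ 0 := by
    by_contra hcon
    push Not at hcon
    have h0 : f₁ * (X 0 - C (v 0)) = 0 := funext fun w => by rw [hcon w, map_zero]
    rcases mul_eq_zero.1 h0 with h0 | h0
    · exact h1 h0
    · have := congrArg (eval (fun _ => v 0 + 1)) h0
      simp at this
  rw [map_mul, map_sub, eval_X, eval_C] at hw
  have hw0 : w 0 - v 0 ≠ 0 := right_ne_zero_of_mul hw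
  have hw1 : eval w f₁ ≠ 0 := left_ne_zero_of_mul hw
  -- After a shear the line through `v` and `w`, on which `f₁` does not vanish identically, is
  -- parallel to the first coordinate axis.
  let a : Fin (n + 1) → ℂ := Fin.cons 0 fun i => (w i.succ - v i.succ) / (w 0 - v 0)
  have ha0 : a 0 = 0 := rfl
  let S (a : Fin (n + 1) → ℂ) : MvPolynomial (Fin (n + 1)) ℂ →ₐ[ℂ] MvPolynomial (Fin (n + 1)) ℂ :=
    aeval fun i => X i + C (a i) * X 0
  have hS : ∀ a z f, eval z (S a f) = eval (z + z 0 • a) f := fun a z f => by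
    have : (eval z).comp (S a : _ →+* _) = eval (z + z 0 • a) := by
      refine ringHom_ext (fun c => by simp [S]) fun i => ?_
      simp [S, mul_comm]
    exact congrFun (congrArg DFunLike.coe this) f
  have hSS : ∀ a : Fin (n + 1) → ℂ, a 0 = 0 → ∀ f, S a (S (-a) f) = f := fun a ha f => by
    refine funext fun z => ?_
    rw [hS, hS]
    congr 2
    ext i
    simp [ha]
  have hrel : IsRelPrime (S a f₀) (S a f₁) := fun d d0 d1 => by
    have hinv : ∀ f, S (-a) (S a f) = f := fun f => by
      have := hSS (-a) (by simp [ha0]) f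
      rwa [neg_neg] at this
    have h2 := h (d := S (-a) d) (by simpa [hinv] using map_dvd (S (-a)) d0)
      (by simpa [hinv] using map_dvd (S (-a)) d1)
    have := h2.map (S a)
    rwa [hSS a ha0] at this
  let T : (Fin (n + 1) → ℂ) → (Fin (n + 1) → ℂ) := fun z => z + z 0 • a
  have hT : Continuous T := by fun_prop
  let v' : Fin (n + 1) → ℂ := v - v 0 • a
  have hTv : T v' = v := by
    ext i
    simp [T, v', ha0]
  have hv' : (Fin.cons (v' 0) (fun i => v' (Fin.succ i)) : Fin (n + 1) → ℂ) = v' :=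
    Fin.cons_self_tail v'
  have hU' : T ⁻¹' U ∈ nhds v' := hT.continuousAt.preimage_mem_nhds (by rwa [hTv])
  obtain ⟨ε, hε, hεU⟩ := Metric.mem_nhds_iff.1 hU'
  obtain ⟨x₁, y₁, hx, hy, e1, e0⟩ := exists_zero_near_aux hrel (x := v' 0)
    (y := fun i => v' (Fin.succ i)) (x' := w 0)
    (by rw [hv', hS]; exact (congrArg (fun z => eval z f₁) hTv).trans hv)
    (by
      rw [hS]
      convert hw1 using 2
      refine congrArg (fun z => eval z) ?_
      ext i
      refine Fin.cases ?_ (fun i => ?_) i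
      · simp [ha0]
      · simp only [Pi.add_apply, Fin.cons_succ, Pi.smul_apply, Fin.cons_zero, smul_eq_mul, v',
          Pi.sub_apply, a]
        field_simp
        ring) hε
  rw [hS] at e1 e0
  refine ⟨_, hεU (a := Fin.cons x₁ y₁) ?_, e1, e0⟩
  rw [Metric.mem_ball, dist_pi_lt_iff hε]
  refine Fin.cases hx fun i => ?_
  rw [Fin.cons_succ]
  exact (dist_le_pi_dist y₁ (fun i => v' (Fin.succ i)) i).trans_lt hy

theorem ProjPlane.continuous_mk' :
    Continuous (fun v : {v : Fin 3 → ℂ // v ≠ 0} => Projectivization.mk ℂ v.1 v.2) :=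
  (continuous_quotient_mk')

/-- The values of the pencil off `closure(F⁻¹(B))` avoid `B`, also at the base points, where the
value is the junk value `[1 : 0]`: if `[1 : 0] ∈ B` then every base point is a limit of points of
the member over `[1 : 0]`. -/
theorem pencilRes_notMem {d : ℕ} {f₀ f₁ : MvPolynomial (Fin 3) ℂ}
    (hf₀ : f₀.IsHomogeneous d) (hf₁ : f₁.IsHomogeneous d) (hcoprime : IsRelPrime f₀ f₁)
    (B : Finset ProjLine) (x : ↥(pencilCurve f₀ f₁ B)ᶜ) : pencilRes f₀ f₁ B x ∉ B := by
  obtain ⟨x, hx⟩ := x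
  intro hmem
  change pencilMap f₀ f₁ x ∈ B at hmem
  refine hx ?_
  by_cases hdom : evalVec f₀ f₁ x ≠ 0
  · exact subset_closure ⟨hdom, hmem⟩
  rw [pencilMap, dif_neg hdom] at hmem
  push Not at hdom
  have hv0 : MvPolynomial.eval x.rep f₀ = 0 := by simpa [evalVec] using congrFun hdom 0
  have hv1 : MvPolynomial.eval x.rep f₁ = 0 := by simpa [evalVec] using congrFun hdom 1
  have hf10 : f₁ ≠ 0 := by
    rintro rfl
    have hu : IsUnit f₀ := hcoprime dvd_rfl (dvd_zero _)
    have := hu.map (MvPolynomial.eval x.rep)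
    rw [hv0] at this
    exact not_isUnit_zero this
  -- Near a base point there are zeros of `f₁` at which `f₀` does not vanish; there the value of the
  -- pencil is `[1 : 0]`.
  refine mem_closure_iff_nhds.2 fun N hN => ?_
  have hN' : (fun v : {v : Fin 3 → ℂ // v ≠ 0} => Projectivization.mk ℂ v.1 v.2) ⁻¹' N ∈
      nhds (⟨x.rep, x.rep_nonzero⟩ : {v : Fin 3 → ℂ // v ≠ 0}) :=
    ProjPlane.continuous_mk'.continuousAt.preimage_mem_nhds (by simpa using hN)
  rw [nhds_subtype_eq_comap, Filter.mem_comap] at hN'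
  obtain ⟨N₁, hN₁, hN₁N⟩ := hN'
  obtain ⟨w, ⟨hwN, hw0⟩, e1, e0⟩ := exists_zero_near hcoprime hf10 hv1
    (Filter.inter_mem hN₁ (isOpen_ne.mem_nhds x.rep_nonzero))
  have hw0 : w ≠ 0 := hw0
  refine ⟨Projectivization.mk ℂ w hw0, hN₁N (show (⟨w, hw0⟩ : {v : Fin 3 → ℂ // v ≠ 0}) ∈ _ from hwN), ?_⟩
  obtain ⟨c, hc⟩ := (Projectivization.mk_eq_mk_iff' ℂ _ _ (Projectivization.rep_nonzero _) hw0).1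
    (Projectivization.mk_rep (Projectivization.mk ℂ w hw0))
  have hc0 : c ≠ 0 := by
    rintro rfl
    exact Projectivization.rep_nonzero _ (hc.symm.trans (zero_smul _ _))
  have hev : ∀ f : MvPolynomial (Fin 3) ℂ, f.IsHomogeneous d →
      MvPolynomial.eval (Projectivization.mk ℂ w hw0).rep f = c ^ d * MvPolynomial.eval w f := by
    intro f hf
    rw [← hc]
    rw [MvPolynomial.eval_eq, MvPolynomial.eval_eq, Finset.mul_sum]
    refine Finset.sum_congr rfl fun s hs => ?_
    have hdeg : ∑ i ∈ s.support, s i = d := by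
      have := hf (MvPolynomial.mem_support_iff.1 hs)
      simpa [Finsupp.weight_apply, Finsupp.sum] using this
    simp only [Pi.smul_apply, smul_eq_mul, mul_pow, Finset.prod_mul_distrib,
      Finset.prod_pow_eq_pow_sum, hdeg]
    ring
  have hvec : evalVec f₀ f₁ (Projectivization.mk ℂ w hw0) = ![c ^ d * MvPolynomial.eval w f₀, 0] := by
    rw [evalVec, hev _ hf₀, hev _ hf₁, e1, mul_zero]
  have hne : c ^ d * MvPolynomial.eval w f₀ ≠ 0 := mul_ne_zero (pow_ne_zero _ hc0) e0
  have hdom' : evalVec f₀ f₁ (Projectivization.mk ℂ w hw0) ≠ 0 := by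
    rw [hvec]
    exact fun h => hne (by simpa using congrFun h 0)
  refine ⟨hdom', ?_⟩
  rw [Set.mem_preimage, pencilMap, dif_pos hdom']
  refine (congrArg (· ∈ B) ?_).mpr hmem
  refine (Projectivization.mk_eq_mk_iff' ℂ _ _ _ _).2 ⟨c ^ d * MvPolynomial.eval w f₀, ?_⟩
  rw [hvec]
  simp

end

/-! ### The homotopy type of the total space -/

section

section
variable {X Y F : Type} [TopologicalSpace X] [TopologicalSpace Y] [TopologicalSpace F]

/-- Homotopies on the slices `X × {j}`, for discrete `J`, form a homotopy on `X × J`. -/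
lemma ContinuousMap.Homotopic.prod_discrete {J : Type} [TopologicalSpace J] [DiscreteTopology J]
    {f g : C(X × J, Y)} (h : ∀ j, (f.comp (⟨fun x => (x, j), by fun_prop⟩ : C(X, X × J))).Homotopic
      (g.comp ⟨fun x => (x, j), by fun_prop⟩)) : f.Homotopic g := by
  have H := fun j => (h j).some
  refine ContinuousMap.Homotopic.of_fun (fun z => H z.1.2 (z.2, z.1.1)) ?_ ?_ ?_
  · have h1 : Continuous fun z : (I × X) × J => H z.2 z.1 :=
      continuous_prod_of_discrete_right.2 fun j => (H j).continuous
    exact h1.comp (by fun_prop : Continuous fun z : (X × J) × I => ((z.2, z.1.1), z.1.2))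
  · exact fun z => (H z.2).apply_zero z.1
  · exact fun z => (H z.2).apply_one z.1

/-- All fibres of a locally trivial map are homeomorphic to its model fibre. -/
lemma LocTriv.nonempty_fiber_homeomorph {p : X → Y} (hp : LocTriv p F) (y : Y) :
    Nonempty (F ≃ₜ ↥(p ⁻¹' {y})) := by
  obtain ⟨V, hV, hy, a, b, ha, hb, h1, h2⟩ := hp y
  refine ⟨⟨⟨fun v => ⟨b (y, v), (h1 y hy v).1⟩, fun x => a x, fun v => (h1 y hy v).2, fun x => ?_⟩,
    ?_, ?_⟩⟩
  · refine Subtype.ext ?_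
    have hx : p x = y := x.2
    have := h2 x (by rwa [hx])
    rwa [hx] at this
  · exact Continuous.subtype_mk (hb.comp_continuous (by fun_prop) fun v => ⟨hy, trivial⟩) _
  · exact ha.comp_continuous continuous_subtype_val fun x => by
      have hx : p x = y := x.2
      exact (congrArg (· ∈ V) hx).mpr hy

end

/-- The projective line without a nonempty finite set of points is homeomorphic to a plane without
finitely many points, and to a domain `Slit A'`. -/
lemma ProjLine.exists_homeomorph (B : Finset ProjLine) (hB : B.Nonempty) :
    ∃ (A : Finset ℂ) (A' : Finset ℝ), Nonempty (↥((B : Set ProjLine)ᶜ) ≃ₜ ↥((A : Set ℂ)ᶜ)) ∧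
      Nonempty (↥((B : Set ProjLine)ᶜ) ≃ₜ Slit A') := by
  obtain ⟨A, ⟨h⟩⟩ := exists_homeomorph_compl B hB
  obtain ⟨A', ⟨h'⟩⟩ := exists_homeomorph_slit A
  exact ⟨A, A', ⟨h⟩, ⟨h.trans h'⟩⟩

section
variable {X Y F W : Type} [TopologicalSpace X] [TopologicalSpace Y] [TopologicalSpace F]

/-- A locally trivial fibration over a punctured plane, whose fiber is homotopy equivalent to a
wedge of circles, is homotopy equivalent to the iterated mapping torus of maps of the wedge that
represent the monodromies; and it has no higher homotopy. -/
theorem LocTriv.exists_homotopyEquiv [LocallyCompactSpace X] {p : X → Y} (hpc : Continuous p)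
    (hp : LocTriv p F) {A : Finset ℂ} (hA : Y ≃ₜ ↥((A : Set ℂ)ᶜ)) {A' : Finset ℝ}
    (hA' : Y ≃ₜ Slit A') {y₀ : Y} (e : F ≃ₜ ↥(p ⁻¹' {y₀})) {r m : ℕ} (γ : Fin r → Path y₀ y₀)
    (θ : FundamentalGroup Y y₀ ≃* FreeGroup (Fin r))
    (hθ : ∀ k, θ (FundamentalGroup.fromPath (X := TopCat.of Y) ⟦γ k⟧) = FreeGroup.of k)
    (ι : C(WedgeGraph (Fin m), F)) (R : C(F, WedgeGraph (Fin m)))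
    (hRι : R.comp ι = ContinuousMap.id _) (hιR : (ι.comp R).Homotopic (ContinuousMap.id _))
    (M : Fin r → C(F, F))
    (hM : ∀ k, ∃ H : F × I → X, Continuous H ∧ (∀ x, H (x, 0) = e x) ∧ (∀ x, H (x, 1) = e (M k x)) ∧
      ∀ x t, p (H (x, t)) = γ k t)
    (G : Fin r → C(WedgeGraph (Fin m), WedgeGraph (Fin m)))
    (hG : ∀ k, (R.comp ((M k).comp ι)).Homotopic (G k)) :
    Nonempty (ContinuousMap.HomotopyEquiv X
      (HoEq (fun z : WedgeGraph (Fin m) × Fin r => z.1) fun z => G z.2 z.1)) ∧ SphNull X := by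
  have hemb : Topology.IsEmbedding fun y : Y => (hA y : ℂ) :=
    Topology.IsEmbedding.subtypeVal.comp hA.isEmbedding
  have := hemb.metrizableSpace
  have := hemb.secondCountableTopology
  let : MetricSpace Y := TopologicalSpace.metrizableSpaceMetric Y
  have : PathConnectedSpace ↥((A : Set ℂ)ᶜ) := isPathConnected_iff_pathConnectedSpace.1
    (Set.Countable.isPathConnected_compl_of_one_lt_rank (by rw [Complex.rank_real_complex]; norm_num)
      A.countable_toSet)
  have : PathConnectedSpace Y := hA.symm.surjective.pathConnectedSpace hA.symm.continuous
  have : LocallyCompactSpace F :=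
    have : IsClosed (p ⁻¹' {y₀}) := isClosed_singleton.preimage hpc
    have := this.locallyCompactSpace
    e.isClosedEmbedding.locallyCompactSpace
  -- the base is a wedge of circles
  obtain ⟨q, q', hq⟩ := Slit.dominated A'
  obtain ⟨E, hE⟩ := WedgeGraph.exists_homotopyEquiv γ θ hθ
    (q.comp (hA' : C(Y, Slit A'))) ((hA'.symm : C(Slit A', Y)).comp q') (by
      have h1 := (ContinuousMap.Homotopic.refl (hA'.symm : C(Slit A', Y))).comp
        (hq.comp (ContinuousMap.Homotopic.refl (hA' : C(Y, Slit A'))))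
      have h2 : (hA'.symm : C(Slit A', Y)).comp
          ((ContinuousMap.id (Slit A')).comp (hA' : C(Y, Slit A'))) = ContinuousMap.id Y := by
        ext y
        exact hA'.symm_apply_apply y
      rw [h2] at h1
      exact h1)
  obtain ⟨c⟩ := hp.nonempty_connection
  let φ : ContinuousMap.HomotopyEquiv F (WedgeGraph (Fin m)) := ⟨R, ι, hιR, by rw [hRι]⟩
  constructor
  -- The total space is equivalent to its pullback to the wedge, a union of mapping tori of maps `N`
  -- homotopic to the monodromies.
  · obtain ⟨N, hN, ⟨hT⟩⟩ := hp.mappingTorus e (WedgeGraph.desc γ) rfl M (fun k => by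
        obtain ⟨H, h1, h2, h3, h4⟩ := hM k
        exact ⟨H, h1, h2, h3, h4⟩)
    obtain ⟨e1⟩ := c.pullback hpc E
    have e1 : ContinuousMap.HomotopyEquiv (PB (WedgeGraph.desc γ) p) X := by
      rw [← hE]; exact e1
    have e2 := e1.symm.trans hT.toHomotopyEquiv
    let fst' : C(F × Fin r, F) := ⟨fun z => z.1, continuous_fst⟩
    let fst'' : C(WedgeGraph (Fin m) × Fin r, WedgeGraph (Fin m)) := ⟨fun z => z.1, continuous_fst⟩
    let N' : C(F × Fin r, F) := ⟨fun z => N z.2 z.1,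
      continuous_prod_of_discrete_right.2 fun k => (N k).continuous⟩
    let G' : C(WedgeGraph (Fin m) × Fin r, WedgeGraph (Fin m)) := ⟨fun z => G z.2 z.1,
      continuous_prod_of_discrete_right.2 fun k => (G k).continuous⟩
    -- Replacing the fibre by the wedge, and the monodromies by the maps `G k`.
    obtain ⟨e3⟩ := HoEq.nonempty_homotopyEquiv (f := fst') (g := N') (f' := fst'') (g' := G') φ
      (φ.prodCongr (.refl (Fin r))) (.refl _) (.prod_discrete fun k => by
        have h1 : ((G k).comp R).Homotopic (R.comp (N k)) := by
          have h2 : (R.comp (((M k).comp ι).comp R)).Homotopic (R.comp (M k)) :=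
            (ContinuousMap.Homotopic.refl R).comp ((ContinuousMap.Homotopic.refl (M k)).comp hιR)
          have h3 := (hG k).comp (ContinuousMap.Homotopic.refl R)
          exact (h3.symm.trans h2).trans ((ContinuousMap.Homotopic.refl R).comp (hN k).symm)
        exact h1.symm)
    exact ⟨e2.trans e3⟩
  · have hY : SphNull Y := (WedgeGraph.sphNull (Fin r)).of_homotopyEquiv E
    refine .of_connection hpc c hY fun y => ?_
    obtain ⟨h⟩ := hp.nonempty_fiber_homeomorph y
    exact (WedgeGraph.sphNull (Fin m)).of_homotopyEquiv (φ.symm.trans h.toHomotopyEquiv)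
end

end

/-! ### The complement of the curve -/

section

open Classical in
/-- Trivializing homeomorphisms give local trivializations in the coordinate form of `LocTriv`,
extended by arbitrary values outside of the trivializing sets. -/
lemma LocTriv.of_homeomorph {X Y F : Type} [TopologicalSpace X] [TopologicalSpace Y]
    [TopologicalSpace F] [Nonempty X] [Nonempty F] {p : X → Y}
    (h : ∀ y, ∃ V : Set Y, IsOpen V ∧ y ∈ V ∧ ∃ h : ↥(p ⁻¹' V) ≃ₜ ↥V × F,
      ∀ z, ((h z).1 : Y) = p z) : LocTriv p F := fun y => by
  obtain ⟨V, hV, hy, h, hh⟩ := h y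
  have hs : ∀ z, p (h.symm z) = z.1 := fun z => by rw [← hh, h.apply_symm_apply]
  refine ⟨V, hV, hy, fun x => if hx : p x ∈ V then (h ⟨x, hx⟩).2 else Classical.arbitrary _,
    fun z => if hz : z.1 ∈ V then (h.symm (⟨z.1, hz⟩, z.2)).1 else Classical.arbitrary _,
    ?_, ?_, fun y hy v => ?_, fun x hx => ?_⟩
  · rw [continuousOn_iff_continuous_domRestrict]
    refine (continuous_snd.comp h.continuous).congr fun x => ?_
    have hx : p x ∈ V := x.2
    simp [Set.domRestrict, hx]
  · rw [continuousOn_iff_continuous_domRestrict]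
    have h1 : Continuous fun z : ↥(V ×ˢ (Set.univ : Set F)) =>
        ((⟨z.1.1, z.2.1⟩ : ↥V), z.1.2) := by fun_prop
    refine (continuous_subtype_val.comp (h.symm.continuous.comp h1)).congr fun x => ?_
    have hx : x.1.1 ∈ V := x.2.1
    simp [Set.domRestrict, hx]
  · have h1 : p (h.symm (⟨y, hy⟩, v)) = y := hs _
    simp only [hy, dif_pos]
    refine ⟨h1, ?_⟩
    have h2 : p (h.symm (⟨y, hy⟩, v)) ∈ V := by rwa [h1]
    rw [dif_pos h2]
    change (h (h.symm (⟨y, hy⟩, v))).2 = v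
    rw [h.apply_symm_apply]
  · simp only [hx, dif_pos]
    have h1 : ((⟨p x, hx⟩ : V), (h ⟨x, hx⟩).2) = h ⟨x, hx⟩ :=
      Prod.ext (Subtype.ext (hh ⟨x, hx⟩).symm) rfl
    rw [h1, h.symm_apply_apply]

instance : LocallyCompactSpace ProjPlane := by
  have : LocallyCompactSpace {v : Fin 3 → ℂ // v ≠ 0} :=
    IsOpen.locallyCompactSpace isOpen_ne
  have hc := ProjPlane.continuous_mk'
  refine IsOpenQuotientMap.locallyCompactSpace (f := fun v : {v : Fin 3 → ℂ // v ≠ 0} =>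
    (Projectivization.mk ℂ v.1 v.2 : ProjPlane)) ⟨fun x => ⟨⟨x.rep, x.rep_nonzero⟩, x.mk_rep⟩, hc, ?_⟩
  intro U hU
  have hq : Topology.IsQuotientMap fun v : {v : Fin 3 → ℂ // v ≠ 0} =>
    (Projectivization.mk ℂ v.1 v.2 : ProjPlane) := isQuotientMap_quotient_mk'
  rw [← hq.isOpen_preimage]
  have h1 : (fun v : {v : Fin 3 → ℂ // v ≠ 0} => (Projectivization.mk ℂ v.1 v.2 : ProjPlane)) ⁻¹'
      ((fun v : {v : Fin 3 → ℂ // v ≠ 0} => (Projectivization.mk ℂ v.1 v.2 : ProjPlane)) '' U) =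
      ⋃ a : ℂˣ, (fun v : {v : Fin 3 → ℂ // v ≠ 0} =>
        (⟨(a : ℂ) • v.1, smul_ne_zero a.ne_zero v.2⟩ : {v : Fin 3 → ℂ // v ≠ 0})) ⁻¹' U := by
    ext v
    simp only [Set.mem_preimage, Set.mem_image, Set.mem_iUnion]
    constructor
    · rintro ⟨u, hu, huv⟩
      obtain ⟨a, ha⟩ := (Projectivization.mk_eq_mk_iff ℂ _ _ u.2 v.2).1 huv
      exact ⟨a, (congrArg (· ∈ U) (Subtype.ext ha)).mpr hu⟩
    · rintro ⟨a, ha⟩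
      exact ⟨_, ha, (Projectivization.mk_eq_mk_iff ℂ _ _ _ _).2 ⟨a, rfl⟩⟩
  rw [h1]
  exact isOpen_iUnion fun a => hU.preimage (by fun_prop)

/-- The complement of the curve is homotopy equivalent to the union of mapping tori of maps `G k` of
the wedge of circles which are homotopic to the monodromies, and it has no essential higher spheres. -/
theorem pencil_exists_homotopyEquiv {d : ℕ} {f₀ f₁ : MvPolynomial (Fin 3) ℂ}
    (hf₀ : f₀.IsHomogeneous d) (hf₁ : f₁.IsHomogeneous d) (hcoprime : IsRelPrime f₀ f₁)
    (B : Finset ProjLine) {r : ℕ} (hB : B.Nonempty) (P : ProjLine) (hP : P ∈ (↑B : Set ProjLine)ᶜ)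
    (hcont : Continuous (pencilRes f₀ f₁ B))
    (hfib : ∀ y : ProjLine, y ∉ B → ∃ V : Set ProjLine, IsOpen V ∧ y ∈ V ∧
      Disjoint V ↑B ∧ ∃ h : ↥(pencilRes f₀ f₁ B ⁻¹' V) ≃ₜ ↥V × pencilFiber f₀ f₁ B P,
        ∀ z : ↥(pencilRes f₀ f₁ B ⁻¹' V), ((h z).1 : ProjLine) = pencilRes f₀ f₁ B ↑z)
    (γ : Fin r → Path (⟨P, hP⟩ : ↥((↑B : Set ProjLine)ᶜ)) ⟨P, hP⟩)
    (θ : FundamentalGroup ↥((↑B : Set ProjLine)ᶜ) ⟨P, hP⟩ ≃* FreeGroup (Fin r))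
    (hθ : ∀ k, θ (FundamentalGroup.fromPath
        (X := TopCat.of ↥((↑B : Set ProjLine)ᶜ)) ⟦γ k⟧) = FreeGroup.of k)
    {m : ℕ} (ι : C(WedgeGraph (Fin m), pencilFiber f₀ f₁ B P))
    (R : C(pencilFiber f₀ f₁ B P, WedgeGraph (Fin m)))
    (hRι : R.comp ι = ContinuousMap.id _)
    (hιR : (ι.comp R).Homotopic (ContinuousMap.id _))
    (M : Fin r → C(pencilFiber f₀ f₁ B P, pencilFiber f₀ f₁ B P))
    (hM : ∀ k, ∃ H : pencilFiber f₀ f₁ B P × unitInterval → ↥(pencilCurve f₀ f₁ B)ᶜ,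
      Continuous H ∧ (∀ x, H (x, 0) = ↑x) ∧ (∀ x, H (x, 1) = ↑(M k x)) ∧
      (∀ x t, pencilRes f₀ f₁ B (H (x, t)) = ↑(γ k t)))
    (G : Fin r → C(WedgeGraph (Fin m), WedgeGraph (Fin m)))
    (hG : ∀ k, (R.comp ((M k).comp ι)).Homotopic (G k)) :
    Nonempty (ContinuousMap.HomotopyEquiv ↥(pencilCurve f₀ f₁ B)ᶜ
      (HoEq (fun z : WedgeGraph (Fin m) × Fin r => z.1) fun z => G z.2 z.1)) ∧
      SphNull ↥(pencilCurve f₀ f₁ B)ᶜ := by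
  have hnot : ∀ x, pencilRes f₀ f₁ B x ∈ (↑B : Set ProjLine)ᶜ :=
    fun x => pencilRes_notMem hf₀ hf₁ hcoprime B x
  let p : ↥(pencilCurve f₀ f₁ B)ᶜ → ↥((↑B : Set ProjLine)ᶜ) := fun x => ⟨pencilRes f₀ f₁ B x, hnot x⟩
  have hp : Continuous p := hcont.subtype_mk _
  have : Nonempty (pencilFiber f₀ f₁ B P) := ⟨ι (WedgeGraph.pt _)⟩
  have : Nonempty ↥(pencilCurve f₀ f₁ B)ᶜ := ⟨(ι (WedgeGraph.pt _)).1⟩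
  have : LocallyCompactSpace ↥(pencilCurve f₀ f₁ B)ᶜ :=
    (isClosed_closure.isOpen_compl : IsOpen (pencilCurve f₀ f₁ B)ᶜ).locallyCompactSpace
  obtain ⟨A, A', ⟨h1⟩, ⟨h2⟩⟩ := ProjLine.exists_homeomorph B hB
  have hloc : LocTriv p (pencilFiber f₀ f₁ B P) := .of_homeomorph fun y => by
    obtain ⟨V, hV, hy, hVB, h, hh⟩ := hfib y y.2
    have hsub : V ⊆ (↑B : Set ProjLine)ᶜ := hVB.subset_compl_right
    let j : ↥V ≃ₜ ↥((↑) ⁻¹' V : Set ↥((↑B : Set ProjLine)ᶜ)) :=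
      { toFun := fun v => ⟨⟨v.1, hsub v.2⟩, v.2⟩
        invFun := fun v => ⟨v.1.1, v.2⟩
        left_inv := fun _ => rfl
        right_inv := fun _ => rfl
        continuous_toFun := by fun_prop
        continuous_invFun := by fun_prop }
    exact ⟨((↑) : ↥((↑B : Set ProjLine)ᶜ) → ProjLine) ⁻¹' V, hV.preimage continuous_subtype_val, hy,
      h.trans (j.prodCongr (.refl _)), fun z => Subtype.ext (hh z)⟩
  let e : pencilFiber f₀ f₁ B P ≃ₜ ↥(p ⁻¹' {⟨P, hP⟩}) :=
    Homeomorph.setCongr (Set.ext fun x => by simp [p, Subtype.ext_iff])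
  exact hloc.exists_homotopyEquiv hp h1 h2 e γ θ hθ ι R hRι hιR M (fun k => by
    obtain ⟨H, k1, k2, k3, k4⟩ := hM k
    exact ⟨H, k1, k2, k3, fun x t => Subtype.ext (k4 x t)⟩) G hG

end

/-! ### Words and loops in a wedge of circles -/

section

namespace WedgeGraph
variable {α β Z : Type} [TopologicalSpace Z]

/-- Two maps out of a wedge of circles are homotopic if their loops are simultaneously conjugate. -/
lemma homotopic_of_loops [TopologicalSpace α] [DiscreteTopology α] {F F' : C(WedgeGraph α, Z)}
    (τ : Path.Homotopic.Quotient (F (pt α)) (F' (pt α)))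
    (h : ∀ a, τ.trans (.mk ((loop a).map F'.continuous)) =
      (Path.Homotopic.Quotient.mk ((loop a).map F.continuous)).trans τ) : F.Homotopic F' := by
  let e := WedgeGraph.homeo α
  let es : C(_, _) := ⟨e.symm, e.symm.continuous⟩
  let e' : C(_, _) := ⟨e, e.continuous⟩
  have h1 : (F.comp es).Homotopic (F'.comp es) :=
    HoEq.homotopic_of_discrete (fun _ => τ) fun a => h a
  have h2 := h1.comp (ContinuousMap.Homotopic.refl e')
  have h3 : ∀ F : C(WedgeGraph α, Z), (F.comp es).comp e' = F := fun F => by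
    ext x
    exact congrArg F (e.symm_apply_apply x)
  rwa [h3, h3] at h2

/-- The class of the loop of a letter. -/
def letterQ (x : α × Bool) : Path.Homotopic.Quotient (pt α) (pt α) :=
  .mk (if x.2 then loop x.1 else (loop x.1).symm)

/-- The class of the loop spelling a word that need not be reduced. -/
def listQ : List (α × Bool) → Path.Homotopic.Quotient (pt α) (pt α)
  | [] => .refl _
  | x :: L => (letterQ x).trans (listQ L)

lemma listQ_append (L L' : List (α × Bool)) : listQ (L ++ L') = (listQ L).trans (listQ L') := by
  induction L with
  | nil => exact (Path.Homotopic.Quotient.refl_trans _).symm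
  | cons x L ih => simp only [listQ, List.cons_append, ih, Path.Homotopic.Quotient.trans_assoc]

lemma letterQ_trans_not (a : α) (b : Bool) :
    (letterQ (a, b)).trans (letterQ (a, !b)) = .refl _ := by
  cases b
  · exact Path.Homotopic.Quotient.symm_trans (.mk (loop a))
  · exact Path.Homotopic.Quotient.trans_symm (.mk (loop a))

/-- Cancelling adjacent inverse letters does not change the class of the loop. -/
lemma listQ_red {L L' : List (α × Bool)} (h : FreeGroup.Red L L') : listQ L = listQ L' := by
  induction h with
  | refl => rfl
  | tail _ h ih =>
    refine ih.trans ?_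
    rcases h with ⟨⟩
    rw [listQ_append, listQ_append, listQ, listQ, ← Path.Homotopic.Quotient.trans_assoc (letterQ _),
      letterQ_trans_not, Path.Homotopic.Quotient.refl_trans]

/-- The map of wedges of circles induced by a map of index sets. -/
def incl (f : α → β) : C(WedgeGraph α, WedgeGraph β) := desc fun a => loop (f a)

lemma listQ_map (f : α → β) (L : List (α × Bool)) :
    (listQ L).map (incl f) = listQ (L.map fun x => (f x.1, x.2)) := by
  induction L with
  | nil => rfl
  | cons x L ih =>
    rw [listQ, Path.Homotopic.Quotient.map_trans', ih, List.map_cons, listQ]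
    obtain ⟨a, b⟩ := x
    cases b <;> rfl

variable [DecidableEq α] [DecidableEq β]

/-- The class of the loop spelling an element of the free group. -/
def wordQ (u : FreeGroup α) : Path.Homotopic.Quotient (pt α) (pt α) := .mk (wordPath u)

/-- The loop `wordPath u` is associated to the left, `listQ` to the right; their classes agree. -/
lemma wordQ_eq (u : FreeGroup α) : wordQ u = listQ u.toWord := by
  have h : ∀ (L : List (α × Bool)) (p : Path (pt α) (pt α)),
      Path.Homotopic.Quotient.mk (L.foldl
        (fun p x => p.trans (if x.2 then WedgeGraph.loop x.1 else (WedgeGraph.loop x.1).symm)) p) =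
      (Path.Homotopic.Quotient.mk p).trans (listQ L) := by
    intro L
    induction L with
    | nil => exact fun p => (Path.Homotopic.Quotient.trans_refl _).symm
    | cons x L ih =>
      intro p
      rw [List.foldl_cons, ih, listQ, ← Path.Homotopic.Quotient.trans_assoc]
      rfl
  exact (h _ _).trans (Path.Homotopic.Quotient.refl_trans _)

lemma wordQ_mk (L : List (α × Bool)) : wordQ (FreeGroup.mk L) = listQ L := by
  rw [wordQ_eq, FreeGroup.toWord_mk]
  exact (listQ_red FreeGroup.reduce.red).symm

/-- The class of the loop of a word is multiplicative, although it is defined by reduced words. -/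
lemma wordQ_mul (u v : FreeGroup α) : wordQ (u * v) = (wordQ u).trans (wordQ v) := by
  rw [wordQ_eq u, wordQ_eq v, ← listQ_append, ← wordQ_mk, ← FreeGroup.mul_mk, FreeGroup.mk_toWord,
    FreeGroup.mk_toWord]

lemma wordQ_of (a : α) : wordQ (FreeGroup.of a) = .mk (loop a) :=
  (wordQ_mk [(a, true)]).trans (Path.Homotopic.Quotient.trans_refl _)

lemma wordQ_inv (u : FreeGroup α) : wordQ u⁻¹ = (wordQ u).symm := by
  refine Path.Homotopic.Quotient.trans_left_cancel (p := wordQ u) ?_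
  rw [← wordQ_mul, mul_inv_cancel, Path.Homotopic.Quotient.trans_symm]
  exact wordQ_mk []

/-- Renaming the letters of a word amounts to applying the map of wedges induced by the renaming. -/
lemma wordQ_map (f : α → β) (u : FreeGroup α) :
    wordQ (FreeGroup.map f u) = (wordQ u).map (incl f) := by
  rw [wordQ_eq u, listQ_map, ← wordQ_mk]
  conv_lhs => rw [← FreeGroup.mk_toWord (x := u)]
  rfl

end WedgeGraph

end

/-! ### Presentation complexes as unions of cones -/

section

/-- The map of the circle given by a loop. -/
def WedgeGraph.circle {Y : Type} [TopologicalSpace Y] {y : Y} (p : Path y y) :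
    C(WedgeGraph Unit, Y) := WedgeGraph.desc fun _ => p

lemma WedgeGraph.circle_loop {Y : Type} [TopologicalSpace Y] {y : Y} (p : Path y y) (t : I) :
    WedgeGraph.circle p (WedgeGraph.loop () t) = p t := rfl

section
variable {α ρ : Type} [TopologicalSpace ρ] [DiscreteTopology ρ]

/-- The attaching map of the 2-cells of a complex with one vertex. -/
def attF (φ : ρ → Path (WedgeGraph.pt α) (WedgeGraph.pt α)) :
    C(WedgeGraph Unit × ρ, WedgeGraph α ⊕ ρ) :=
  ⟨fun z => Sum.inl (WedgeGraph.circle (φ z.2) z.1), continuous_prod_of_discrete_right.2 fun j =>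
    continuous_inl.comp (WedgeGraph.circle (φ j)).continuous⟩

/-- The collapse of the boundary of each 2-cell to the centre. -/
def attG (α ρ : Type) [TopologicalSpace ρ] : C(WedgeGraph Unit × ρ, WedgeGraph α ⊕ ρ) :=
  ⟨fun z => Sum.inr z.2, by fun_prop⟩

/-- The complex with one vertex, 1-cells indexed by `α` and 2-cells indexed by `ρ` attached along
the loops `φ j`, each 2-cell being the cone on its boundary circle. -/
abbrev Att (φ : ρ → Path (WedgeGraph.pt α) (WedgeGraph.pt α)) : Type := HoEq (attF φ) (attG α ρ)

/-- The homotopy type of a complex does not change when the attaching loops move in their free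
homotopy classes. -/
theorem Att.nonempty_homotopyEquiv [Finite α] [Finite ρ]
    {φ φ' : ρ → Path (WedgeGraph.pt α) (WedgeGraph.pt α)}
    (τ : ρ → Path.Homotopic.Quotient (WedgeGraph.pt α) (WedgeGraph.pt α))
    (h : ∀ j, (τ j).trans (.mk (φ' j)) = (Path.Homotopic.Quotient.mk (φ j)).trans (τ j)) :
    Nonempty (ContinuousMap.HomotopyEquiv (Att φ) (Att φ')) := by
  refine HoEq.nonempty_homotopyEquiv (.refl _) (.refl _) ?_ (.refl _)
  refine ContinuousMap.Homotopic.prod_discrete fun j => ?_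
  exact (ContinuousMap.Homotopic.refl (⟨Sum.inl, continuous_inl⟩ : C(WedgeGraph α, WedgeGraph α ⊕ ρ))).comp
    (WedgeGraph.homotopic_of_loops (F := WedgeGraph.circle (φ j)) (F' := WedgeGraph.circle (φ' j))
      (τ j) fun _ => h j)

end

/-- A map out of a cone is a map out of the cylinder that is constant on the top. -/
lemma exists_cone_lift {S D Z : Type} [TopologicalSpace S] [TopologicalSpace D] [TopologicalSpace Z]
    [CompactSpace S] [T2Space D] (q : C(S × I, D)) (hq : Function.Surjective q)
    (hker : ∀ z z' t t', q (z, t) = q (z', t') → t = t' ∧ (t ≠ 1 → z = z')) (v : C(S × I, Z))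
    (hv : ∀ z z', v (z, 1) = v (z', 1)) : ∃ κ : C(D, Z), ∀ z t, κ (q (z, t)) = v (z, t) := by
  have hq' : Topology.IsQuotientMap q := q.continuous.isClosedMap.isQuotientMap q.continuous hq
  have hk : Function.FactorsThrough v q := by
    rintro ⟨z, t⟩ ⟨z', t'⟩ h
    obtain ⟨rfl, h'⟩ := hker _ _ _ _ h
    by_cases ht : t = 1
    · rw [ht]; exact hv _ _
    · rw [h' ht]
  refine ⟨hq'.lift v hk, fun z t => ?_⟩
  exact congrArg (fun f => f (z, t)) (hq'.lift_comp v hk)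

/-- The standard parametrization of the unit circle. -/
def circlePath : Path (1 : ℂ) 1 where
  toFun t := Complex.exp ((2 * Real.pi * t : ℝ) * Complex.I)
  continuous_toFun := by fun_prop
  source' := by simp
  target' := by simp

lemma discAngle_circlePath (t : I) : (discAngle (circlePath t) : ℝ) = Int.fract (t : ℝ) := by
  have h : (discAngle (circlePath t) : ℝ) = Int.fract (Complex.arg
    (Complex.exp ((2 * Real.pi * t : ℝ) * Complex.I)) / (2 * Real.pi)) := rfl
  rw [h, Complex.arg_exp_mul_I, toIocMod, sub_div, zsmul_eq_mul,
    mul_div_cancel_right₀ _ Real.two_pi_pos.ne', mul_div_cancel_left₀ _ Real.two_pi_pos.ne']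
  exact Int.fract_sub_intCast _ _

lemma path_discAngle_circlePath {Y : Type} [TopologicalSpace Y] {y : Y} (p : Path y y) (t : I) :
    p (discAngle (circlePath t)) = p t := by
  rcases t.2.2.lt_or_eq with h | h
  · congr 1
    exact Subtype.ext ((discAngle_circlePath t).trans (Int.fract_eq_self.2 ⟨t.2.1, h⟩))
  · have h1 : t = 1 := Subtype.ext h
    have h2 : discAngle (circlePath t) = 0 :=
      Subtype.ext ((discAngle_circlePath t).trans (by rw [h]; exact Int.fract_one))
    rw [h2, h1, p.source, p.target]

lemma circlePath_discAngle {w : ℂ} (hw : ‖w‖ = 1) : circlePath (discAngle w) = w := by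
  have h : circlePath (discAngle w) = Complex.exp ((2 * Real.pi *
    Int.fract (Complex.arg w / (2 * Real.pi)) : ℝ) * Complex.I) := rfl
  have h1 : 2 * Real.pi * Int.fract (Complex.arg w / (2 * Real.pi)) =
      Complex.arg w - ⌊Complex.arg w / (2 * Real.pi)⌋ * (2 * Real.pi) := by
    rw [Int.fract, mul_sub, mul_div_cancel₀ _ Real.two_pi_pos.ne', mul_comm (2 * Real.pi) (⌊_⌋ : ℝ)]
  rw [h, h1]
  have h2 := Complex.norm_mul_exp_arg_mul_I w
  rw [hw, Complex.ofReal_one, one_mul] at h2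
  push_cast
  rw [sub_mul, Complex.exp_sub, h2, mul_assoc, Complex.exp_int_mul_two_pi_mul_I, div_one]

lemma norm_circlePath (z : WedgeGraph Unit) : ‖WedgeGraph.circle circlePath z‖ = 1 := by
  revert z
  refine WedgeGraph.ind' ?_ fun _ t => ?_
  · exact norm_one
  · exact Complex.norm_exp_ofReal_mul_I _

/-- The unit disc as the cone on the circle. -/
def discCone : C(WedgeGraph Unit × I, Metric.closedBall (0 : ℂ) 1) :=
  have hm : ∀ z : WedgeGraph Unit × I,
      ((1 - z.2 : ℝ) : ℂ) * WedgeGraph.circle circlePath z.1 ∈ Metric.closedBall (0 : ℂ) 1 :=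
    fun z => by
      rw [mem_closedBall_zero_iff, norm_mul, norm_circlePath, Complex.norm_real, mul_one,
        Real.norm_of_nonneg (by linarith [z.2.2.2])]
      linarith [z.2.2.1]
  ⟨fun z => ⟨_, hm z⟩, Continuous.subtype_mk (by fun_prop) hm⟩

lemma discCone_surjective : Function.Surjective discCone := by
  rintro ⟨w, hw⟩
  rw [mem_closedBall_zero_iff] at hw
  by_cases h : w = 0
  · exact ⟨(WedgeGraph.pt _, 1), Subtype.ext (by simp [discCone, h])⟩
  have hn : ‖w‖ ≠ 0 := norm_ne_zero_iff.2 h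
  refine ⟨(WedgeGraph.loop () (discAngle (w / ‖w‖)), ⟨1 - ‖w‖, by linarith, by simp⟩), Subtype.ext ?_⟩
  have h1 : WedgeGraph.circle circlePath (WedgeGraph.loop () (discAngle (w / ‖w‖))) = w / ‖w‖ :=
    circlePath_discAngle (by simp [hn])
  have hn' : (‖w‖ : ℂ) ≠ 0 := by exact_mod_cast hn
  simp only [discCone, ContinuousMap.coe_mk, h1]
  push_cast
  field_simp
  ring

lemma circle_circlePath_injective : Function.Injective (WedgeGraph.circle circlePath) := by
  have h : ∀ z : WedgeGraph Unit,
      WedgeGraph.loop () (discAngle (WedgeGraph.circle circlePath z)) = z := by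
    refine WedgeGraph.ind' ?_ fun _ t => path_discAngle_circlePath _ t
    have := path_discAngle_circlePath (WedgeGraph.loop ()) 0
    rw [circlePath.source] at this
    exact this.trans (WedgeGraph.loop ()).source
  exact fun a b hab => by rw [← h a, ← h b, hab]

/-- The disc is the cone on the circle: `discCone` identifies exactly the points at the top `t = 1`. -/
lemma discCone_ker (z z' : WedgeGraph Unit) (t t' : I) (h : discCone (z, t) = discCone (z', t')) :
    t = t' ∧ (t ≠ 1 → z = z') := by
  have h := congrArg Subtype.val h
  simp only [discCone, ContinuousMap.coe_mk] at h
  have h1 := congrArg norm h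
  rw [norm_mul, norm_mul, norm_circlePath, norm_circlePath, Complex.norm_real, Complex.norm_real,
    Real.norm_of_nonneg (by linarith [t.2.2]), Real.norm_of_nonneg (by linarith [t'.2.2])] at h1
  have h2 : t = t' := Subtype.ext (by linarith)
  refine ⟨h2, fun ht => circle_circlePath_injective ?_⟩
  rw [← h2] at h
  refine mul_left_cancel₀ ?_ h
  exact_mod_cast sub_ne_zero.2 fun h => ht (Subtype.ext h.symm)

/-- The presentation complex, with each 2-cell viewed as the cone on its boundary. -/
theorem PresentationComplex.nonempty_homeomorph {α ρ : Type} [DecidableEq α] [TopologicalSpace ρ]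
    [DiscreteTopology ρ] (rel : ρ → FreeGroup α) :
    Nonempty (PresentationComplex rel ≃ₜ Att fun j => wordPath (rel j)) := by
  set φ := fun j => wordPath (rel j) with hφ
  choose κ hκ using fun j => exists_cone_lift discCone discCone_surjective discCone_ker
    ((HoEq.mkC (attF φ) (attG α ρ)).comp ⟨fun z => ((z.1, j), z.2), by fun_prop⟩)
    (fun z z' => (HoEq.mkC_one (attF φ) (attG α ρ) (z, j)).trans
      (HoEq.mkC_one (attF φ) (attG α ρ) (z', j)).symm)
  have hκ : ∀ j z t, κ j (discCone (z, t)) = HoEq.mkC (attF φ) (attG α ρ) ((z, j), t) := hκ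
  -- `Ψ` and `Θ` are mutually inverse.
  let Ψ : PresentationComplex rel → Att φ := Quot.lift
    (Sum.elim (fun x => HoEq.mkA _ _ (Sum.inl x)) fun z => κ z.1 z.2) (by
      rintro _ _ ⟨j, z, hz, rfl, rfl⟩
      have h1 : z = discCone (WedgeGraph.loop () (discAngle z), 0) := Subtype.ext (by
        simp [discCone, WedgeGraph.circle_loop, circlePath_discAngle hz])
      change κ j z = _
      conv_lhs => rw [h1]
      rw [hκ]
      exact HoEq.mkC_zero _ _ _)
  have hΨ : Continuous Ψ := continuous_quot_lift _ (continuous_sum_dom.2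
    ⟨(HoEq.mkA _ _).continuous.comp continuous_inl, continuous_sigma fun j => (κ j).continuous⟩)
  let cell : ρ → Metric.closedBall (0 : ℂ) 1 → PresentationComplex rel := fun j z =>
    Quot.mk _ (Sum.inr ⟨j, z⟩)
  have hcell : ∀ j, Continuous (cell j) := fun j =>
    continuous_quot_mk.comp (continuous_inr.comp continuous_sigmaMk)
  let Θ : C(Att φ, PresentationComplex rel) := HoEq.desc
    (Sum.elim (fun x => Quot.mk _ (Sum.inl x)) fun j => cell j (discCone (WedgeGraph.pt _, 1)))
    (fun z => cell z.1.2 (discCone (z.1.1, z.2)))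
    (continuous_sum_dom.2 ⟨continuous_quot_mk.comp continuous_inl, continuous_of_discreteTopology⟩)
    (by
      have h1 : Continuous fun z : (WedgeGraph Unit × I) × ρ => cell z.2 (discCone z.1) :=
        continuous_prod_of_discrete_right.2 fun j => (hcell j).comp discCone.continuous
      exact h1.comp (by fun_prop :
        Continuous fun z : (WedgeGraph Unit × ρ) × I => ((z.1.1, z.2), z.1.2)))
    (by
      rintro ⟨z, j⟩
      have h0 : ∀ t, cell j (discCone (WedgeGraph.loop () t, 0)) =
          Quot.mk _ (Sum.inl (wordPath (rel j) t)) := fun t => by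
        have h3 : ((discCone (WedgeGraph.loop () t, 0) : Metric.closedBall (0 : ℂ) 1) : ℂ) =
            circlePath t := by simp [discCone, WedgeGraph.circle_loop]
        have h4 : ‖circlePath t‖ = 1 := Complex.norm_exp_ofReal_mul_I _
        refine (Quot.sound ⟨j, _, by rw [h3, h4], rfl, rfl⟩).trans ?_
        rw [h3, path_discAngle_circlePath]
      revert z
      refine WedgeGraph.ind' ?_ fun _ t => h0 t
      have := h0 0
      rwa [(WedgeGraph.loop ()).source, (wordPath (rel j)).source] at this)
    (by
      rintro ⟨z, j⟩
      refine congrArg (cell j) (Subtype.ext ?_)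
      simp [discCone])
  refine ⟨⟨⟨Ψ, Θ, ?_, ?_⟩, hΨ, Θ.continuous⟩⟩
  · rintro ⟨x | ⟨j, z⟩⟩
    · rfl
    · obtain ⟨⟨z, t⟩, rfl⟩ := discCone_surjective z
      change Θ (κ j _) = _
      rw [hκ]
      rfl
  · refine HoEq.ind ?_ ?_
    · rintro (x | j)
      · rfl
      · change κ j (discCone _) = _
        rw [hκ]
        exact HoEq.mkC_one _ _ _
    · rintro ⟨⟨z, j⟩, t⟩
      exact hκ _ _ _

end

/-! ### The square as the cone on its boundary -/

section

/-- The homeomorphism of `[0,1]` onto its first half. -/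
def firstHalf (t : I) : I := ⟨t / 2, by linarith [t.2.1], by linarith [t.2.2]⟩

/-- The homeomorphism of `[0,1]` onto its second half. -/
def secondHalf (t : I) : I := ⟨(1 + t) / 2, by linarith [t.2.1], by linarith [t.2.2]⟩

lemma trans_firstHalf {Y : Type} [TopologicalSpace Y] {x y z : Y} (p : Path x y) (q : Path y z)
    (t : I) : (p.trans q) (firstHalf t) = p t := by
  rw [Path.trans_apply, dif_pos (by simp only [firstHalf]; linarith [t.2.2])]
  exact congrArg p (Subtype.ext (by simp only [firstHalf]; ring))

lemma trans_secondHalf {Y : Type} [TopologicalSpace Y] {x y z : Y} (p : Path x y) (q : Path y z)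
    (t : I) : (p.trans q) (secondHalf t) = q t := by
  rw [Path.trans_apply]
  split_ifs with h
  · have ht : t = 0 := Subtype.ext (le_antisymm (by simp only [secondHalf] at h; simp; linarith) t.2.1)
    exact (congrArg p (Subtype.ext (by simp [secondHalf, ht]))).trans
      (p.target.trans (q.source.symm.trans (congrArg q ht.symm)))
  · exact congrArg q (Subtype.ext (by simp only [secondHalf]; ring))

lemma exists_half (u : I) : (∃ t, u = firstHalf t) ∨ ∃ t, u = secondHalf t := by
  rcases le_total (u : ℝ) (1 / 2) with h | h
  · exact .inl ⟨⟨2 * u, by linarith [u.2.1], by linarith⟩, Subtype.ext (by simp [firstHalf])⟩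
  · exact .inr ⟨⟨2 * u - 1, by linarith, by linarith [u.2.2]⟩, Subtype.ext (by simp [secondHalf])⟩

/-- A property of the points of `[0,1]` may be checked on the four quarters. -/
lemma quarter_ind {P : I → Prop} (hA : ∀ t, P (firstHalf (firstHalf t)))
    (hB : ∀ t, P (firstHalf (secondHalf t))) (hC : ∀ t, P (secondHalf (firstHalf t)))
    (hD : ∀ t, P (secondHalf (secondHalf t))) (u : I) : P u := by
  rcases exists_half u with ⟨v, rfl⟩ | ⟨v, rfl⟩ <;> rcases exists_half v with ⟨t, rfl⟩ | ⟨t, rfl⟩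
  exacts [hA t, hB t, hC t, hD t]

/-- The boundary of the unit square, traversed counterclockwise from the origin. -/
def squarePath : Path ((0, 0) : I × I) (0, 0) :=
  have A : Path ((0, 0) : I × I) (1, 0) := ⟨⟨fun t => (t, 0), by fun_prop⟩, rfl, rfl⟩
  have B : Path ((1, 0) : I × I) (1, 1) := ⟨⟨fun t => (1, t), by fun_prop⟩, rfl, rfl⟩
  have C : Path ((1, 1) : I × I) (0, 1) := ⟨⟨fun t => (σ t, 1), by fun_prop⟩, by simp, by simp⟩
  have D : Path ((0, 1) : I × I) (0, 0) := ⟨⟨fun t => (0, σ t), by fun_prop⟩, by simp, by simp⟩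
  (A.trans B).trans (C.trans D)

lemma squarePath_A (t : I) : squarePath (firstHalf (firstHalf t)) = (t, 0) := by
  rw [squarePath, trans_firstHalf, trans_firstHalf]; rfl

lemma squarePath_B (t : I) : squarePath (firstHalf (secondHalf t)) = (1, t) := by
  rw [squarePath, trans_firstHalf, trans_secondHalf]; rfl

lemma squarePath_C (t : I) : squarePath (secondHalf (firstHalf t)) = (σ t, 1) := by
  rw [squarePath, trans_secondHalf, trans_firstHalf]; rfl

lemma squarePath_D (t : I) : squarePath (secondHalf (secondHalf t)) = (0, σ t) := by
  rw [squarePath, trans_secondHalf, trans_secondHalf]; rfl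

lemma circle_squarePath_injective : Function.Injective (WedgeGraph.circle squarePath) := by
  classical
  let back : I × I → WedgeGraph Unit := fun z => WedgeGraph.loop () <|
    if z.2 = 0 then firstHalf (firstHalf z.1) else if z.1 = 1 then firstHalf (secondHalf z.2)
    else if z.2 = 1 then secondHalf (firstHalf (σ z.1)) else secondHalf (secondHalf (σ z.2))
  have hloop : ∀ t, back (squarePath t) = WedgeGraph.loop () t := by
    refine quarter_ind (fun t => ?_) (fun t => ?_) (fun t => ?_) fun t => ?_
    · rw [squarePath_A]; simp [back]
    · rw [squarePath_B]
      by_cases h : t = 0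
      · simp only [back, h, if_true]
        exact congrArg _ (Subtype.ext (by simp [firstHalf, secondHalf]))
      · simp [back, h]
    · rw [squarePath_C]
      by_cases h : σ t = 1
      · have h' : t = 0 := by rw [← symm_symm t, h, symm_one]
        simp only [back, h', symm_zero, if_true, one_ne_zero, if_false]
        exact congrArg _ (Subtype.ext (by simp [firstHalf, secondHalf]))
      · simp [back, h]
    · rw [squarePath_D]
      by_cases h : σ t = 0
      · have h' : t = 1 := by rw [← symm_symm t, h, symm_zero]
        have h0 : firstHalf (firstHalf 0) = 0 := Subtype.ext (by simp [firstHalf])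
        have h1 : secondHalf (secondHalf 1) = 1 := Subtype.ext (by simp [secondHalf])
        simp only [back, h', symm_one, if_true, h0, h1]
        exact (WedgeGraph.loop ()).source.trans (WedgeGraph.loop ()).target.symm
      · by_cases h2 : σ t = 1
        · have h' : t = 0 := by rw [← symm_symm t, h2, symm_one]
          simp only [back, h', symm_zero, one_ne_zero, zero_ne_one, if_true, if_false]
          exact congrArg _ (Subtype.ext (by simp [firstHalf, secondHalf]))
        · simp [back, h, h2]
  have h : ∀ z, back (WedgeGraph.circle squarePath z) = z := by
    refine WedgeGraph.ind' ?_ fun _ t => hloop t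
    have := hloop 0
    rwa [squarePath.source, (WedgeGraph.loop ()).source] at this
  exact fun a b hab => by rw [← h a, ← h b, hab]

/-- The distance to the centre of the square in the maximum norm. -/
def squareNorm (z : I × I) : ℝ := max |(z.1 : ℝ) - 1 / 2| |(z.2 : ℝ) - 1 / 2|

lemma squareNorm_circle (z : WedgeGraph Unit) :
    squareNorm (WedgeGraph.circle squarePath z) = 1 / 2 := by
  have hI : ∀ t : I, |(t : ℝ) - 1 / 2| ≤ 1 / 2 := fun t =>
    abs_le.2 ⟨by linarith [t.2.1], by linarith [t.2.2]⟩
  have h0 : |((0 : I) : ℝ) - 1 / 2| = 1 / 2 := by norm_num [abs_of_nonneg]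
  have h1 : |((1 : I) : ℝ) - 1 / 2| = 1 / 2 := by norm_num [abs_of_nonneg]
  revert z
  refine WedgeGraph.ind' ?_ fun _ => ?_
  · change max |((0 : I) : ℝ) - 1 / 2| |((0 : I) : ℝ) - 1 / 2| = 1 / 2
    rw [h0, max_self]
  · refine quarter_ind (fun t => ?_) (fun t => ?_) (fun t => ?_) fun t => ?_ <;>
      rw [WedgeGraph.circle_loop]
    · rw [squarePath_A]; exact max_eq_iff.2 (.inr ⟨h0, (hI _).trans_eq h0.symm⟩)
    · rw [squarePath_B]; exact max_eq_iff.2 (.inl ⟨h1, (hI _).trans_eq h1.symm⟩)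
    · rw [squarePath_C]; exact max_eq_iff.2 (.inr ⟨h1, (hI _).trans_eq h1.symm⟩)
    · rw [squarePath_D]; exact max_eq_iff.2 (.inl ⟨h0, (hI _).trans_eq h0.symm⟩)

lemma exists_squarePath_eq (z : I × I) (hz : squareNorm z = 1 / 2) : ∃ t, squarePath t = z := by
  obtain ⟨x, y⟩ := z
  have h : ∀ t : I, |(t : ℝ) - 1 / 2| = 1 / 2 → t = 0 ∨ t = 1 := fun t ht => by
    rcases abs_eq (by norm_num : (0 : ℝ) ≤ 1 / 2) |>.1 ht with h | h
    · exact .inr (Subtype.ext (by change (t : ℝ) = 1; linarith))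
    · exact .inl (Subtype.ext (by change (t : ℝ) = 0; linarith))
  rcases max_eq_iff.1 hz with ⟨h1, -⟩ | ⟨h1, -⟩ <;> rcases h _ h1 with h2 | h2 <;>
    simp only at h2 <;> subst h2
  · exact ⟨_, (squarePath_D (σ y)).trans (by rw [symm_symm])⟩
  · exact ⟨_, squarePath_B y⟩
  · exact ⟨_, squarePath_A x⟩
  · exact ⟨_, (squarePath_C (σ x)).trans (by rw [symm_symm])⟩

/-- The straight-line path from a point of `[0,1]` to the midpoint. -/
def toMid (x u : I) : I := ⟨(1 - u) * x + u / 2, by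
  have h1 := mul_nonneg (sub_nonneg.2 u.2.2) x.2.1
  linarith [u.2.1], by
  have h1 := mul_nonneg (sub_nonneg.2 u.2.2) (sub_nonneg.2 x.2.2)
  nlinarith [u.2.1]⟩

lemma continuous_toMid : Continuous fun z : I × I => toMid z.1 z.2 :=
  Continuous.subtype_mk (by fun_prop) _

lemma toMid_zero (x : I) : toMid x 0 = x := Subtype.ext (by simp [toMid])

/-- The centre of `[0,1]`. -/
def midPt : I := ⟨1 / 2, by norm_num, by norm_num⟩

lemma toMid_one (x : I) : toMid x 1 = midPt := Subtype.ext (by simp [toMid, midPt])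

/-- The unit square as the cone on its boundary. -/
def squareCone : C(WedgeGraph Unit × I, I × I) :=
  ⟨fun z => (toMid (WedgeGraph.circle squarePath z.1).1 z.2,
      toMid (WedgeGraph.circle squarePath z.1).2 z.2),
    (continuous_toMid.comp (by fun_prop : Continuous fun z : WedgeGraph Unit × I =>
      ((WedgeGraph.circle squarePath z.1).1, z.2))).prodMk
    (continuous_toMid.comp (by fun_prop : Continuous fun z : WedgeGraph Unit × I =>
      ((WedgeGraph.circle squarePath z.1).2, z.2)))⟩

lemma squareCone_zero (t : I) : squareCone (WedgeGraph.loop () t, 0) = squarePath t :=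
  Prod.ext (toMid_zero _) (toMid_zero _)

lemma squareCone_one (z : WedgeGraph Unit) : squareCone (z, 1) = (midPt, midPt) :=
  Prod.ext (toMid_one _) (toMid_one _)

lemma abs_toMid (x u : I) : |(toMid x u : ℝ) - 1 / 2| = (1 - u) * |(x : ℝ) - 1 / 2| := by
  rw [← abs_of_nonneg (sub_nonneg.2 u.2.2 : (0 : ℝ) ≤ 1 - u), ← abs_mul]
  congr 1
  simp only [toMid]
  ring

/-- The square is the cone on its boundary: `squareCone` identifies exactly the points at `t = 1`. -/
lemma squareCone_ker (z z' : WedgeGraph Unit) (t t' : I)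
    (h : squareCone (z, t) = squareCone (z', t')) : t = t' ∧ (t ≠ 1 → z = z') := by
  have hn : ∀ z t, squareNorm (squareCone (z, t)) = (1 - t) * (1 / 2) := fun z t => by
    rw [← squareNorm_circle z, squareNorm, squareNorm, mul_max_of_nonneg _ _ (sub_nonneg.2 t.2.2)]
    exact congrArg₂ max (abs_toMid _ _) (abs_toMid _ _)
  have h1 := congrArg squareNorm h
  rw [hn, hn] at h1
  have h2 : t = t' := Subtype.ext (by linarith)
  refine ⟨h2, fun ht => circle_squarePath_injective ?_⟩
  subst h2
  have ht' : (1 - t : ℝ) ≠ 0 := sub_ne_zero.2 fun h => ht (Subtype.ext h.symm)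
  have hm : ∀ x y : I, toMid x t = toMid y t → x = y := fun x y hxy => by
    have := congrArg Subtype.val hxy
    simp only [toMid] at this
    exact Subtype.ext (mul_left_cancel₀ ht' (by linarith))
  exact Prod.ext (hm _ _ (congrArg Prod.fst h)) (hm _ _ (congrArg Prod.snd h))

lemma squareCone_surjective : Function.Surjective squareCone := by
  intro z
  rcases (le_max_of_le_left (abs_nonneg _) : 0 ≤ squareNorm z).eq_or_lt with h | h
  · refine ⟨(WedgeGraph.pt _, 1), (squareCone_one _).trans ?_⟩
    have h0 : ∀ t : I, |(t : ℝ) - 1 / 2| ≤ 0 → midPt = t := fun t ht =>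
      Subtype.ext (by have := abs_nonpos_iff.1 ht; simp only [midPt]; linarith)
    exact Prod.ext (h0 _ ((le_max_left _ _).trans h.symm.le)) (h0 _ ((le_max_right _ _).trans h.symm.le))
  · set n := squareNorm z with hn
    have h : 0 < n := h
    have h1 : |(z.1 : ℝ) - 1 / 2| ≤ n := le_max_left _ _
    have h2 : |(z.2 : ℝ) - 1 / 2| ≤ n := le_max_right _ _
    have hx : ∀ x : I, |(x : ℝ) - 1 / 2| ≤ 1 / 2 := fun t =>
      abs_le.2 ⟨by linarith [t.2.1], by linarith [t.2.2]⟩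
    have hn1 : n ≤ 1 / 2 := max_le (hx _) (hx _)
    have key : ∀ x : I, |(x : ℝ) - 1 / 2| ≤ n → ∃ x' : I,
        toMid x' ⟨1 - 2 * n, by linarith, by linarith⟩ = x ∧
        |(x' : ℝ) - 1 / 2| = |(x : ℝ) - 1 / 2| / (2 * n) := fun x hx => by
      have h3 : |((x : ℝ) - 1 / 2) / (2 * n)| ≤ 1 / 2 := by
        rw [abs_div, abs_of_pos (by linarith : 0 < 2 * n), div_le_iff₀ (by linarith)]
        linarith
      rw [abs_le] at h3
      refine ⟨⟨1 / 2 + (x - 1 / 2) / (2 * n), by linarith, by linarith⟩, Subtype.ext ?_, ?_⟩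
      · simp only [toMid]
        field_simp
        ring
      · rw [add_sub_cancel_left, abs_div, abs_of_pos (by linarith : 0 < 2 * n)]
    obtain ⟨x, hx1, hx2⟩ := key z.1 h1
    obtain ⟨y, hy1, hy2⟩ := key z.2 h2
    obtain ⟨t, ht⟩ := exists_squarePath_eq (x, y) (by
      simp only [squareNorm, hx2, hy2]
      rw [max_div_div_right (by linarith)]
      change n / _ = _
      field_simp)
    refine ⟨(WedgeGraph.loop () t, ⟨1 - 2 * n, by linarith, by linarith⟩), ?_⟩
    refine Prod.ext ?_ ?_
    · change toMid (squarePath t).1 _ = _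
      rw [ht]; exact hx1
    · change toMid (squarePath t).2 _ = _
      rw [ht]; exact hy1

end

/-! ### The mapping torus as a 2-complex -/

section

section
variable {μ K : Type}

/-- The boundary of the square swept out by the `i`-th circle of the fibre along the `k`-th base
loop: the `i`-th circle, then the base loop, then the image of the circle under the `k`-th
monodromy backwards, then the base loop backwards. -/
def torusLoop (p : K → μ → Path (WedgeGraph.pt μ) (WedgeGraph.pt μ)) (j : K × μ) :
    Path (WedgeGraph.pt (K ⊕ μ)) (WedgeGraph.pt (K ⊕ μ)) :=
  have c : Path (WedgeGraph.pt (K ⊕ μ)) (WedgeGraph.pt (K ⊕ μ)) :=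
    (p j.1 j.2).map (WedgeGraph.incl Sum.inr).continuous
  ((WedgeGraph.loop (Sum.inr j.2)).trans (WedgeGraph.loop (Sum.inl j.1))).trans
    (c.symm.trans (WedgeGraph.loop (Sum.inl j.1)).symm)

variable (p : K → μ → Path (WedgeGraph.pt μ) (WedgeGraph.pt μ))

lemma torusLoop_A (j : K × μ) (t : I) : torusLoop p j (firstHalf (firstHalf t)) =
    WedgeGraph.loop (Sum.inr j.2) t := by
  rw [torusLoop, trans_firstHalf, trans_firstHalf]

lemma torusLoop_B (j : K × μ) (t : I) : torusLoop p j (firstHalf (secondHalf t)) =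
    WedgeGraph.loop (Sum.inl j.1) t := by
  rw [torusLoop, trans_firstHalf, trans_secondHalf]

lemma torusLoop_C (j : K × μ) (t : I) : torusLoop p j (secondHalf (firstHalf t)) =
    WedgeGraph.incl Sum.inr (p j.1 j.2 (σ t)) := by
  rw [torusLoop, trans_secondHalf, trans_firstHalf]; rfl

lemma torusLoop_D (j : K × μ) (t : I) : torusLoop p j (secondHalf (secondHalf t)) =
    WedgeGraph.loop (Sum.inl j.1) (σ t) := by
  rw [torusLoop, trans_secondHalf, trans_secondHalf]; rfl

variable [TopologicalSpace K]

/-- The union, along a common fibre, of the mapping tori of the self-maps of a wedge of circles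
taking the `i`-th circle to the loop `p k i`. -/
abbrev Torus : Type := HoEq (fun z : WedgeGraph μ × K => z.1)
  fun z => WedgeGraph.desc (p z.2) z.1

/-- The square in the mapping torus swept out by a circle of the fibre. -/
def torusSq (j : K × μ) (z : I × I) : Torus p :=
  HoEq.mkC _ _ ((WedgeGraph.loop j.2 z.1, j.1), z.2)

/-- The 1-skeleton of the mapping torus: the circles of the fibre and the base loops through its
wedge point. -/
def torusSkel : C(WedgeGraph (K ⊕ μ), Torus p) :=
  let f : WedgeGraph μ × K → WedgeGraph μ := fun z => z.1
  let g : WedgeGraph μ × K → WedgeGraph μ := fun z => WedgeGraph.desc (p z.2) z.1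
  WedgeGraph.desc (y₀ := HoEq.mkA f g (WedgeGraph.pt μ)) <| Sum.elim
    (fun k => ⟨⟨fun t => HoEq.mkC f g ((WedgeGraph.pt μ, k), t), by fun_prop⟩,
      HoEq.mkC_zero f g (WedgeGraph.pt μ, k), HoEq.mkC_one f g (WedgeGraph.pt μ, k)⟩)
    fun i => (WedgeGraph.loop i).map (HoEq.mkA f g).continuous

lemma torusSkel_incl (x : WedgeGraph μ) :
    torusSkel p (WedgeGraph.incl Sum.inr x) = HoEq.mkA _ _ x := by
  revert x
  exact WedgeGraph.ind' rfl fun _ _ => rfl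

lemma torusSq_squareCone_zero (j : K × μ) (z : WedgeGraph Unit) :
    torusSq p j (squareCone (z, 0)) = torusSkel p (WedgeGraph.circle (torusLoop p j) z) := by
  have h : ∀ t, torusSq p j (squarePath t) = torusSkel p (torusLoop p j t) := by
    refine quarter_ind (fun t => ?_) (fun t => ?_) (fun t => ?_) fun t => ?_
    · rw [squarePath_A, torusLoop_A]
      exact HoEq.mkC_zero _ _ _
    · rw [squarePath_B, torusLoop_B]
      exact congrArg (fun x => HoEq.mkC _ _ ((x, j.1), t)) (WedgeGraph.loop j.2).target
    · rw [squarePath_C, torusLoop_C, torusSkel_incl]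
      exact HoEq.mkC_one _ _ _
    · rw [squarePath_D, torusLoop_D]
      exact congrArg (fun x => HoEq.mkC _ _ ((x, j.1), σ t)) (WedgeGraph.loop j.2).source
  have h' : ∀ t, torusSq p j (squareCone (WedgeGraph.loop () t, 0)) =
      torusSkel p (torusLoop p j t) := fun t => by rw [squareCone_zero, h]
  revert z
  refine WedgeGraph.ind' ?_ fun _ t => h' t
  have := h' 0
  rwa [(WedgeGraph.loop ()).source, (torusLoop p j).source] at this

/-- The mapping torus as a complex with one vertex: its 1-cells are the circles of the fibre and the
base loops, its 2-cells the squares swept out by the circles of the fibre. -/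
theorem nonempty_torus_homeomorph [TopologicalSpace μ] [DiscreteTopology μ] [DiscreteTopology K] :
    Nonempty (Torus p ≃ₜ Att (torusLoop p)) := by
  set F := attF (torusLoop p)
  set Γ := attG (K ⊕ μ) (K × μ)
  have hsq : Continuous fun z : (I × I) × (K × μ) => torusSq p z.2 z.1 :=
    continuous_prod_of_discrete_right.2 fun j => (HoEq.mkC _ _).continuous.comp (by fun_prop)
  let Θ : C(Att (torusLoop p), Torus p) := HoEq.desc
    (Sum.elim (torusSkel p) fun j => torusSq p j (midPt, midPt))
    (fun z => torusSq p z.1.2 (squareCone (z.1.1, z.2)))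
    (continuous_sum_dom.2 ⟨(torusSkel p).continuous, continuous_of_discreteTopology⟩)
    (hsq.comp (by fun_prop : Continuous fun z : (WedgeGraph Unit × (K × μ)) × I =>
      (squareCone (z.1.1, z.2), z.1.2)))
    (fun c => torusSq_squareCone_zero p c.2 c.1)
    fun c => congrArg (torusSq p c.2) (squareCone_one c.1)
  choose κ hκ using fun j => exists_cone_lift squareCone squareCone_surjective squareCone_ker
    ((HoEq.mkC F Γ).comp ⟨fun z => ((z.1, j), z.2), by fun_prop⟩)
    (fun z z' => (HoEq.mkC_one F Γ (z, j)).trans (HoEq.mkC_one F Γ (z', j)).symm)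
  have hκ : ∀ j z t, κ j (squareCone (z, t)) = HoEq.mkC F Γ ((z, j), t) := hκ
  let a : C(WedgeGraph (K ⊕ μ), Att (torusLoop p)) := (HoEq.mkA F Γ).comp ⟨Sum.inl, continuous_inl⟩
  have hκ0 : ∀ j t, κ j (squarePath t) = a (torusLoop p j t) := fun j t => by
    rw [← squareCone_zero, hκ]
    exact HoEq.mkC_zero _ _ _
  have hA : ∀ j s, κ j (s, 0) = a (WedgeGraph.loop (Sum.inr j.2) s) := fun j s => by
    rw [← squarePath_A, hκ0, torusLoop_A]
  have hB : ∀ j t, κ j (1, t) = a (WedgeGraph.loop (Sum.inl j.1) t) := fun j s => by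
    rw [← squarePath_B, hκ0, torusLoop_B]
  have hC : ∀ j s, κ j (s, 1) = a (WedgeGraph.incl Sum.inr (p j.1 j.2 s)) := fun j s => by
    have := hκ0 j (secondHalf (firstHalf (σ s)))
    rwa [squarePath_C, torusLoop_C, symm_symm] at this
  have hD : ∀ j t, κ j (0, t) = a (WedgeGraph.loop (Sum.inl j.1) t) := fun j s => by
    have := hκ0 j (secondHalf (secondHalf (σ s)))
    rwa [squarePath_D, torusLoop_D, symm_symm] at this
  -- the squares, as a path of maps of the base loops, with the fibre coordinate as parameter
  let y₀ : C(K × I, Att (torusLoop p)) := ⟨fun z => a (WedgeGraph.loop (Sum.inl z.1) z.2), by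
    have : Continuous fun z : I × K => a (WedgeGraph.loop (Sum.inl z.2) z.1) :=
      continuous_prod_of_discrete_right.2 fun k => by fun_prop
    exact this.comp continuous_swap⟩
  have hV : ∀ i, Continuous fun z : I × (K × I) => κ (z.2.1, i) (z.1, z.2.2) := fun i => by
    have : Continuous fun z : (I × I) × K => κ (z.2, i) z.1 :=
      continuous_prod_of_discrete_right.2 fun k => by fun_prop
    exact this.comp (by fun_prop : Continuous fun z : I × (K × I) => ((z.1, z.2.2), z.2.1))
  let V : C(WedgeGraph μ, C(K × I, Att (torusLoop p))) := WedgeGraph.desc (y₀ := y₀) fun i =>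
    ⟨ContinuousMap.curry ⟨_, hV i⟩, ContinuousMap.ext fun z => hD (z.1, i) z.2,
      ContinuousMap.ext fun z => hB (z.1, i) z.2⟩
  let Ψ : C(Torus p, Att (torusLoop p)) := HoEq.desc
    (fun x => a (WedgeGraph.incl Sum.inr x)) (fun z => V z.1.1 (z.1.2, z.2)) (by fun_prop)
    (V.continuous_uncurry_of_continuous.comp (by fun_prop : Continuous
      fun z : (WedgeGraph μ × K) × I => (z.1.1, (z.1.2, z.2))))
    (by
      rintro ⟨x, k⟩
      revert x
      refine WedgeGraph.ind' ?_ fun i s => hA (k, i) s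
      exact congrArg a (WedgeGraph.loop (Sum.inl k)).source)
    (by
      rintro ⟨x, k⟩
      revert x
      refine WedgeGraph.ind' ?_ fun i s => hC (k, i) s
      exact congrArg a (WedgeGraph.loop (Sum.inl k)).target)
  have hΨ : ∀ j z, Ψ (torusSq p j z) = κ j z := fun _ _ => rfl
  refine ⟨⟨⟨Ψ, Θ, ?_, ?_⟩, Ψ.continuous, Θ.continuous⟩⟩
  · refine HoEq.ind ?_ ?_
    · exact fun x => torusSkel_incl p x
    · rintro ⟨⟨x, k⟩, t⟩
      revert x
      refine WedgeGraph.ind' rfl fun i s => ?_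
      obtain ⟨⟨z, u⟩, hz⟩ := squareCone_surjective (s, t)
      change Θ (κ (k, i) (s, t)) = _
      rw [← hz, hκ]
      exact congrArg (torusSq p (k, i)) hz
  · refine HoEq.ind ?_ ?_
    · rintro (x | j)
      · revert x
        refine WedgeGraph.ind' rfl ?_
        rintro (k | i) t <;> rfl
      · change Ψ (torusSq p j (midPt, midPt)) = _
        rw [hΨ, ← squareCone_one (WedgeGraph.pt _), hκ]
        exact HoEq.mkC_one _ _ _
    · rintro ⟨⟨z, j⟩, t⟩
      change Ψ (torusSq p j (squareCone (z, t))) = _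
      rw [hΨ, hκ]

end

end

/-! ### The presentation -/

/-- A map from a wedge of circles is determined up to homotopy by the classes of the images of the
circles. -/
lemma WedgeGraph.homotopic_desc {α Z : Type} [TopologicalSpace Z] [TopologicalSpace α]
    [DiscreteTopology α] {y : Z} (F : C(WedgeGraph α, Z)) (hF : F (WedgeGraph.pt α) = y)
    (q : α → Path y y) (h : ∀ a, (((WedgeGraph.loop a).map F.continuous).cast
      hF.symm hF.symm).Homotopic (q a)) : F.Homotopic (WedgeGraph.desc q) := by
  subst hF
  refine WedgeGraph.homotopic_of_loops (Path.Homotopic.Quotient.mk (Path.refl _)) fun a => ?_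
  have h1 : (Path.Homotopic.Quotient.mk (q a)) =
      .mk ((WedgeGraph.loop a).map F.continuous) := (Path.Homotopic.Quotient.eq.2 (h a)).symm
  exact (Path.Homotopic.Quotient.refl_trans _).trans
    (h1.trans (Path.Homotopic.Quotient.trans_refl _).symm)

/-- The boundary `x γ w⁻¹ γ⁻¹` of a 2-cell of the mapping torus is the conjugate by `γ` of the relator
`γ⁻¹ x γ w⁻¹`; the two loops are therefore freely homotopic. -/
lemma torusLoop_conj {r m : ℕ} (w : Fin r → Fin m → FreeGroup (Fin m)) (j : Fin r × Fin m) :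
    (Path.Homotopic.Quotient.mk (WedgeGraph.loop (Sum.inl j.1))).trans
        (.mk (wordPath (pencilRelator w j))) =
      (Path.Homotopic.Quotient.mk (torusLoop (fun k i => wordPath (w k i)) j)).trans
        (.mk (WedgeGraph.loop (Sum.inl j.1))) := by
  have h1 : Path.Homotopic.Quotient.mk (wordPath (pencilRelator w j)) =
      WedgeGraph.wordQ (pencilRelator w j) := rfl
  have h2 : Path.Homotopic.Quotient.mk (torusLoop (fun k i => wordPath (w k i)) j) =
      ((Path.Homotopic.Quotient.mk (WedgeGraph.loop (Sum.inr j.2))).trans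
        (.mk (WedgeGraph.loop (Sum.inl j.1)))).trans
      (((WedgeGraph.wordQ (FreeGroup.map Sum.inr (w j.1 j.2))).symm).trans
        (Path.Homotopic.Quotient.mk (WedgeGraph.loop (Sum.inl j.1))).symm) := by
    rw [WedgeGraph.wordQ_map]
    rfl
  rw [h1, h2, pencilRelator, WedgeGraph.wordQ_mul, WedgeGraph.wordQ_mul, WedgeGraph.wordQ_mul,
    WedgeGraph.wordQ_inv, WedgeGraph.wordQ_inv, WedgeGraph.wordQ_of, WedgeGraph.wordQ_of]
  simp only [Path.Homotopic.Quotient.trans_assoc, Path.Homotopic.Quotient.symm_trans,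
    Path.Homotopic.Quotient.trans_refl]
  exact Path.Homotopic.Quotient.symm_trans_cancel
    (.mk (WedgeGraph.loop (Sum.inl j.1) : Path (WedgeGraph.pt (Fin r ⊕ Fin m)) _)) _

/-- Let `F = [f₀ : f₁] : ℙ²(ℂ) ⇢ ℙ¹(ℂ)` be a primitive pencil (`f₀, f₁`
homogeneous of the same degree `d ≥ 1`, coprime, with all but finitely many members of the
pencil irreducible), and let `B ⊂ ℙ¹(ℂ)` be a finite set of `r + 1` points containing the
atypical values of `F`, so that `F` restricts to a locally trivial fibration
`ℙ² ∖ closure(F⁻¹(B)) → ℙ¹ ∖ B` (hypothesis `hfib`).  Let `P ∉ B` be a basepoint, with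
meridians `γ_1, …, γ_r` freely generating `π₁(ℙ¹ ∖ B, P)` (hypothesis `hmer`); let the
fiber over `P` (a smooth genus-`g` curve with `s ≥ 1` points removed) deformation retract
via `R` onto a wedge `A_P` of `2g + s − 1` circles included by `ι` (hypotheses `hRι`,
`hιR`); for each `k` let `M k` be a monodromy homeomorphism corresponding to `γ_k`
(hypothesis `hM`: the fiber inclusion can be continuously moved over the loop `γ_k`,
starting from the inclusion and ending at the inclusion composed with `M k`); let
`G k : A_P → A_P` be homotopic to `R ∘ M k ∘ ι` (hypothesis `hG`), fixing the wedge point,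
and let `w k i` be the word `(g_k)_*(x_i)`, i.e. the class of the loop `G k ∘ x_i` in the
free group on the circles of `A_P` (hypothesis `hw`).  Then the complement
`ℙ² ∖ closure(F⁻¹(B))` is homotopy equivalent to the 2-dimensional CW complex with one
0-cell of the presentation `⟨γ_k, x_i ∣ γ_k⁻¹ x_i γ_k ((g_k)_*(x_i))⁻¹⟩`, and this complex
is aspherical. -/
theorem pencil_complement_homotopyEquiv_presentationComplex
    (d : ℕ) (hd : 0 < d) (f₀ f₁ : MvPolynomial (Fin 3) ℂ)
    (hf₀ : f₀.IsHomogeneous d) (hf₁ : f₁.IsHomogeneous d)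
    (hcoprime : IsRelPrime f₀ f₁)
    (hprimitive : ∃ S : Finset ProjLine, ∀ (a b : ℂ) (hab : ![a, b] ≠ 0),
      Projectivization.mk ℂ ![a, b] hab ∉ S → Irreducible (a • f₀ + b • f₁))
    (B : Finset ProjLine) (r : ℕ) (hBcard : B.card = r + 1)
    (P : ProjLine) (hP : P ∈ (↑B : Set ProjLine)ᶜ)
    (hcont : Continuous (pencilRes f₀ f₁ B))
    (hfib : ∀ y : ProjLine, y ∉ B → ∃ V : Set ProjLine, IsOpen V ∧ y ∈ V ∧
      Disjoint V ↑B ∧ ∃ h : ↥(pencilRes f₀ f₁ B ⁻¹' V) ≃ₜ ↥V × pencilFiber f₀ f₁ B P,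
        ∀ z : ↥(pencilRes f₀ f₁ B ⁻¹' V), ((h z).1 : ProjLine) = pencilRes f₀ f₁ B ↑z)
    (γ : Fin r → Path (⟨P, hP⟩ : ↥((↑B : Set ProjLine)ᶜ)) ⟨P, hP⟩)
    (hmer : ∃ θ : FundamentalGroup ↥((↑B : Set ProjLine)ᶜ) ⟨P, hP⟩ ≃* FreeGroup (Fin r),
      ∀ k, θ (FundamentalGroup.fromPath
        (X := TopCat.of ↥((↑B : Set ProjLine)ᶜ)) ⟦γ k⟧) = FreeGroup.of k)
    (g s : ℕ) (hs : 1 ≤ s)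
    (ι : C(WedgeGraph (Fin (2 * g + s - 1)), pencilFiber f₀ f₁ B P))
    (R : C(pencilFiber f₀ f₁ B P, WedgeGraph (Fin (2 * g + s - 1))))
    (hRι : R.comp ι = ContinuousMap.id _)
    (hιR : (ι.comp R).Homotopic (ContinuousMap.id _))
    (M : Fin r → C(pencilFiber f₀ f₁ B P, pencilFiber f₀ f₁ B P))
    (hM : ∀ k, ∃ H : pencilFiber f₀ f₁ B P × unitInterval → ↥(pencilCurve f₀ f₁ B)ᶜ,
      Continuous H ∧ (∀ x, H (x, 0) = ↑x) ∧ (∀ x, H (x, 1) = ↑(M k x)) ∧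
      (∀ x t, pencilRes f₀ f₁ B (H (x, t)) = ↑(γ k t)))
    (G : Fin r → C(WedgeGraph (Fin (2 * g + s - 1)), WedgeGraph (Fin (2 * g + s - 1))))
    (hGpt : ∀ k, G k (WedgeGraph.pt _) = WedgeGraph.pt _)
    (hG : ∀ k, (R.comp ((M k).comp ι)).Homotopic (G k))
    (w : Fin r → Fin (2 * g + s - 1) → FreeGroup (Fin (2 * g + s - 1)))
    (hw : ∀ k i, (((WedgeGraph.loop i).map (G k).continuous).cast
      (hGpt k).symm (hGpt k).symm).Homotopic (wordPath (w k i))) :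
    Nonempty (ContinuousMap.HomotopyEquiv ↥(pencilCurve f₀ f₁ B)ᶜ
      (PresentationComplex (pencilRelator w))) ∧
    Aspherical (PresentationComplex (pencilRelator w)) := by
  obtain ⟨θ, hθ⟩ := hmer
  have hB : B.Nonempty := Finset.card_pos.1 (by omega)
  have hG' : ∀ k, (R.comp ((M k).comp ι)).Homotopic
      (WedgeGraph.desc fun i => wordPath (w k i)) := fun k =>
    (hG k).trans (WedgeGraph.homotopic_desc (G k) (hGpt k) _ (hw k))
  obtain ⟨⟨e₁⟩, hX⟩ := pencil_exists_homotopyEquiv hf₀ hf₁ hcoprime B hB P hP hcont hfib γ θ hθ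
    ι R hRι hιR M hM _ hG'
  obtain ⟨e₂⟩ := nonempty_torus_homeomorph fun k i => wordPath (w k i)
  obtain ⟨e₃⟩ := Att.nonempty_homotopyEquiv
    (fun j : Fin r × Fin (2 * g + s - 1) =>
      Path.Homotopic.Quotient.mk (WedgeGraph.loop (Sum.inl j.1))) (torusLoop_conj w)
  obtain ⟨e₄⟩ := PresentationComplex.nonempty_homeomorph (pencilRelator w)
  let e := (e₁.trans e₂.toHomotopyEquiv).trans (e₃.trans e₄.symm.toHomotopyEquiv)
  exact ⟨⟨e⟩, (hX.of_homotopyEquiv e).aspherical⟩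

end
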